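/- Let n ≥ 3, let Γ ⊂ O(n) be a finite subgroup acting freely on ℝⁿ\{0}, and let u : ℝⁿ → [0,∞) be locally Lipschitz, Γ-symmetric, 1-homogeneous, harmonic in the open set {u>0}, with Σ := ∂{u>0}\{0} a smooth embedded hypersurface, u smooth up to Σ from within {u>0} and |∇u| = 1 on Σ. Let A = {x : a < |x| < b} be an open annulus centered at 0 (0 < a < b). Suppose v is a Γ-symmetric nonnegative function, continuous on the closure of {u>0} ∩ A, C² on {u>0} ∩ A and C¹ up to Σ ∩ A, satisfying Δv ≥ 0 in {u>0} ∩ A, ∂_ν v ≤ H v on Σ ∩ A, and v = 0 on {u>0} ∩ ∂A, and that the subsolution is strict in the sense that either Δv(x₀) > 0 at some point x₀ ∈ {u>0} ∩ A with v(x₀) > 0, or ∂_ν v(x₀) < H(x₀)v(x₀) at some point x₀ ∈ Σ ∩ A with v(x₀) > 0. Then ∫_{{u>0} ∩ A} |∇v|² dx < ∫_{Σ ∩ A} H v² dH^{n−1}, and consequently u is not a Γ-symmetric minimizer against Γ-symmetric competitors. -/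

import Mathlib

open MeasureTheory Metric Set
open scoped RealInnerProductSpace

noncomputable section

/-- The Alt–Caffarelli energy `E_Q(u, U) = ∫_U |∇u|² + Q²·1_{u>0}`. -/
def acEnergy {n : ℕ} (Q : ℝ) (u : EuclideanSpace ℝ (Fin n) → ℝ)
    (U : Set (EuclideanSpace ℝ (Fin n))) : ℝ :=
  ∫ x in U, (‖gradient u x‖ ^ 2 + Q ^ 2 * Set.indicator {y | 0 < u y} (fun _ => (1 : ℝ)) x)

/-- `u` is invariant under the group `Γ` of linear isometries. -/
def IsSymmetricUnder {n : ℕ}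
    (Γ : Subgroup (EuclideanSpace ℝ (Fin n) ≃ₗᵢ[ℝ] EuclideanSpace ℝ (Fin n)))
    (u : EuclideanSpace ℝ (Fin n) → ℝ) : Prop :=
  ∀ g ∈ Γ, ∀ x, u (g x) = u x

/-- A nonnegative locally Lipschitz `Γ`-symmetric function `u` is a `Γ`-symmetric minimizer
against `Γ`-symmetric competitors (with `Q = 1`). -/
def IsSymMinimizer {n : ℕ}
    (Γ : Subgroup (EuclideanSpace ℝ (Fin n) ≃ₗᵢ[ℝ] EuclideanSpace ℝ (Fin n)))
    (u : EuclideanSpace ℝ (Fin n) → ℝ) : Prop :=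
  (∀ x, 0 ≤ u x) ∧ LocallyLipschitz u ∧ IsSymmetricUnder Γ u ∧
    ∀ R > 0, ∀ v : EuclideanSpace ℝ (Fin n) → ℝ, (∀ x, 0 ≤ v x) → LocallyLipschitz v →
      IsSymmetricUnder Γ v →
      (∀ x ∉ ball (0 : EuclideanSpace ℝ (Fin n)) R, v x = u x) →
      acEnergy 1 u (ball 0 R) ≤ acEnergy 1 v (ball 0 R)

/-- The Euclidean Laplacian, as the trace of the Hessian. -/
def lap {n : ℕ} (f : EuclideanSpace ℝ (Fin n) → ℝ) (x : EuclideanSpace ℝ (Fin n)) : ℝ :=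
  ∑ i : Fin n, fderiv ℝ (fun y => fderiv ℝ f y (EuclideanSpace.single i 1)) x
    (EuclideanSpace.single i 1)

/-- The free boundary away from the origin: `Σ = ∂{u>0} \ {0}`. -/
def freeBoundary {n : ℕ} (u : EuclideanSpace ℝ (Fin n) → ℝ) :
    Set (EuclideanSpace ℝ (Fin n)) :=
  frontier {x | 0 < u x} \ {0}

/-- The outward unit normal along `Σ`, computed from a smooth extension `Uext` of `u`
across `Σ` (on `Σ` one has `u = 0`, `u > 0` inside, and `|∇Uext| = 1`, so `-∇Uext` is the
unit normal pointing out of `{u > 0}`). -/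
def nuVec {n : ℕ} (Uext : EuclideanSpace ℝ (Fin n) → ℝ) (x : EuclideanSpace ℝ (Fin n)) :
    EuclideanSpace ℝ (Fin n) :=
  -(gradient Uext x)

/-- The outward mean curvature `H = -∂²u/∂ν²` of `Σ`, computed from the smooth extension. -/
def meanCurv {n : ℕ} (Uext : EuclideanSpace ℝ (Fin n) → ℝ) (x : EuclideanSpace ℝ (Fin n)) : ℝ :=
  -(fderiv ℝ (fun y => (⟪gradient Uext y, nuVec Uext x⟫ : ℝ)) x (nuVec Uext x))

/-- One-sided directional derivative `∂_ν f(x)` in the outward normal direction,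
taken from within `{u > 0}` (i.e. from the side `t ≤ 0`). -/
def dNu {n : ℕ} (Uext f : EuclideanSpace ℝ (Fin n) → ℝ) (x : EuclideanSpace ℝ (Fin n)) : ℝ :=
  derivWithin (fun t : ℝ => f (x + t • nuVec Uext x)) (Set.Iic 0) 0


section
open MeasureTheory Metric Set
open scoped RealInnerProductSpace
open Filter Topology
open scoped ENNReal NNReal

theorem vol_eq_hausdorff (m : ℕ) : ∃ c : ℝ≥0∞, c ≠ 0 ∧ c ≤ 1 ∧
    (volume : Measure (EuclideanSpace ℝ (Fin m))) = c • μH[(m : ℝ)] := by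
  have : (μH[(m : ℝ)] : Measure (EuclideanSpace ℝ (Fin m))).IsAddHaarMeasure := by
    simpa using MeasureTheory.isAddHaarMeasure_hausdorffMeasure (E := EuclideanSpace ℝ (Fin m))
  have hc := Measure.isAddLeftInvariant_eq_smul (volume : Measure (EuclideanSpace ℝ (Fin m)))
    (μH[(m : ℝ)])
  have h0 := Measure.addHaarScalarFactor_pos_of_isAddHaarMeasure
    (volume : Measure (EuclideanSpace ℝ (Fin m))) (μH[(m : ℝ)])
  generalize Measure.addHaarScalarFactor
    (volume : Measure (EuclideanSpace ℝ (Fin m))) (μH[(m : ℝ)]) = c at hc h0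
  refine ⟨c, by simpa using h0.ne', ?_, hc⟩
  have key : volume (ball (0 : EuclideanSpace ℝ (Fin m)) 1) ≤
      μH[(m : ℝ)] (ball (0 : EuclideanSpace ℝ (Fin m)) 1) := by
    have h1 := (PiLp.lipschitzWith_ofLp 2 (fun _ : Fin m => ℝ)).hausdorffMeasure_image_le
      (d := m) (by positivity) (ball (0 : EuclideanSpace ℝ (Fin m)) 1)
    have h2 : (μH[(m : ℝ)] : Measure (Fin m → ℝ)) = volume := by
      simpa using hausdorffMeasure_pi_real (ι := Fin m)
    rw [h2] at h1
    have h3 := (PiLp.volume_preserving_toLp (Fin m)).measure_preimage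
      (s := ball (0 : EuclideanSpace ℝ (Fin m)) 1) (by measurability)
    rw [← h3]
    have : (WithLp.ofLp '' ball (0 : EuclideanSpace ℝ (Fin m)) 1) =
      (WithLp.toLp 2 ⁻¹' ball (0 : EuclideanSpace ℝ (Fin m)) 1) := by
      ext x; constructor
      · rintro ⟨y, hy, rfl⟩; simpa using hy
      · intro hx; exact ⟨WithLp.toLp 2 x, hx, rfl⟩
    rw [← this]
    simpa using h1
  rw [hc] at key
  change (c : ℝ≥0∞) * _ ≤ _ at key
  have hp : μH[(m : ℝ)] (ball (0 : EuclideanSpace ℝ (Fin m)) 1) ≠ 0 :=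
    (measure_ball_pos _ _ one_pos).ne'
  have hf : μH[(m : ℝ)] (ball (0 : EuclideanSpace ℝ (Fin m)) 1) ≠ ∞ := measure_ball_lt_top.ne
  by_contra hcc
  push Not at hcc
  have := ENNReal.mul_lt_mul_left hp hf hcc
  rw [one_mul] at this
  exact absurd key (not_le.2 this)

/-- Coordinates `(r, y) ↦ (r, y_1, …, y_k)`. -/
def coordMap (k : ℕ) (r : ℝ) (y : EuclideanSpace ℝ (Fin k)) : EuclideanSpace ℝ (Fin (k + 1)) :=
  WithLp.toLp 2 (Fin.cons r (WithLp.ofLp y) : Fin (k + 1) → ℝ)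

theorem coordMap_zero_coord (k : ℕ) (r : ℝ) (y : EuclideanSpace ℝ (Fin k)) : coordMap k r y 0 = r := rfl

theorem coordMap_norm_sub (k : ℕ) (r r' : ℝ) (y y' : EuclideanSpace ℝ (Fin k)) :
    ‖coordMap k r y - coordMap k r' y'‖ ^ 2 = (r - r') ^ 2 + ‖y - y'‖ ^ 2 := by
  rw [EuclideanSpace.norm_sq_eq, EuclideanSpace.norm_sq_eq, Fin.sum_univ_succ]
  simp [coordMap]

theorem coordMap_continuous (k : ℕ) : Continuous (fun p : ℝ × EuclideanSpace ℝ (Fin k) =>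
    coordMap k p.1 p.2) := by
  unfold coordMap
  refine (PiLp.continuous_toLp 2 _).comp ?_
  refine continuous_pi fun i => ?_
  refine Fin.cases ?_ (fun j => ?_) i
  · simpa using continuous_fst
  · simp only [Fin.cons_succ]; fun_prop

theorem coordMap_isometry (k : ℕ) : Isometry (coordMap k 0) := by
  refine Isometry.of_dist_eq fun y y' => ?_
  have := coordMap_norm_sub k 0 0 y y'
  rw [dist_eq_norm, dist_eq_norm]
  simp only [sub_self, ne_eq, OfNat.ofNat_ne_zero, not_false_eq_true, zero_pow, zero_add] at this
  exact (sq_eq_sq₀ (norm_nonneg _) (norm_nonneg _)).1 this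

theorem coordMap_range (k : ℕ) (z : EuclideanSpace ℝ (Fin (k + 1))) :
    ∃ y, z = coordMap k (z 0) y := by
  refine ⟨WithLp.toLp 2 (fun i => z i.succ), ?_⟩
  ext i
  refine Fin.cases ?_ (fun j => ?_) i
  · rfl
  · simp [coordMap]

theorem coordMap_measurePreserving (k : ℕ) : MeasurePreserving
    (fun p : ℝ × EuclideanSpace ℝ (Fin k) => coordMap k p.1 p.2) volume volume := by
  have h1 := (volume_preserving_piFinSuccAbove (fun _ : Fin (k + 1) => ℝ) 0).symm
  have h2 := PiLp.volume_preserving_toLp (Fin (k + 1))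
  have h3 : MeasurePreserving (Prod.map (id : ℝ → ℝ)
    (WithLp.ofLp : EuclideanSpace ℝ (Fin k) → (Fin k → ℝ))) volume volume :=
    (MeasurePreserving.id _).prod (PiLp.volume_preserving_ofLp (Fin k))
  have := h2.comp (h1.comp h3)
  have e : (fun p : ℝ × EuclideanSpace ℝ (Fin k) => coordMap k p.1 p.2) =
      (WithLp.toLp 2 ∘ (MeasurableEquiv.piFinSuccAbove (fun _ : Fin (k + 1) => ℝ) 0).symm ∘
        Prod.map id WithLp.ofLp) := by
    ext p i
    refine Fin.cases ?_ (fun j => ?_) i <;> simp [coordMap]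
  rw [e]
  exact this

theorem lintegral_coordMap (k : ℕ) (f : EuclideanSpace ℝ (Fin (k + 1)) → ℝ≥0∞) (hf : Measurable f) :
    ∫⁻ z, f z = ∫⁻ y, ∫⁻ r, f (coordMap k r y) := by
  rw [← (coordMap_measurePreserving k).lintegral_comp hf]
  change ∫⁻ (p : ℝ × EuclideanSpace ℝ (Fin k)), f (coordMap k p.1 p.2) ∂(volume.prod volume) = _
  rw [lintegral_prod_symm']
  exact hf.comp (coordMap_continuous k).measurable

/-- Integrals against Hausdorff measure under Lipschitz maps. -/
theorem lip_lintegral {X Y : Type*} [MetricSpace X] [MeasurableSpace X] [BorelSpace X]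
    [MetricSpace Y] [MeasurableSpace Y] [BorelSpace Y]
    {lam : ℝ≥0} {d : ℝ} (hd : 0 ≤ d) (Θ : X → Y) (T : Set X)
    (hΘm : Measurable Θ) (hΘ : LipschitzOnWith lam Θ T)
    (f : Y → ℝ≥0∞) (hf : Measurable f) :
    ∫⁻ x in Θ '' T, f x ∂μH[d] ≤ (lam : ℝ≥0∞) ^ d * ∫⁻ z in T, f (Θ z) ∂μH[d] := by
  have hle : (μH[d]).restrict (Θ '' T) ≤
      ((lam : ℝ≥0∞) ^ d) • Measure.map Θ ((μH[d]).restrict T) := by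
    refine Measure.le_iff.2 fun Q hQ => ?_
    rw [Measure.restrict_apply hQ, Measure.smul_apply, Measure.map_apply hΘm hQ,
      Measure.restrict_apply (hΘm hQ), smul_eq_mul]
    have : Q ∩ Θ '' T = Θ '' (Θ ⁻¹' Q ∩ T) := by
      ext x; constructor
      · rintro ⟨h1, z, hz, rfl⟩; exact ⟨z, ⟨h1, hz⟩, rfl⟩
      · rintro ⟨z, ⟨h1, h2⟩, rfl⟩; exact ⟨h1, z, h2, rfl⟩
    rw [this]
    exact (hΘ.mono inter_subset_right).hausdorffMeasure_image_le hd
  calc _ ≤ ∫⁻ x, f x ∂(((lam : ℝ≥0∞) ^ d) • Measure.map Θ ((μH[d]).restrict T)) :=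
        lintegral_mono' hle le_rfl
    _ = _ := by rw [lintegral_smul_measure, lintegral_map hf hΘm, smul_eq_mul]

end

section
open MeasureTheory Metric Set
open scoped RealInnerProductSpace
open Filter Topology
open scoped ENNReal NNReal

abbrev EE (n : ℕ) := EuclideanSpace ℝ (Fin n)

/-- The assumptions on the cone `u` and its extension. -/
structure ConeData {n : ℕ} (u U : EE n → ℝ) (W : Set (EE n)) : Prop where
  u_nonneg : ∀ x, 0 ≤ u x
  lip : LocallyLipschitz u
  hom : ∀ t : ℝ, 0 < t → ∀ x, u (t • x) = t * u x
  harm : ∀ x ∈ {x | 0 < u x}, lap u x = 0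
  isOpenW : IsOpen W
  subW : closure {x | 0 < u x} \ {0} ⊆ W
  smooth : ContDiffOn ℝ (⊤ : ℕ∞) U W
  eqU : ∀ x ∈ closure {x | 0 < u x}, U x = u x
  grad1 : ∀ x ∈ freeBoundary u, ‖gradient U x‖ = 1
  surf : ∀ x ∈ freeBoundary u, ∃ ε > 0,
      freeBoundary u ∩ ball x ε = {y ∈ ball x ε | U y = 0}

namespace ConeData

variable {n : ℕ} {u U : EE n → ℝ} {W : Set (EE n)}

theorem isOpenPos (h : ConeData u U W) : IsOpen {x | 0 < u x} :=
  isOpen_lt continuous_const h.lip.continuous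

theorem u_zero (h : ConeData u U W) : u 0 = 0 := by
  have := h.hom 2 (by norm_num) 0
  simp at this; linarith

theorem fb_subW (h : ConeData u U W) : freeBoundary u ⊆ W := fun x hx =>
  h.subW ⟨frontier_subset_closure hx.1, hx.2⟩

theorem pos_subW (h : ConeData u U W) : {x | 0 < u x} ⊆ W := fun x hx =>
  h.subW ⟨subset_closure hx, by rintro rfl; simp [h.u_zero] at hx⟩

theorem fb_u (h : ConeData u U W) {x : EE n} (hx : x ∈ freeBoundary u) : u x = 0 := by
  have h1 : x ∉ {x | 0 < u x} := by
    have := hx.1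
    rw [h.isOpenPos.frontier_eq] at this
    exact this.2
  exact le_antisymm (not_lt.1 h1) (h.u_nonneg x)

theorem fb_U (h : ConeData u U W) {x : EE n} (hx : x ∈ freeBoundary u) : U x = 0 := by
  rw [h.eqU x (frontier_subset_closure hx.1), h.fb_u hx]

theorem closure_cases (h : ConeData u U W) {x : EE n} (hx : x ∈ closure {x | 0 < u x})
    (h0 : x ≠ 0) : 0 < u x ∨ x ∈ freeBoundary u := by
  by_cases h1 : 0 < u x
  · exact Or.inl h1
  · refine Or.inr ⟨?_, h0⟩
    rw [h.isOpenPos.frontier_eq]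
    exact ⟨hx, h1⟩

theorem contDiffAt (h : ConeData u U W) {x : EE n} (hx : x ∈ W) : ContDiffAt ℝ (⊤ : ℕ∞) U x :=
  h.smooth.contDiffAt (h.isOpenW.mem_nhds hx)

end ConeData

theorem patch {k : ℕ} {u U : EE (k + 1) → ℝ} {W : Set (EE (k + 1))} (h : ConeData u U W)
    {x0 : EE (k + 1)} (hx0 : x0 ∈ freeBoundary u) (lam : ℝ≥0) (hlam : 1 < lam) :
    ∃ (V : Set (EE (k + 1))) (Ψ Θ : EE (k + 1) → EE (k + 1)),
      IsOpen V ∧ x0 ∈ V ∧ V ⊆ W ∧ (0 : EE (k + 1)) ∉ V ∧ Bornology.IsBounded (Ψ '' V) ∧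
      IsOpen (Ψ '' V) ∧ LipschitzOnWith lam Ψ V ∧ LipschitzOnWith lam Θ (Ψ '' V) ∧
      (∀ x ∈ V, Θ (Ψ x) = x) ∧ (∀ x ∈ V, Ψ x 0 = U x) ∧
      (∀ x ∈ V, 0 < u x ↔ 0 < U x) ∧ (∀ x ∈ V, x ∈ freeBoundary u ↔ U x = 0) ∧
      Measurable Ψ ∧ Measurable Θ := by
  classical
  set e := gradient U x0 with he
  have hen : ‖e‖ = 1 := h.grad1 x0 hx0
  obtain ⟨b, hb⟩ := Orthonormal.exists_orthonormalBasis_extension_of_card_eq (𝕜 := ℝ)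
    (E := EE (k + 1)) (ι := Fin (k + 1)) (by simp) (v := fun _ => e) (s := {0}) (by
      rw [orthonormal_iff_ite]
      rintro ⟨i, hi⟩ ⟨j, hj⟩
      simp only [mem_singleton_iff] at hi hj
      subst hi hj
      simp [Set.domRestrict, hen])
  have hb0 : b 0 = e := hb 0 rfl
  let R : EE (k + 1) ≃ₗᵢ[ℝ] EE (k + 1) := b.repr
  have hR0 : ∀ x, R x 0 = ⟪e, x⟫ := fun x => by
    change b.repr x 0 = _
    rw [b.repr_apply_apply, hb0]
  let e0 : EE (k + 1) := EuclideanSpace.single 0 1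
  let f : EE (k + 1) → EE (k + 1) := fun x => R x + (U x - ⟪e, x⟫) • e0
  have hf0 : ∀ x, f x 0 = U x := fun x => by
    simp only [f, e0, PiLp.add_apply, PiLp.smul_apply, hR0]
    simp
  have hx0W := h.fb_subW hx0
  have hUs : HasStrictFDerivAt U (fderiv ℝ U x0) x0 :=
    (h.contDiffAt hx0W).hasStrictFDerivAt (by simp)
  have hUg : ∀ w, fderiv ℝ U x0 w = ⟪e, w⟫ := fun w => by
    rw [he, gradient, InnerProductSpace.toDual_symm_apply]
  have hfs : HasStrictFDerivAt f (R.toContinuousLinearEquiv : EE (k + 1) →L[ℝ] EE (k + 1)) x0 := by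
    have h1 : HasStrictFDerivAt (fun x => R x) (R.toContinuousLinearEquiv :
      EE (k + 1) →L[ℝ] EE (k + 1)) x0 :=
      (R.toContinuousLinearEquiv : EE (k + 1) →L[ℝ] EE (k + 1)).hasStrictFDerivAt
    have h2 : HasStrictFDerivAt (fun x => (⟪e, x⟫ : ℝ)) (innerSL ℝ e) x0 :=
      (innerSL ℝ e).hasStrictFDerivAt
    have h3 := h1.add ((hUs.sub h2).smul_const e0)
    have h4 : (fderiv ℝ U x0 - innerSL ℝ e).smulRight e0 = 0 := by
      ext w i
      simp [hUg]
    rw [h4, add_zero] at h3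
    exact h3
  have hlam0 : (0 : ℝ≥0) < lam := lt_trans one_pos hlam
  let c : ℝ≥0 := (lam - 1) / lam
  have hlamR : (1 : ℝ) < lam := by exact_mod_cast hlam
  have hcv : (c : ℝ) = ((lam : ℝ) - 1) / lam := by
    simp [c, NNReal.coe_sub hlam.le]
  have hc0 : 0 < c := by
    rw [← NNReal.coe_pos, hcv]; apply div_pos <;> linarith
  obtain ⟨s, hs, hsA⟩ := hfs.approximates_deriv_on_nhds (Or.inr hc0)
  obtain ⟨ε, hε, hsurf⟩ := h.surf x0 hx0
  let Φ := hfs.toOpenPartialHomeomorph f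
  have hΦ : ∀ x, Φ x = f x := fun x => rfl
  have hxs : x0 ∈ Φ.source := hfs.mem_toOpenPartialHomeomorph_source
  let N : Set (EE (k + 1)) := Φ.source ∩ s ∩ W ∩ ball x0 ε ∩ {0}ᶜ
  have hN : N ∈ 𝓝 x0 := by
    refine inter_mem (inter_mem (inter_mem (inter_mem ?_ hs) ?_) ?_) ?_
    · exact Φ.open_source.mem_nhds hxs
    · exact h.isOpenW.mem_nhds hx0W
    · exact ball_mem_nhds _ hε
    · exact isOpen_compl_singleton.mem_nhds hx0.2
  have hpre : Φ.target ∩ Φ.symm ⁻¹' N ∈ 𝓝 (f x0) := by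
    have h1 : Φ.target ∈ 𝓝 (f x0) := Φ.open_target.mem_nhds (Φ.map_source hxs)
    refine inter_mem h1 ?_
    have := Φ.continuousAt_symm (Φ.map_source hxs)
    apply this
    rw [Φ.left_inv hxs]
    exact hN
  obtain ⟨ρ, hρ, hball⟩ := Metric.mem_nhds_iff.1 hpre
  let V : Set (EE (k + 1)) := Φ.symm '' ball (f x0) ρ
  have hVN : V ⊆ N := by
    rintro _ ⟨z, hz, rfl⟩; exact (hball hz).2
  have hfV : f '' V = ball (f x0) ρ := by
    ext z; constructor
    · rintro ⟨_, ⟨z', hz', rfl⟩, rfl⟩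
      rw [← hΦ (Φ.symm z'), Φ.right_inv (hball hz').1]; exact hz'
    · intro hz
      exact ⟨Φ.symm z, ⟨z, hz, rfl⟩, by rw [← hΦ, Φ.right_inv (hball hz).1]⟩
  have hinv : ∀ x ∈ V, Φ.symm (f x) = x := fun x hx => by
    rw [← hΦ, Φ.left_inv (hVN hx).1.1.1.1]
  have hVopen : IsOpen V := by
    have : V = Φ.source ∩ Φ ⁻¹' ball (f x0) ρ := by
      ext x; constructor
      · intro hx
        refine ⟨(hVN hx).1.1.1.1, ?_⟩
        rw [mem_preimage, hΦ, ← hfV]; exact ⟨x, hx, rfl⟩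
      · rintro ⟨h1, h2⟩
        exact ⟨f x, h2, by rw [← hΦ, Φ.left_inv h1]⟩
    rw [this]
    exact Φ.isOpen_inter_preimage isOpen_ball
  have hx0V : x0 ∈ V := ⟨f x0, mem_ball_self hρ, by rw [← hΦ, Φ.left_inv hxs]⟩
  have happ : ∀ x ∈ V, ∀ y ∈ V, ‖f x - f y - R (x - y)‖ ≤ c * ‖x - y‖ := fun x hx y hy =>
    hsA x (hVN hx).1.1.1.2 y (hVN hy).1.1.1.2
  have hfcont : ContinuousOn f V := by
    intro x hx
    exact (Φ.continuousAt (hVN hx).1.1.1.1).continuousWithinAt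
  have hlip1 : LipschitzOnWith lam f V := by
    refine LipschitzOnWith.of_dist_le_mul fun x hx y hy => ?_
    rw [dist_eq_norm, dist_eq_norm]
    have h1 := happ x hx y hy
    have h2 : ‖f x - f y‖ ≤ ‖f x - f y - R (x - y)‖ + ‖R (x - y)‖ := by
      simpa using norm_add_le (f x - f y - R (x - y)) (R (x - y))
    rw [R.norm_map] at h2
    have h3 : (c : ℝ) ≤ lam - 1 := by
      rw [hcv, div_le_iff₀ (by linarith)]; nlinarith
    nlinarith [norm_nonneg (x - y)]
  have hlip2 : ∀ x ∈ V, ∀ y ∈ V, dist x y ≤ lam * dist (f x) (f y) := by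
    intro x hx y hy
    rw [dist_eq_norm, dist_eq_norm]
    have h1 := happ x hx y hy
    have h2 : ‖R (x - y)‖ ≤ ‖f x - f y‖ + ‖f x - f y - R (x - y)‖ := by
      simpa using norm_sub_le (f x - f y) (f x - f y - R (x - y))
    rw [R.norm_map] at h2
    have h4 : (c : ℝ) * lam = lam - 1 := by rw [hcv]; field_simp
    have h5 : (lam : ℝ) * ‖x - y‖ ≤ lam * ‖f x - f y‖ + (lam - 1) * ‖x - y‖ := by
      rw [← h4]
      nlinarith
    linarith
  have hfbV : ∀ x ∈ V, x ∈ freeBoundary u ↔ U x = 0 := by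
    intro x hx
    have hxb := (hVN hx).1.2
    have := Set.ext_iff.1 hsurf x
    simp only [mem_inter_iff, hxb, and_true, mem_ofPred_eq, true_and] at this
    exact this
  have hcl : ∀ x, 0 < u x → U x = u x := fun x hx => h.eqU x (subset_closure hx)
  have hposV : ∀ x ∈ V, 0 < u x ↔ 0 < U x := by
    intro x hx
    refine ⟨fun hu => by rwa [hcl x hu], fun hUx => ?_⟩
    let Vp : Set (EE (k + 1)) := Φ.symm '' (ball (f x0) ρ ∩ {z | 0 < z 0})
    have hVpU : ∀ y ∈ Vp, y ∈ V ∧ 0 < U y := by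
      rintro _ ⟨z, ⟨hz, hz0⟩, rfl⟩
      refine ⟨⟨z, hz, rfl⟩, ?_⟩
      rw [← hf0, ← hΦ, Φ.right_inv (hball hz).1]; exact hz0
    have hVpU' : ∀ y ∈ V, 0 < U y → y ∈ Vp := by
      intro y hy hUy
      refine ⟨f y, ⟨?_, ?_⟩, hinv y hy⟩
      · rw [← hfV]; exact ⟨y, hy, rfl⟩
      · change 0 < f y 0
        rw [hf0]; exact hUy
    have hconv : Convex ℝ (ball (f x0) ρ ∩ {z : EE (k + 1) | 0 < z 0}) := by
      refine (convex_ball _ _).inter ?_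
      exact convex_halfSpace_gt (f := fun z : EE (k + 1) => z 0)
        (EuclideanSpace.proj (𝕜 := ℝ) (0 : Fin (k + 1))).isLinear 0
    have hpc : IsPreconnected Vp := by
      refine hconv.isPreconnected.image _ ?_
      intro z hz
      exact (Φ.continuousAt_symm (hball hz.1).1).continuousWithinAt
    by_contra hux
    have hxcl : x ∈ (closure {x | 0 < u x})ᶜ := by
      intro hcl'
      rcases h.closure_cases hcl' (hVN hx).2 with h1 | h1
      · exact hux h1
      · rw [hfbV x hx] at h1; linarith
    obtain ⟨p, hp⟩ : (V ∩ {x | 0 < u x}).Nonempty :=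
      mem_closure_iff.1 (frontier_subset_closure hx0.1) V hVopen hx0V
    have := hpc {x | 0 < u x} (closure {x | 0 < u x})ᶜ h.isOpenPos isClosed_closure.isOpen_compl
      (by
        intro y hy
        obtain ⟨hy1, hy2⟩ := hVpU y hy
        by_cases hyc : y ∈ closure {x | 0 < u x}
        · rcases h.closure_cases hyc (hVN hy1).2 with h1 | h1
          · exact Or.inl h1
          · rw [hfbV y hy1] at h1; linarith
        · exact Or.inr hyc)
      ⟨p, hVpU' p hp.1 (by rw [hcl p hp.2]; exact hp.2), hp.2⟩
      ⟨x, hVpU' x hx hUx, hxcl⟩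
    obtain ⟨y, _, hy1, hy2⟩ := this
    exact hy2 (subset_closure hy1)
  let Ψ := V.piecewise f 0
  let Θ := (ball (f x0) ρ).piecewise Φ.symm 0
  have hΨV : ∀ x ∈ V, Ψ x = f x := fun x hx => Set.piecewise_eq_of_mem _ _ _ hx
  have hΨim : Ψ '' V = ball (f x0) ρ := by
    rw [← hfV]; exact Set.image_congr hΨV
  have hΘV : ∀ x ∈ V, Θ (f x) = x := fun x hx => by
    have : f x ∈ ball (f x0) ρ := by rw [← hfV]; exact ⟨x, hx, rfl⟩
    exact (Set.piecewise_eq_of_mem _ _ _ this).trans (hinv x hx)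
  refine ⟨V, Ψ, Θ, hVopen, hx0V, fun x hx => (hVN hx).1.1.2, fun h0 => (hVN h0).2 rfl, ?_, ?_, ?_,
    ?_, ?_, ?_, hposV, hfbV, ?_, ?_⟩
  · rw [hΨim]; exact isBounded_ball
  · rw [hΨim]; exact isOpen_ball
  · intro x hx y hy; rw [hΨV x hx, hΨV y hy]; exact hlip1 hx hy
  · refine LipschitzOnWith.of_dist_le_mul ?_
    rintro _ ⟨x, hx, rfl⟩ _ ⟨y, hy, rfl⟩
    rw [hΨV x hx, hΨV y hy, hΘV x hx, hΘV y hy]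
    exact hlip2 x hx y hy
  · intro x hx; rw [hΨV x hx, hΘV x hx]
  · intro x hx; rw [hΨV x hx, hf0]
  · exact hfcont.measurable_piecewise continuousOn_const hVopen.measurableSet
  · refine ContinuousOn.measurable_piecewise ?_ continuousOn_const measurableSet_ball
    intro z hz
    exact (Φ.continuousAt_symm (hball hz).1).continuousWithinAt

end

section
open MeasureTheory Metric Set
open scoped RealInnerProductSpace
open Filter Topology
open scoped ENNReal NNReal

/-- Layer integral. -/
def layerL {n : ℕ} (u : EE n → ℝ) (K : ℝ → EE n → ℝ≥0∞) (s : ℝ) : ℝ≥0∞ :=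
  ENNReal.ofReal s⁻¹ * ∫⁻ x in {x | 0 < u x}, K (u x / s) x

/-- Surface integral. -/
def surfI {k : ℕ} (c : ℝ≥0∞) (u : EE (k + 1) → ℝ) (K : ℝ → EE (k + 1) → ℝ≥0∞) : ℝ≥0∞ :=
  c * ∫⁻ x in freeBoundary u, (∫⁻ θ in Ioi 0, K θ x) ∂μH[(k : ℝ)]

/-- Admissible kernels. -/
structure Adm {n : ℕ} (u : EE n → ℝ) (C : Set (EE n)) (M : ℝ≥0) (B : ℝ)
    (K : ℝ → EE n → ℝ≥0∞) : Prop where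
  meas : Measurable (Function.uncurry K)
  bdd : ∀ θ x, K θ x ≤ M
  supθ : ∀ θ x, K θ x ≠ 0 → θ ≤ B
  supx : ∀ θ x, K θ x ≠ 0 → x ∈ C
  cont : ∀ x ∈ freeBoundary u, ∀ᵐ θ ∂(volume.restrict (Ioi (0 : ℝ))),
    Tendsto (K θ) (𝓝[{x | 0 < u x}] x) (𝓝 (K θ x))

theorem lintegral_scale (s : ℝ) (hs : 0 < s) (g : ℝ → ℝ≥0∞) (hg : Measurable g) :
    ∫⁻ θ, g (s * θ) = ENNReal.ofReal s⁻¹ * ∫⁻ r, g r := by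
  have h1 := Real.smul_map_volume_mul_left hs.ne'
  have h2 : ∫⁻ r, g r = ENNReal.ofReal |s| * ∫⁻ θ, g (s * θ) := by
    conv_lhs => rw [← h1]
    rw [lintegral_smul_measure, lintegral_map hg (measurable_const_mul s), smul_eq_mul]
  rw [h2, ← mul_assoc, ← ENNReal.ofReal_mul (by positivity), abs_of_pos hs,
    inv_mul_cancel₀ hs.ne', ENNReal.ofReal_one, one_mul]

theorem isMeas_fb {n : ℕ} (u : EE n → ℝ) : MeasurableSet (freeBoundary u) :=
  isClosed_frontier.measurableSet.diff (measurableSet_singleton _)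

theorem patch_limit {k : ℕ} {u U : EE (k + 1) → ℝ} {W : Set (EE (k + 1))} (h : ConeData u U W)
    {c : ℝ≥0∞} (hc : (volume : Measure (EE k)) = c • μH[(k : ℝ)])
    {lam : ℝ≥0} {V : Set (EE (k + 1))} {Ψ Θ : EE (k + 1) → EE (k + 1)}
    (hVo : IsOpen V) (hTb : Bornology.IsBounded (Ψ '' V)) (hTo : IsOpen (Ψ '' V))
    (hΨl : LipschitzOnWith lam Ψ V) (hΘl : LipschitzOnWith lam Θ (Ψ '' V))
    (hinv : ∀ x ∈ V, Θ (Ψ x) = x) (hΨ0 : ∀ x ∈ V, Ψ x 0 = U x)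
    (hpos : ∀ x ∈ V, 0 < u x ↔ 0 < U x) (hfb : ∀ x ∈ V, x ∈ freeBoundary u ↔ U x = 0)
    (hΨm : Measurable Ψ) (hΘm : Measurable Θ)
    {C : Set (EE (k + 1))} (hCc : IsCompact C) (hCV : C ⊆ V) {M : ℝ≥0} {B : ℝ}
    {K : ℝ → EE (k + 1) → ℝ≥0∞} (hK : Adm u C M B K) :
    ∃ flat : ℝ → ℝ≥0∞, flat 0 ≠ ∞ ∧ Tendsto flat (𝓝[>] 0) (𝓝 (flat 0)) ∧
      (∀ s > 0, layerL u K s ≤ (lam : ℝ≥0∞) ^ (k + 1) * flat s) ∧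
      (∀ s > 0, flat s ≤ (lam : ℝ≥0∞) ^ (k + 1) * layerL u K s) ∧
      surfI c u K ≤ (lam : ℝ≥0∞) ^ k * flat 0 ∧ flat 0 ≤ (lam : ℝ≥0∞) ^ k * surfI c u K := by
  set T := Ψ '' V with hT
  have hΘV : ∀ z ∈ T, Θ z ∈ V ∧ Ψ (Θ z) = z ∧ z 0 = U (Θ z) := by
    rintro _ ⟨x, hx, rfl⟩
    rw [hinv x hx]; exact ⟨hx, rfl, hΨ0 x hx⟩
  have hΘT : Θ '' T = V := by
    ext x; constructor
    · rintro ⟨z, hz, rfl⟩; exact (hΘV z hz).1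
    · intro hx; exact ⟨Ψ x, ⟨x, hx, rfl⟩, hinv x hx⟩
  let G : ℝ → EE (k + 1) → ℝ≥0∞ := fun θ => T.indicator (fun z => K θ (Θ z))
  have hGm : Measurable (Function.uncurry G) := by
    have : Function.uncurry G = (Prod.snd ⁻¹' T).indicator
        (fun p : ℝ × EE (k + 1) => Function.uncurry K (p.1, Θ p.2)) := by
      ext ⟨θ, z⟩; rfl
    rw [this]
    refine Measurable.indicator ?_ (measurable_snd hTo.measurableSet)
    exact hK.meas.comp (measurable_fst.prodMk (hΘm.comp measurable_snd))
  have hGb : ∀ θ z, G θ z ≤ (Iic B).indicator (fun _ => (M : ℝ≥0∞)) θ := by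
    intro θ z
    by_cases hz : G θ z = 0
    · rw [hz]; exact zero_le
    · have h1 : z ∈ T := by
        by_contra h2; exact hz (indicator_of_notMem h2 _)
      have h2 : G θ z = K θ (Θ z) := indicator_of_mem h1 _
      rw [h2] at hz ⊢
      rw [indicator_of_mem (show θ ∈ Iic B from hK.supθ _ _ hz)]
      exact hK.bdd _ _
  let flat : ℝ → ℝ≥0∞ := fun s => ∫⁻ y, ∫⁻ θ in Ioi 0, G θ (coordMap k (s * θ) y)
  have hcm : ∀ s : ℝ, Measurable (fun p : EE k × ℝ => G p.2 (coordMap k (s * p.2) p.1)) := by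
    intro s
    have h1 : Measurable (fun p : EE k × ℝ => coordMap k (s * p.2) p.1) := by
      have : Continuous (fun p : EE k × ℝ => coordMap k (s * p.2) p.1) :=
        (coordMap_continuous k).comp (by fun_prop : Continuous (fun p : EE k × ℝ => (s * p.2, p.1)))
      exact this.measurable
    exact hGm.comp (measurable_snd.prodMk h1)
  have hBint : ∫⁻ θ in Ioi (0 : ℝ), (Iic B).indicator (fun _ => (M : ℝ≥0∞)) θ ≠ ∞ := by
    rw [lintegral_indicator measurableSet_Iic, lintegral_const, Measure.restrict_apply_univ,
      Measure.restrict_apply measurableSet_Iic]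
    have : Iic B ∩ Ioi 0 = Ioc 0 B := by ext; simp [and_comm]
    rw [this, Real.volume_Ioc]
    exact ENNReal.mul_ne_top ENNReal.coe_ne_top ENNReal.ofReal_ne_top
  set J := ∫⁻ θ in Ioi (0 : ℝ), (Iic B).indicator (fun _ => (M : ℝ≥0∞)) θ with hJ
  obtain ⟨ρ, hρ⟩ := hTb.subset_closedBall 0
  have houter : ∀ s y, ∫⁻ θ in Ioi 0, G θ (coordMap k (s * θ) y) ≤
      (closedBall (0 : EE k) ρ).indicator (fun _ => J) y := by
    intro s y
    by_cases hy : y ∈ closedBall (0 : EE k) ρ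
    · rw [indicator_of_mem hy]
      exact lintegral_mono fun θ => hGb _ _
    · rw [indicator_of_notMem hy]
      have : ∀ θ, G θ (coordMap k (s * θ) y) = 0 := by
        intro θ
        refine indicator_of_notMem (fun hz => hy ?_) _
        have h1 := hρ hz
        rw [mem_closedBall_zero_iff] at h1 ⊢
        have h2 := coordMap_norm_sub k (s * θ) 0 y 0
        have h3 : coordMap k 0 0 = 0 := by
          ext i; refine Fin.cases ?_ (fun j => ?_) i <;> simp [coordMap]
        rw [h3, sub_zero, sub_zero, sub_zero] at h2
        refine le_trans ?_ h1
        refine abs_le_of_sq_le_sq' ?_ (norm_nonneg _) |>.2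
        rw [h2]; nlinarith [sq_nonneg (s * θ)]
      simp [this]
  have hOint : ∫⁻ y, (closedBall (0 : EE k) ρ).indicator (fun _ => J) y ≠ ∞ := by
    rw [lintegral_indicator measurableSet_closedBall, lintegral_const, Measure.restrict_apply_univ]
    exact ENNReal.mul_ne_top hBint measure_closedBall_lt_top.ne
  have hflat0 : flat 0 ≠ ∞ := ne_top_of_le_ne_top hOint (lintegral_mono (houter 0))
  have hlim : Tendsto flat (𝓝[>] 0) (𝓝 (flat 0)) := by
    refine tendsto_lintegral_filter_of_dominated_convergence _
      (Eventually.of_forall fun s => (hcm s).lintegral_prod_right')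
      (Eventually.of_forall fun s => Eventually.of_forall (houter s)) hOint
      (Eventually.of_forall fun y => ?_)
    refine tendsto_lintegral_filter_of_dominated_convergence _
      (Eventually.of_forall fun s => (hcm s).comp (measurable_const.prodMk measurable_id))
      (Eventually.of_forall fun s => Eventually.of_forall fun θ => hGb θ _) hBint ?_
    have hcoord : ∀ θ : ℝ, Tendsto (fun s : ℝ => coordMap k (s * θ) y) (𝓝[>] 0)
        (𝓝 (coordMap k (0 * θ) y)) := by
      intro θ
      have : Continuous (fun s : ℝ => coordMap k (s * θ) y) :=
        (coordMap_continuous k).comp (by fun_prop : Continuous (fun s : ℝ => (s * θ, y)))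
      exact (this.tendsto 0).mono_left nhdsWithin_le_nhds
    by_cases hyT : coordMap k 0 y ∈ T
    · obtain ⟨hx, -, hx0⟩ := hΘV _ hyT
      have hxfb : Θ (coordMap k 0 y) ∈ freeBoundary u := by
        rw [hfb _ hx, ← hx0, coordMap_zero_coord]
      filter_upwards [hK.cont _ hxfb, self_mem_ae_restrict measurableSet_Ioi] with θ hθ hθ0
      have hcθ := hcoord θ
      rw [zero_mul] at hcθ ⊢
      have hG0 : G θ (coordMap k 0 y) = K θ (Θ (coordMap k 0 y)) := indicator_of_mem hyT _
      rw [hG0]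
      have hev : ∀ᶠ s in 𝓝[>] (0 : ℝ), coordMap k (s * θ) y ∈ T :=
        hcθ.eventually (hTo.mem_nhds hyT)
      have hΘc : Tendsto (fun s : ℝ => Θ (coordMap k (s * θ) y)) (𝓝[>] 0)
          (𝓝[{x | 0 < u x}] (Θ (coordMap k 0 y))) := by
        refine tendsto_nhdsWithin_iff.2 ⟨?_, ?_⟩
        · exact ((hΘl.continuousOn.continuousAt (hTo.mem_nhds hyT)).tendsto).comp hcθ
        · filter_upwards [hev, self_mem_nhdsWithin] with s hs hs0
          obtain ⟨h1, -, h2⟩ := hΘV _ hs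
          change 0 < u _
          rw [hpos _ h1, ← h2, coordMap_zero_coord]
          exact mul_pos hs0 hθ0
      refine (hθ.comp hΘc).congr' ?_
      filter_upwards [hev] with s hs
      have hGs : G θ (coordMap k (s * θ) y) = K θ (Θ (coordMap k (s * θ) y)) :=
        indicator_of_mem hs _
      exact hGs.symm
    · refine Eventually.of_forall fun θ => ?_
      have hcθ := hcoord θ
      rw [zero_mul] at hcθ ⊢
      have hG0 : G θ (coordMap k 0 y) = 0 := indicator_of_notMem hyT _
      rw [hG0]
      have hcl : IsClosed (Ψ '' C) := (hCc.image_of_continuousOn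
        (hΨl.continuousOn.mono hCV)).isClosed
      have hn : coordMap k 0 y ∉ Ψ '' C := fun hh => hyT (image_mono hCV hh)
      refine tendsto_const_nhds.congr' ?_
      filter_upwards [hcθ.eventually (hcl.isOpen_compl.mem_nhds hn)] with s hs
      by_contra hne
      have h1 : coordMap k (s * θ) y ∈ T := by
        by_contra h2; exact hne (indicator_of_notMem h2 _).symm
      have h2 : G θ (coordMap k (s * θ) y) = K θ (Θ (coordMap k (s * θ) y)) := indicator_of_mem h1 _
      rw [h2] at hne
      exact hs ⟨_, hK.supx _ _ (Ne.symm hne), (hΘV _ h1).2.1⟩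
  -- volume comparison
  obtain ⟨c1, -, -, hc1⟩ := vol_eq_hausdorff (k + 1)
  have hvol : ∀ s > 0, ∃ A : ℝ≥0∞, flat s = ENNReal.ofReal s⁻¹ * A ∧
      ∫⁻ x in {x | 0 < u x}, K (u x / s) x ≤ (lam : ℝ≥0∞) ^ (k + 1) * A ∧
      A ≤ (lam : ℝ≥0∞) ^ (k + 1) * ∫⁻ x in {x | 0 < u x}, K (u x / s) x := by
    intro s hs
    let f : EE (k + 1) → ℝ≥0∞ := {x | 0 < u x}.indicator (fun x => K (u x / s) x)
    have hucont : Continuous u := h.lip.continuous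
    have hf : Measurable f := by
      refine Measurable.indicator ?_ h.isOpenPos.measurableSet
      exact hK.meas.comp ((hucont.measurable.div_const s).prodMk measurable_id)
    have hfint : ∫⁻ x in {x | 0 < u x}, K (u x / s) x = ∫⁻ x in V, f x := by
      rw [← lintegral_indicator h.isOpenPos.measurableSet, ← lintegral_indicator hVo.measurableSet]
      congr 1
      ext x
      by_cases hx : x ∈ V
      · rw [indicator_of_mem hx]
      · rw [indicator_of_notMem hx]
        by_contra hne
        have h1 : x ∈ {x | 0 < u x} := by
          by_contra h2; exact hne (indicator_of_notMem h2 _)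
        rw [indicator_of_mem h1] at hne
        exact hx (hCV (hK.supx _ _ hne))
    have hfΘ : ∀ z ∈ T, f (Θ z) = (Ioi (0 : ℝ)).indicator (fun r => G (r / s) z) (z 0) := by
      intro z hz
      obtain ⟨h1, -, h3⟩ := hΘV z hz
      by_cases hp : 0 < u (Θ z)
      · have hp' := (hpos _ h1).1 hp
        have : f (Θ z) = K (u (Θ z) / s) (Θ z) := indicator_of_mem (s := {x | 0 < u x}) hp _
        rw [this, indicator_of_mem (show z 0 ∈ Ioi 0 by rw [h3]; exact hp')]
        have h4 : G (z 0 / s) z = K (z 0 / s) (Θ z) := indicator_of_mem hz _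
        rw [h4, h3, h.eqU _ (subset_closure hp)]
      · have : f (Θ z) = 0 := indicator_of_notMem (s := {x | 0 < u x}) hp _
        rw [this, indicator_of_notMem]
        rw [mem_Ioi, h3, ← hpos _ h1]; exact hp
    refine ⟨∫⁻ z in T, f (Θ z), ?_, ?_, ?_⟩
    · have h1 : ∫⁻ z in T, f (Θ z) =
          ∫⁻ z, (Ioi (0 : ℝ)).indicator (fun r => G (r / s) z) (z 0) := by
        rw [← lintegral_indicator hTo.measurableSet]
        congr 1; ext z
        by_cases hz : z ∈ T
        · rw [indicator_of_mem hz, hfΘ z hz]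
        · rw [indicator_of_notMem hz]
          by_cases hz0 : z 0 ∈ Ioi (0 : ℝ)
          · rw [indicator_of_mem hz0]; exact (indicator_of_notMem hz _).symm
          · rw [indicator_of_notMem hz0]
      have hm : Measurable (fun z : EE (k + 1) =>
          (Ioi (0 : ℝ)).indicator (fun r => G (r / s) z) (z 0)) := by
        have h0 : Measurable (fun z : EE (k + 1) => z 0) :=
          (EuclideanSpace.proj (𝕜 := ℝ) (0 : Fin (k + 1))).continuous.measurable
        have : (fun z : EE (k + 1) => (Ioi (0 : ℝ)).indicator (fun r => G (r / s) z) (z 0)) =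
          ((fun z : EE (k + 1) => z 0) ⁻¹' (Ioi 0)).indicator (fun z => G (z 0 / s) z) := by
          ext z; rfl
        rw [this]
        refine Measurable.indicator ?_ (h0 measurableSet_Ioi)
        exact hGm.comp ((h0.div_const s).prodMk measurable_id)
      rw [h1, lintegral_coordMap k _ hm, ← lintegral_const_mul']
      · refine lintegral_congr fun y => ?_
        have h5 := lintegral_scale s hs (fun r => (Ioi (0 : ℝ)).indicator
          (fun r' => G (r' / s) (coordMap k r y)) (coordMap k r y 0)) (hm.comp (by
            have : Continuous (fun r : ℝ => coordMap k r y) :=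
              (coordMap_continuous k).comp (by fun_prop : Continuous (fun r : ℝ => (r, y)))
            exact this.measurable))
        rw [← h5, ← lintegral_indicator measurableSet_Ioi]
        refine lintegral_congr fun θ => ?_
        by_cases hθ : θ ∈ Ioi (0 : ℝ)
        · have : coordMap k (s * θ) y 0 ∈ Ioi (0 : ℝ) := by
            rw [coordMap_zero_coord]; exact mul_pos hs hθ
          rw [indicator_of_mem hθ, indicator_of_mem this, coordMap_zero_coord,
            mul_div_cancel_left₀ _ hs.ne']
        · have : coordMap k (s * θ) y 0 ∉ Ioi (0 : ℝ) := by
            rw [coordMap_zero_coord]; intro hh; exact hθ (pos_of_mul_pos_right hh hs.le)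
          rw [indicator_of_notMem hθ, indicator_of_notMem this]
      · exact ENNReal.ofReal_ne_top
    · rw [hfint, hc1, Measure.restrict_smul, Measure.restrict_smul, lintegral_smul_measure,
        lintegral_smul_measure, smul_eq_mul, smul_eq_mul, mul_left_comm]
      gcongr
      have := lip_lintegral (d := ((k + 1 : ℕ) : ℝ)) (by positivity) Θ T hΘm hΘl f hf
      rwa [hΘT, ENNReal.rpow_natCast] at this
    · rw [hfint, hc1, Measure.restrict_smul, Measure.restrict_smul, lintegral_smul_measure,
        lintegral_smul_measure, smul_eq_mul, smul_eq_mul, mul_left_comm]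
      gcongr
      have := lip_lintegral (d := ((k + 1 : ℕ) : ℝ)) (by positivity) Ψ V hΨm hΨl (f ∘ Θ)
        (hf.comp hΘm)
      rw [ENNReal.rpow_natCast] at this
      refine this.trans_eq ?_
      congr 1
      refine setLIntegral_congr_fun hVo.measurableSet fun x hx => ?_
      simp [hinv x hx]
  -- surface comparison
  let kap : EE (k + 1) → ℝ≥0∞ := fun x => ∫⁻ θ in Ioi 0, K θ x
  have hkm : Measurable kap := hK.meas.lintegral_prod_left'
  have hh0 : Measurable (fun z : EE (k + 1) => z 0) :=
    (EuclideanSpace.proj (𝕜 := ℝ) (0 : Fin (k + 1))).continuous.measurable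
  let T0 : Set (EE (k + 1)) := T ∩ {z | z 0 = 0}
  have hT0m : MeasurableSet T0 := hTo.measurableSet.inter (hh0 (measurableSet_singleton 0))
  have hΘT0 : Θ '' T0 = freeBoundary u ∩ V := by
    ext x; constructor
    · rintro ⟨z, ⟨hz, hz0⟩, rfl⟩
      obtain ⟨h1, -, h3⟩ := hΘV z hz
      refine ⟨?_, h1⟩
      rw [hfb _ h1, ← h3]; exact hz0
    · rintro ⟨h1, h2⟩
      refine ⟨Ψ x, ⟨⟨x, h2, rfl⟩, ?_⟩, hinv x h2⟩
      change Ψ x 0 = 0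
      rw [hΨ0 x h2, ← hfb x h2]; exact h1
  have hΨT0 : Ψ '' (freeBoundary u ∩ V) = T0 := by
    rw [← hΘT0, image_image]
    ext z; constructor
    · rintro ⟨z', hz', rfl⟩; change Ψ (Θ z') ∈ T0; rw [(hΘV z' hz'.1).2.1]; exact hz'
    · intro hz; exact ⟨z, hz, (hΘV z hz.1).2.1⟩
  have hIeq : surfI c u K = c * ∫⁻ x in freeBoundary u ∩ V, kap x ∂μH[(k : ℝ)] := by
    unfold surfI
    congr 1
    rw [← lintegral_indicator (isMeas_fb u),
      ← lintegral_indicator ((isMeas_fb u).inter hVo.measurableSet)]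
    congr 1; ext x
    by_cases hx : x ∈ freeBoundary u
    · by_cases hxV : x ∈ V
      · rw [indicator_of_mem hx, indicator_of_mem (show x ∈ freeBoundary u ∩ V from ⟨hx, hxV⟩)]
      · rw [indicator_of_mem hx, indicator_of_notMem (fun hh => hxV hh.2)]
        have : ∀ θ, K θ x = 0 := by
          intro θ; by_contra hne; exact hxV (hCV (hK.supx _ _ hne))
        simp [this]
    · rw [indicator_of_notMem hx, indicator_of_notMem (fun hh => hx hh.1)]
  have hflateq : flat 0 = c * ∫⁻ z in T0, kap (Θ z) ∂μH[(k : ℝ)] := by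
    have h1 : ∫⁻ z in T0, kap (Θ z) ∂μH[(k : ℝ)] =
        ∫⁻ y, T.indicator (fun z => kap (Θ z)) (coordMap k 0 y) ∂μH[(k : ℝ)] := by
      rw [← lintegral_map (μ := (μH[(k : ℝ)] : Measure (EE k)))
        (f := T.indicator (fun z => kap (Θ z)))
        ((hkm.comp hΘm).indicator hTo.measurableSet) (coordMap_isometry k).continuous.measurable,
        (coordMap_isometry k).map_hausdorffMeasure (Or.inl (by positivity)),
        setLIntegral_indicator hTo.measurableSet]
      congr 2
      ext z
      constructor
      · rintro ⟨hz, hz0⟩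
        refine ⟨hz, ?_⟩
        obtain ⟨y, hy⟩ := coordMap_range k z
        refine ⟨y, ?_⟩
        rw [hy]; congr 1; exact (Eq.symm hz0)
      · rintro ⟨hz, y, rfl⟩
        exact ⟨hz, rfl⟩
    rw [h1, ← smul_eq_mul, ← lintegral_smul_measure, ← hc]
    refine lintegral_congr fun y => ?_
    by_cases hy : coordMap k 0 y ∈ T
    · rw [indicator_of_mem hy]
      refine lintegral_congr fun θ => ?_
      rw [zero_mul]; exact indicator_of_mem hy _
    · rw [indicator_of_notMem hy]
      have : ∀ θ, G θ (coordMap k (0 * θ) y) = 0 := fun θ => by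
        rw [zero_mul]; exact indicator_of_notMem hy _
      exact (lintegral_congr this).trans lintegral_zero
  refine ⟨flat, hflat0, hlim, ?_, ?_, ?_, ?_⟩
  · intro s hs
    obtain ⟨A, hA, h1, h2⟩ := hvol s hs
    rw [hA, layerL, mul_left_comm]
    gcongr
  · intro s hs
    obtain ⟨A, hA, h1, h2⟩ := hvol s hs
    rw [hA, layerL, mul_left_comm]
    gcongr
  · rw [hIeq, hflateq, mul_left_comm]
    gcongr
    have := lip_lintegral (d := (k : ℝ)) (by positivity) Θ T0 hΘm
      (hΘl.mono inter_subset_left) kap hkm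
    rwa [hΘT0, ENNReal.rpow_natCast] at this
  · rw [hIeq, hflateq, mul_left_comm]
    gcongr
    have := lip_lintegral (d := (k : ℝ)) (by positivity) Ψ (freeBoundary u ∩ V) hΨm
      (hΨl.mono inter_subset_right) (kap ∘ Θ) (hkm.comp hΘm)
    rw [hΨT0, ENNReal.rpow_natCast] at this
    refine this.trans_eq ?_
    congr 1
    refine setLIntegral_congr_fun ((isMeas_fb u).inter hVo.measurableSet) fun x hx => ?_
    simp [hinv x hx.2]

end

section
open MeasureTheory Metric Set
open scoped RealInnerProductSpace
open Filter Topology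
open scoped ENNReal NNReal

/-- Local approximate layer limit. -/
def GoodOn {k : ℕ} (c : ℝ≥0∞) (u : EE (k + 1) → ℝ) (L : ℝ≥0∞) (V : Set (EE (k + 1))) : Prop :=
  ∀ (C : Set (EE (k + 1))) (M : ℝ≥0) (B : ℝ) (K : ℝ → EE (k + 1) → ℝ≥0∞), IsCompact C → C ⊆ V →
    Adm u C M B K → surfI c u K ≠ ∞ ∧ ∀ η : ℝ≥0∞, η ≠ 0 → ∀ᶠ s in 𝓝[>] (0 : ℝ),
      layerL u K s ≤ L * surfI c u K + η ∧ surfI c u K ≤ L * layerL u K s + η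

theorem goodOn_fb {k : ℕ} {u U : EE (k + 1) → ℝ} {W : Set (EE (k + 1))} (h : ConeData u U W)
    {c : ℝ≥0∞} (hc : (volume : Measure (EE k)) = c • μH[(k : ℝ)])
    {x0 : EE (k + 1)} (hx0 : x0 ∈ freeBoundary u) (lam : ℝ≥0) (hlam : 1 < lam) :
    ∃ V, IsOpen V ∧ x0 ∈ V ∧ GoodOn c u ((lam : ℝ≥0∞) ^ (2 * k + 1)) V := by
  obtain ⟨V, Ψ, Θ, h1, h2, h3, h4, h5, h6, h7, h8, h9, h10, h11, h12, h13, h14⟩ :=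
    patch h hx0 lam hlam
  refine ⟨V, h1, h2, ?_⟩
  intro C M B K hC hCV hK
  obtain ⟨flat, hf0, hfl, ha, hb, hcc, hd⟩ :=
    patch_limit h hc h1 h5 h6 h7 h8 h9 h10 h11 h12 h13 h14 hC hCV hK
  have hl : ∀ m, (lam : ℝ≥0∞) ^ m ≠ ∞ := fun m => ENNReal.pow_ne_top ENNReal.coe_ne_top
  have hl0 : ∀ m, (lam : ℝ≥0∞) ^ m ≠ 0 := fun m =>
    pow_ne_zero _ (by simpa using (zero_lt_one.trans hlam).ne')
  refine ⟨ne_top_of_le_ne_top (ENNReal.mul_ne_top (hl k) hf0) hcc, fun η hη => ?_⟩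
  obtain ⟨δ, hδ0, hδ⟩ : ∃ δ : ℝ≥0∞, 0 < δ ∧ (lam : ℝ≥0∞) ^ (k + 1) * δ ≤ η ∧
      (lam : ℝ≥0∞) ^ k * δ ≤ η := by
    refine ⟨min (η / (lam : ℝ≥0∞) ^ (k + 1)) (η / (lam : ℝ≥0∞) ^ k), ?_, ?_, ?_⟩
    · exact lt_min (ENNReal.div_pos hη (hl _)) (ENNReal.div_pos hη (hl _))
    · refine (mul_le_mul_right (min_le_left _ _) _).trans ?_
      rw [ENNReal.mul_div_cancel (hl0 _) (hl _)]
    · refine (mul_le_mul_right (min_le_right _ _) _).trans ?_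
      rw [ENNReal.mul_div_cancel (hl0 _) (hl _)]
  have hev := (ENNReal.tendsto_nhds hf0).1 hfl δ hδ0
  filter_upwards [hev, self_mem_nhdsWithin] with s hs hs0
  have hs1 : flat s ≤ flat 0 + δ := hs.2
  have hs2 : flat 0 ≤ flat s + δ := tsub_le_iff_right.1 hs.1
  constructor
  · calc layerL u K s ≤ (lam : ℝ≥0∞) ^ (k + 1) * flat s := ha s hs0
      _ ≤ (lam : ℝ≥0∞) ^ (k + 1) * (flat 0 + δ) := by gcongr
      _ = (lam : ℝ≥0∞) ^ (k + 1) * flat 0 + (lam : ℝ≥0∞) ^ (k + 1) * δ := mul_add _ _ _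
      _ ≤ (lam : ℝ≥0∞) ^ (k + 1) * ((lam : ℝ≥0∞) ^ k * surfI c u K) + η := by
          gcongr; exact hδ.1
      _ = _ := by rw [← mul_assoc, ← pow_add]; congr 3; ring
  · calc surfI c u K ≤ (lam : ℝ≥0∞) ^ k * flat 0 := hcc
      _ ≤ (lam : ℝ≥0∞) ^ k * (flat s + δ) := by gcongr
      _ = (lam : ℝ≥0∞) ^ k * flat s + (lam : ℝ≥0∞) ^ k * δ := mul_add _ _ _
      _ ≤ (lam : ℝ≥0∞) ^ k * ((lam : ℝ≥0∞) ^ (k + 1) * layerL u K s) + η := by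
          gcongr
          · exact hb s hs0
          · exact hδ.2
      _ = _ := by rw [← mul_assoc, ← pow_add]; congr 3; ring

theorem surfI_zero {k : ℕ} {c : ℝ≥0∞} {u : EE (k + 1) → ℝ} {K : ℝ → EE (k + 1) → ℝ≥0∞}
    (hz : ∀ x ∈ freeBoundary u, ∀ θ, K θ x = 0) : surfI c u K = 0 := by
  unfold surfI
  rw [setLIntegral_congr_fun (g := fun _ => 0) (isMeas_fb u) fun x hx => ?_]
  · simp
  · simp [hz x hx]

theorem layerL_zero {k : ℕ} {u : EE (k + 1) → ℝ} (hu : Continuous u)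
    {K : ℝ → EE (k + 1) → ℝ≥0∞} {s : ℝ}
    (hz : ∀ x, 0 < u x → K (u x / s) x = 0) : layerL u K s = 0 := by
  unfold layerL
  rw [setLIntegral_congr_fun (g := fun _ => 0) (isOpen_lt continuous_const hu).measurableSet
    fun x hx => hz x hx]
  simp

theorem goodOn_of_zero {k : ℕ} {c : ℝ≥0∞} {u : EE (k + 1) → ℝ} (hu : Continuous u)
    (L : ℝ≥0∞) (V : Set (EE (k + 1))) (δ : ℝ) (hδ : 0 < δ)
    (h1 : ∀ x ∈ V, x ∉ freeBoundary u) (h2 : ∀ x ∈ V, 0 < u x → δ < u x) : GoodOn c u L V := by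
  intro C M B K hC hCV hK
  have hs : surfI c u K = 0 := surfI_zero fun x hx θ => by
    by_contra hne; exact h1 x (hCV (hK.supx _ _ hne)) hx
  refine ⟨by simp [hs], fun η hη => ?_⟩
  have hB : ∀ᶠ s in 𝓝[>] (0 : ℝ), B * s < δ := by
    have : Tendsto (fun s : ℝ => B * s) (𝓝[>] 0) (𝓝 (B * 0)) :=
      ((continuous_const_mul B).tendsto 0).mono_left nhdsWithin_le_nhds
    rw [mul_zero] at this
    exact this.eventually (gt_mem_nhds hδ)
  filter_upwards [hB, self_mem_nhdsWithin] with s hs1 hs0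
  have hl : layerL u K s = 0 := layerL_zero hu fun x hx => by
    by_contra hne
    have h3 := hK.supθ _ _ hne
    rw [div_le_iff₀ hs0] at h3
    linarith [h2 x (hCV (hK.supx _ _ hne)) hx]
  simp [hs, hl]

theorem goodOn_exists {k : ℕ} {u U : EE (k + 1) → ℝ} {W : Set (EE (k + 1))} (h : ConeData u U W)
    {c : ℝ≥0∞} (hc : (volume : Measure (EE k)) = c • μH[(k : ℝ)])
    (x0 : EE (k + 1)) (hx0 : x0 ≠ 0) (lam : ℝ≥0) (hlam : 1 < lam) :
    ∃ V, IsOpen V ∧ x0 ∈ V ∧ GoodOn c u ((lam : ℝ≥0∞) ^ (2 * k + 1)) V := by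
  by_cases hcl : x0 ∈ closure {x | 0 < u x}
  · rcases h.closure_cases hcl hx0 with hp | hp
    · refine ⟨{x | u x0 / 2 < u x}, isOpen_lt continuous_const h.lip.continuous, ?_, ?_⟩
      · change u x0 / 2 < u x0; linarith
      · refine goodOn_of_zero h.lip.continuous _ _ (u x0 / 2) (by linarith) ?_ ?_
        · intro x hx hf
          have h1 : u x0 / 2 < u x := hx
          have h2 := h.fb_u hf
          linarith
        · intro x hx _; exact hx
    · exact goodOn_fb h hc hp lam hlam
  · refine ⟨(closure {x | 0 < u x})ᶜ, isClosed_closure.isOpen_compl, hcl, ?_⟩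
    refine goodOn_of_zero h.lip.continuous _ _ 1 one_pos ?_ ?_
    · intro x hx hf; exact hx (frontier_subset_closure hf.1)
    · intro x hx hp; exact absurd (subset_closure (show x ∈ {x | 0 < u x} from hp)) hx

theorem layer_approx {k : ℕ} {u U : EE (k + 1) → ℝ} {W : Set (EE (k + 1))} (h : ConeData u U W)
    {c : ℝ≥0∞} (hc : (volume : Measure (EE k)) = c • μH[(k : ℝ)])
    {C : Set (EE (k + 1))} (hC : IsCompact C) (hC0 : (0 : EE (k + 1)) ∉ C) (lam : ℝ≥0)
    (hlam : 1 < lam) : GoodOn c u ((lam : ℝ≥0∞) ^ (2 * k + 1)) C := by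
  classical
  intro C' M B K hC' hCV hK
  have hK' : Adm u C M B K := ⟨hK.meas, hK.bdd, hK.supθ, fun θ x hx => hCV (hK.supx θ x hx), hK.cont⟩
  choose! V hVo hxV hVg using fun x (hx : x ≠ 0) => goodOn_exists h hc x hx lam hlam
  have hne : ∀ x ∈ C, x ≠ 0 := fun x hx h0 => hC0 (h0 ▸ hx)
  obtain ⟨t, ht, htC⟩ := hC.elim_nhds_subcover V
    (fun x hx => (hVo x (hne x hx)).mem_nhds (hxV x (hne x hx)))
  let e := t.equivFin.symm
  obtain ⟨f, hf1, hf2, hf3, hf4⟩ := exists_continuous_sum_one_of_isOpen_isCompact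
    (n := t.card) (t := C) (s := fun i => V (e i)) (fun i => hVo _ (hne _ (ht _ (e i).2))) hC (by
      intro x hx
      obtain ⟨y, hy, hxy⟩ := mem_iUnion₂.1 (htC hx)
      refine mem_iUnion.2 ⟨e.symm ⟨y, hy⟩, ?_⟩
      simpa using hxy)
  let Ki : Fin t.card → ℝ → EE (k + 1) → ℝ≥0∞ := fun i θ x => ENNReal.ofReal (f i x) * K θ x
  have hAdm : ∀ i, Adm u (C ∩ tsupport (f i)) M B (Ki i) := by
    intro i
    have hfm : Measurable (fun x => ENNReal.ofReal (f i x)) :=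
      (f i).continuous.measurable.ennreal_ofReal
    refine ⟨(hfm.comp measurable_snd).mul hK.meas, ?_, ?_, ?_, ?_⟩
    · intro θ x
      calc ENNReal.ofReal (f i x) * K θ x ≤ 1 * K θ x := by
            gcongr; exact ENNReal.ofReal_le_one.2 (hf3 i x).2
        _ ≤ M := by rw [one_mul]; exact hK.bdd θ x
    · intro θ x hx; exact hK.supθ θ x (right_ne_zero_of_mul hx)
    · intro θ x hx
      refine ⟨hK'.supx θ x (right_ne_zero_of_mul hx), subset_tsupport _ ?_⟩
      intro h0
      exact left_ne_zero_of_mul hx (by simp [h0])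
    · intro x hx
      filter_upwards [hK.cont x hx] with θ hθ
      refine ENNReal.Tendsto.mul ?_ (Or.inr (ne_top_of_le_ne_top ENNReal.coe_ne_top (hK.bdd θ x)))
        hθ (Or.inr ENNReal.ofReal_ne_top)
      exact (ENNReal.continuous_ofReal.comp (f i).continuous).continuousAt.tendsto.mono_left
        nhdsWithin_le_nhds
  have hgood := fun i => hVg _ (hne _ (ht _ (e i).2)) (C ∩ tsupport (f i)) M B (Ki i)
    (hC.inter_right (isClosed_tsupport _)) (inter_subset_right.trans (hf1 i)) (hAdm i)
  have hKsum : ∀ θ x, K θ x = ∑ i, Ki i θ x := by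
    intro θ x
    by_cases hx : K θ x = 0
    · rw [hx]; symm; refine Finset.sum_eq_zero fun i _ => ?_
      change _ * K θ x = 0
      rw [hx, mul_zero]
    · have h1 := hf2 (hK'.supx θ x hx)
      change K θ x = ∑ i, ENNReal.ofReal (f i x) * K θ x
      rw [← Finset.sum_mul, ← ENNReal.ofReal_sum_of_nonneg fun i _ => (hf3 i x).1]
      have h2 : ∑ i, f i x = 1 := by simpa using h1
      rw [h2, ENNReal.ofReal_one, one_mul]
  have hS : surfI c u K = ∑ i, surfI c u (Ki i) := by
    unfold surfI
    rw [← Finset.mul_sum, ← lintegral_finsetSum]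
    · congr 1
      refine lintegral_congr fun x => ?_
      rw [← lintegral_finsetSum]
      · exact lintegral_congr fun θ => hKsum θ x
      · intro i _; exact (hAdm i).meas.comp (measurable_id.prodMk measurable_const)
    · intro i _; exact (hAdm i).meas.lintegral_prod_left'
  have hL : ∀ s, layerL u K s = ∑ i, layerL u (Ki i) s := by
    intro s
    unfold layerL
    rw [← Finset.mul_sum, ← lintegral_finsetSum]
    · congr 1
      exact lintegral_congr fun x => hKsum _ x
    · intro i _
      exact (hAdm i).meas.comp ((h.lip.continuous.measurable.div_const s).prodMk measurable_id)
  refine ⟨?_, fun η hη => ?_⟩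
  · rw [hS]; exact (ENNReal.sum_lt_top.2 fun i _ => (hgood i).1.lt_top).ne
  · have hη' : η / (t.card : ℝ≥0∞) ≠ 0 := (ENNReal.div_pos hη (ENNReal.natCast_ne_top _)).ne'
    have hsumη : ∑ _i : Fin t.card, η / (t.card : ℝ≥0∞) ≤ η := by
      rw [Finset.sum_const, Finset.card_univ, Fintype.card_fin, nsmul_eq_mul]
      exact ENNReal.mul_div_le
    have hall : ∀ᶠ s in 𝓝[>] (0 : ℝ), ∀ i, _ := eventually_all.2 fun i => (hgood i).2 _ hη'
    filter_upwards [hall] with s hs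
    rw [hL, hS]
    constructor
    · calc _ ≤ ∑ i, (_ + _) := Finset.sum_le_sum fun i _ => (hs i).1
        _ = _ := Finset.sum_add_distrib
        _ ≤ _ := by rw [Finset.mul_sum]; exact add_le_add le_rfl hsumη
    · calc _ ≤ ∑ i, (_ + _) := Finset.sum_le_sum fun i _ => (hs i).2
        _ = _ := Finset.sum_add_distrib
        _ ≤ _ := by rw [Finset.mul_sum]; exact add_le_add le_rfl hsumη

theorem layer_limit {k : ℕ} {u U : EE (k + 1) → ℝ} {W : Set (EE (k + 1))} (h : ConeData u U W)
    {c : ℝ≥0∞} (hc : (volume : Measure (EE k)) = c • μH[(k : ℝ)])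
    {C : Set (EE (k + 1))} (hC : IsCompact C) (hC0 : (0 : EE (k + 1)) ∉ C)
    {M : ℝ≥0} {B : ℝ} {K : ℝ → EE (k + 1) → ℝ≥0∞} (hK : Adm u C M B K) :
    surfI c u K ≠ ∞ ∧ Tendsto (layerL u K) (𝓝[>] 0) (𝓝 (surfI c u K)) := by
  have key := fun (lam : ℝ≥0) hl => layer_approx h hc hC hC0 lam hl C M B K hC Subset.rfl hK
  have hfin := (key 2 (by norm_num)).1
  refine ⟨hfin, ?_⟩
  set a := surfI c u K
  let lj : ℕ → ℝ≥0 := fun j => 1 + 1 / ((j : ℝ≥0) + 1)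
  let ej : ℕ → ℝ≥0∞ := fun j => ((1 / ((j : ℝ≥0) + 1) : ℝ≥0) : ℝ≥0∞)
  have hz : Tendsto (fun j : ℕ => 1 / ((j : ℝ≥0) + 1)) atTop (𝓝 0) :=
    tendsto_one_div_add_atTop_nhds_zero_nat
  have hej : Tendsto ej atTop (𝓝 0) := by
    have := (ENNReal.tendsto_coe.2 hz); rw [ENNReal.coe_zero] at this; exact this
  have hej0 : ∀ j, ej j ≠ 0 := fun j => by
    simp only [ej, ne_eq, ENNReal.coe_eq_zero]; positivity
  have hlj : Tendsto (fun j => ((lj j : ℝ≥0) : ℝ≥0∞) ^ (2 * k + 1)) atTop (𝓝 1) := by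
    have h1 : Tendsto lj atTop (𝓝 (1 + 0)) := hz.const_add 1
    rw [add_zero] at h1
    have h2 := (ENNReal.tendsto_coe.2 (h1.pow (2 * k + 1)))
    simpa using h2
  have hlj1 : ∀ j, 1 < lj j := fun j => by
    simp only [lj]; exact lt_add_of_pos_right _ (by positivity)
  have hlim : ∀ a' : ℝ≥0∞, a' ≠ ∞ → Tendsto (fun j => ((lj j : ℝ≥0) : ℝ≥0∞) ^ (2 * k + 1) * a' + ej j)
      atTop (𝓝 a') := by
    intro a' ha'
    have := (ENNReal.Tendsto.mul_const hlj (Or.inr ha')).add hej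
    simpa using this
  rw [tendsto_order]
  constructor
  · intro a' ha'
    obtain ⟨j, hj⟩ := ((hlim a' (ha'.trans_le le_top).ne).eventually (gt_mem_nhds ha')).exists
    filter_upwards [(key (lj j) (hlj1 j)).2 (ej j) (hej0 j)] with s hs
    by_contra hle
    push Not at hle
    have : a ≤ _ := hs.2
    refine absurd (this.trans ?_) (not_le.2 hj)
    gcongr
  · intro a' ha'
    obtain ⟨j, hj⟩ := ((hlim a hfin).eventually (gt_mem_nhds ha')).exists
    filter_upwards [(key (lj j) (hlj1 j)).2 (ej j) (hej0 j)] with s hs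
    exact hs.1.trans_lt hj

end

section
open MeasureTheory Metric Set
open scoped RealInnerProductSpace
open Filter Topology
open scoped ENNReal NNReal

/-- Admissible real kernels. -/
structure AdmR {n : ℕ} (u : EE n → ℝ) (C : Set (EE n)) (M : ℝ≥0) (B : ℝ)
    (K : ℝ → EE n → ℝ) : Prop where
  meas : Measurable (Function.uncurry K)
  bdd : ∀ θ x, |K θ x| ≤ M
  supθ : ∀ θ x, K θ x ≠ 0 → θ ≤ B
  supx : ∀ θ x, K θ x ≠ 0 → x ∈ C
  cont : ∀ x ∈ freeBoundary u, ∀ᵐ θ ∂(volume.restrict (Ioi (0 : ℝ))),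
    Tendsto (K θ) (𝓝[{x | 0 < u x}] x) (𝓝 (K θ x))

theorem AdmR.toAdm {n : ℕ} {u : EE n → ℝ} {C : Set (EE n)} {M : ℝ≥0} {B : ℝ}
    {K : ℝ → EE n → ℝ} (h : AdmR u C M B K) : Adm u C M B (fun θ x => ENNReal.ofReal (K θ x)) := by
  refine ⟨h.meas.ennreal_ofReal, ?_, ?_, ?_, ?_⟩
  · intro θ x
    have h1 := (le_abs_self _).trans (h.bdd θ x)
    exact (ENNReal.ofReal_le_ofReal h1).trans (by simp)
  · intro θ x hx; exact h.supθ θ x (fun h0 => hx (by simp [h0]))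
  · intro θ x hx; exact h.supx θ x (fun h0 => hx (by simp [h0]))
  · intro x hx
    filter_upwards [h.cont x hx] with θ hθ
    exact (ENNReal.continuous_ofReal.tendsto _).comp hθ

theorem AdmR.neg {n : ℕ} {u : EE n → ℝ} {C : Set (EE n)} {M : ℝ≥0} {B : ℝ}
    {K : ℝ → EE n → ℝ} (h : AdmR u C M B K) : AdmR u C M B (fun θ x => - K θ x) := by
  refine ⟨h.meas.neg, ?_, ?_, ?_, ?_⟩
  · intro θ x; rw [abs_neg]; exact h.bdd θ x
  · intro θ x hx; exact h.supθ θ x (fun h0 => hx (by simp [h0]))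
  · intro θ x hx; exact h.supx θ x (fun h0 => hx (by simp [h0]))
  · intro x hx
    filter_upwards [h.cont x hx] with θ hθ
    exact hθ.neg

theorem AdmR.integrable {n : ℕ} {u : EE n → ℝ} (hu : Continuous u) {C : Set (EE n)} {M : ℝ≥0} {B : ℝ}
    {K : ℝ → EE n → ℝ} (h : AdmR u C M B K) (hC : IsCompact C) (s : ℝ) :
    Integrable (fun x => K (u x / s) x) (volume.restrict {x | 0 < u x}) := by
  refine Integrable.restrict ?_
  have hm : Measurable (fun x => K (u x / s) x) :=
    h.meas.comp ((hu.measurable.div_const s).prodMk measurable_id)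
  have h1 : IntegrableOn (fun x => K (u x / s) x) C := by
    refine Measure.integrableOn_of_bounded (M := M) hC.measure_lt_top.ne hm.aestronglyMeasurable ?_
    exact Eventually.of_forall fun x => h.bdd _ _
  refine (integrableOn_iff_integrable_of_support_subset ?_).1 h1
  intro x hx
  exact h.supx _ _ hx

theorem layer_limit_real {k : ℕ} {u U : EE (k + 1) → ℝ} {W : Set (EE (k + 1))} (h : ConeData u U W)
    {c : ℝ≥0∞} (hc0 : c ≠ 0) (hc : (volume : Measure (EE k)) = c • μH[(k : ℝ)])
    {C : Set (EE (k + 1))} (hC : IsCompact C) (hC0 : (0 : EE (k + 1)) ∉ C)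
    {M : ℝ≥0} {B : ℝ} {K : ℝ → EE (k + 1) → ℝ} (hK : AdmR u C M B K) :
    Tendsto (fun s => s⁻¹ * ∫ x in {x | 0 < u x}, K (u x / s) x) (𝓝[>] 0)
      (𝓝 (c.toReal * ∫ x in freeBoundary u, (∫ θ in Ioi 0, K θ x) ∂μH[(k : ℝ)])) := by
  obtain ⟨p1, p2⟩ := layer_limit h hc hC hC0 hK.toAdm
  obtain ⟨q1, q2⟩ := layer_limit h hc hC hC0 hK.neg.toAdm
  have hlim := ((ENNReal.tendsto_toReal p1).comp p2).sub ((ENNReal.tendsto_toReal q1).comp q2)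
  have hR : (surfI c u fun θ x => ENNReal.ofReal (K θ x)).toReal -
      (surfI c u fun θ x => ENNReal.ofReal (-K θ x)).toReal =
      c.toReal * ∫ x in freeBoundary u, (∫ θ in Ioi 0, K θ x) ∂μH[(k : ℝ)] := by
    have fin1 : ∀ {K : ℝ → EE (k + 1) → ℝ}, AdmR u C M B K → ∀ x,
        ∫⁻ θ in Ioi 0, ENNReal.ofReal (K θ x) ≠ ∞ := by
      intro K hK x
      have : ∀ θ, ENNReal.ofReal (K θ x) ≤ (Iic B).indicator (fun _ => (M : ℝ≥0∞)) θ := by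
        intro θ
        by_cases hθ : θ ∈ Iic B
        · rw [indicator_of_mem hθ]; exact hK.toAdm.bdd θ x
        · rw [indicator_of_notMem hθ]
          by_contra hne
          exact hθ (hK.toAdm.supθ θ x (fun h0 => hne (by simp [h0])))
      refine ne_top_of_le_ne_top ?_ (lintegral_mono this)
      rw [lintegral_indicator measurableSet_Iic, lintegral_const, Measure.restrict_apply_univ,
        Measure.restrict_apply measurableSet_Iic]
      have : Iic B ∩ Ioi 0 = Ioc 0 B := by ext; simp [and_comm]
      rw [this, Real.volume_Ioc]
      exact ENNReal.mul_ne_top ENNReal.coe_ne_top ENNReal.ofReal_ne_top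
    have hmm : ∀ {K : ℝ → EE (k + 1) → ℝ}, AdmR u C M B K →
        Measurable (fun x => ∫⁻ θ in Ioi 0, ENNReal.ofReal (K θ x)) := by
      intro K hK
      exact hK.toAdm.meas.lintegral_prod_left'
    have fin2 : ∀ {F : EE (k + 1) → ℝ≥0∞}, c * ∫⁻ x in freeBoundary u, F x ∂μH[(k : ℝ)] ≠ ∞ →
        ∫⁻ x in freeBoundary u, F x ∂μH[(k : ℝ)] ≠ ∞ := by
      intro F hF h0
      rw [h0, ENNReal.mul_top hc0] at hF
      exact hF rfl
    have e1 : ∀ x, ∫ θ in Ioi 0, K θ x = (∫⁻ θ in Ioi 0, ENNReal.ofReal (K θ x)).toReal -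
        (∫⁻ θ in Ioi 0, ENNReal.ofReal (-K θ x)).toReal := by
      intro x
      refine integral_eq_lintegral_pos_part_sub_lintegral_neg_part ?_
      have hmx : Measurable (fun θ => K θ x) := hK.meas.comp (measurable_id.prodMk measurable_const)
      refine ⟨hmx.aestronglyMeasurable, ?_⟩
      rw [hasFiniteIntegral_iff_norm]
      simp only [Real.norm_eq_abs]
      have : ∀ θ, ENNReal.ofReal |K θ x| ≤ ENNReal.ofReal (K θ x) + ENNReal.ofReal (-K θ x) := by
        intro θ
        rcases abs_cases (K θ x) with h1 | h1 <;> rw [h1.1] <;> simp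
      refine (lintegral_mono this).trans_lt ?_
      rw [lintegral_add_left hmx.ennreal_ofReal]
      exact (ENNReal.add_ne_top.2 ⟨fin1 hK x, fin1 hK.neg x⟩).lt_top
    unfold surfI at p1 q1 ⊢
    rw [ENNReal.toReal_mul, ENNReal.toReal_mul, ← mul_sub]
    congr 1
    simp_rw [e1]
    have i1 : ∀ {F : EE (k + 1) → ℝ≥0∞}, Measurable F → 
        ∫⁻ x in freeBoundary u, F x ∂μH[(k : ℝ)] ≠ ∞ →
        Integrable (fun x => (F x).toReal) (μH[(k : ℝ)].restrict (freeBoundary u)) :=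
      fun hm hF => integrable_toReal_of_lintegral_ne_top hm.aemeasurable hF
    rw [integral_sub (i1 (hmm hK) (fin2 p1)) (i1 (hmm hK.neg) (fin2 q1)),
      integral_toReal (hmm hK).aemeasurable (Eventually.of_forall fun x => (fin1 hK x).lt_top),
      integral_toReal (hmm hK.neg).aemeasurable (Eventually.of_forall fun x => (fin1 hK.neg x).lt_top)]
  rw [hR] at hlim
  refine hlim.congr' ?_
  filter_upwards [self_mem_nhdsWithin] with s hs
  have hs' : (0 : ℝ) < s := hs
  rw [integral_eq_lintegral_pos_part_sub_lintegral_neg_part (hK.integrable h.lip.continuous hC s),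
    mul_sub]
  simp only [Function.comp, layerL]
  rw [ENNReal.toReal_mul, ENNReal.toReal_mul, ENNReal.toReal_ofReal (by positivity)]

theorem fb_compact_finite {k : ℕ} {u U : EE (k + 1) → ℝ} {W : Set (EE (k + 1))} (h : ConeData u U W)
    {C : Set (EE (k + 1))} (hC : IsCompact C) (hC0 : (0 : EE (k + 1)) ∉ C) :
    μH[(k : ℝ)] (freeBoundary u ∩ C) ≠ ∞ := by
  obtain ⟨c, hc0, -, hc⟩ := vol_eq_hausdorff k
  obtain ⟨f, hf1, hf2, hf3, hf4⟩ := exists_continuous_sum_one_of_isOpen_isCompact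
    (n := 1) (t := C) (s := fun _ => ({0} : Set (EE (k + 1)))ᶜ)
    (fun i => isClosed_singleton.isOpen_compl) hC (by
      intro x hx
      refine mem_iUnion.2 ⟨0, ?_⟩
      rintro rfl; exact hC0 hx)
  let K : ℝ → EE (k + 1) → ℝ≥0∞ := fun θ x => (Iic (1 : ℝ)).indicator (fun _ => 1) θ *
    ENNReal.ofReal (f 0 x)
  have hK : Adm u (tsupport (f 0)) 1 1 K := by
    have hfm : Measurable (fun x => ENNReal.ofReal (f 0 x)) :=
      (f 0).continuous.measurable.ennreal_ofReal
    refine ⟨?_, ?_, ?_, ?_, ?_⟩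
    · exact ((measurable_const.indicator measurableSet_Iic).comp measurable_fst).mul
        (hfm.comp measurable_snd)
    · intro θ x
      calc K θ x ≤ 1 * 1 := by
            refine mul_le_mul' ?_ (ENNReal.ofReal_le_one.2 (hf3 0 x).2)
            exact indicator_le_self' (fun _ _ => zero_le) θ
        _ = _ := by simp
    · intro θ x hx
      by_contra hne
      refine left_ne_zero_of_mul hx (indicator_of_notMem ?_ _)
      exact hne
    · intro θ x hx
      refine subset_tsupport _ ?_
      intro h0
      exact right_ne_zero_of_mul hx (by simp [h0])
    · intro x hx
      refine Eventually.of_forall fun θ => ?_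
      refine ENNReal.Tendsto.const_mul ?_ (Or.inr ?_)
      · exact (ENNReal.continuous_ofReal.comp (f 0).continuous).continuousAt.tendsto.mono_left
          nhdsWithin_le_nhds
      · by_cases hθ : θ ∈ Iic (1 : ℝ)
        · rw [indicator_of_mem hθ]; simp
        · rw [indicator_of_notMem hθ]; simp
  have := (layer_limit h hc (hf4 0) (fun h0 => hf1 0 h0 rfl) hK).1
  intro htop
  apply this
  unfold surfI
  refine ENNReal.mul_eq_top.2 (Or.inl ⟨hc0, ?_⟩)
  rw [eq_top_iff, ← htop, ← setLIntegral_one, ← lintegral_indicator ((isMeas_fb u).inter hC.measurableSet),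
    ← lintegral_indicator (isMeas_fb u)]
  refine lintegral_mono fun x => ?_
  by_cases hx : x ∈ freeBoundary u ∩ C
  · rw [indicator_of_mem hx, indicator_of_mem hx.1]
    have h1 : f 0 x = 1 := by have := hf2 hx.2; simpa using this
    simp only [K, h1]
    simp only [ENNReal.ofReal_one, mul_one]
    rw [lintegral_indicator measurableSet_Iic, lintegral_const, Measure.restrict_apply_univ,
        Measure.restrict_apply measurableSet_Iic]
    have : Iic 1 ∩ Ioi 0 = Ioc (0 : ℝ) 1 := by ext; simp [and_comm]
    rw [this, Real.volume_Ioc]; simp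
  · rw [indicator_of_notMem hx]; exact zero_le

theorem fb_open_pos {k : ℕ} {u U : EE (k + 1) → ℝ} {W : Set (EE (k + 1))} (h : ConeData u U W)
    {x0 : EE (k + 1)} (hx0 : x0 ∈ freeBoundary u) {V' : Set (EE (k + 1))} (hV' : IsOpen V')
    (hxV' : x0 ∈ V') : μH[(k : ℝ)] (freeBoundary u ∩ V') ≠ 0 := by
  obtain ⟨c, hc0, -, hc⟩ := vol_eq_hausdorff k
  obtain ⟨V, Ψ, Θ, h1, h2, h3, h4, h5, h6, h7, h8, h9, h10, h11, h12, h13, h14⟩ :=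
    patch h hx0 2 (by norm_num)
  intro hz
  have hop : IsOpen (Ψ '' V ∩ Θ ⁻¹' V') := h8.continuousOn.isOpen_inter_preimage h6 hV'
  have hz1 : μH[(k : ℝ)] (Ψ '' (freeBoundary u ∩ V ∩ V')) = 0 := by
    have := LipschitzOnWith.hausdorffMeasure_image_le
      (h7.mono (show freeBoundary u ∩ V ∩ V' ⊆ V from fun x hx => hx.1.2)) (d := (k : ℝ)) (by positivity)
    have h0 : μH[(k : ℝ)] (freeBoundary u ∩ V ∩ V') = 0 :=
      measure_mono_null (t := freeBoundary u ∩ V') (fun x hx => ⟨hx.1.1, hx.2⟩) hz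
    rw [h0, mul_zero] at this
    exact le_antisymm this zero_le
  let Y := (coordMap k 0) ⁻¹' (Ψ '' V ∩ Θ ⁻¹' V')
  have hYo : IsOpen Y := hop.preimage (coordMap_isometry k).continuous
  have hsub : coordMap k 0 '' Y ⊆ Ψ '' (freeBoundary u ∩ V ∩ V') := by
    rintro _ ⟨y, hy, rfl⟩
    obtain ⟨⟨x, hx, hxy⟩, hy2⟩ := hy
    rw [← hxy] at hy2 ⊢
    refine ⟨x, ⟨⟨?_, hx⟩, ?_⟩, rfl⟩
    · rw [h12 x hx, ← h10 x hx, hxy, coordMap_zero_coord]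
    · have : Θ (Ψ x) ∈ V' := hy2
      rwa [h9 x hx] at this
  have hY0 : μH[(k : ℝ)] Y = 0 := by
    rw [← (coordMap_isometry k).hausdorffMeasure_image (Or.inl (by positivity))]
    exact measure_mono_null hsub hz1
  have hYv : (volume : Measure (EE k)) Y = 0 := by
    rw [hc, Measure.smul_apply, hY0, smul_zero]
  have hYne : Y.Nonempty := by
    obtain ⟨y, hy⟩ := coordMap_range k (Ψ x0)
    have h00 : Ψ x0 0 = 0 := by rw [h10 x0 h2, h.fb_U hx0]
    rw [h00] at hy
    refine ⟨y, ?_⟩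
    rw [mem_preimage]
    rw [← hy]
    refine ⟨⟨x0, h2, rfl⟩, ?_⟩
    change Θ (Ψ x0) ∈ V'
    rwa [h9 x0 h2]
  exact (hYo.measure_pos volume hYne).ne' hYv

end

section
open MeasureTheory Metric Set
open scoped RealInnerProductSpace
open Filter Topology
open scoped ENNReal NNReal

theorem grad_inner {n : ℕ} (f : EE n → ℝ) (x w : EE n) : ⟪gradient f x, w⟫ = fderiv ℝ f x w := by
  rw [gradient, InnerProductSpace.toDual_symm_apply]

section
variable {k : ℕ} {u U : EE (k + 1) → ℝ} {W : Set (EE (k + 1))}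

theorem ConeData.nbhd (h : ConeData u U W) {x : EE (k + 1)} (hx : x ∈ freeBoundary u) :
    ∃ V, IsOpen V ∧ x ∈ V ∧ V ⊆ W ∧ (∀ y ∈ V, 0 < u y ↔ 0 < U y) ∧
      (∀ y ∈ V, y ∈ freeBoundary u ↔ U y = 0) := by
  obtain ⟨V, Ψ, Θ, h1, h2, h3, h4, h5, h6, h7, h8, h9, h10, h11, h12, h13, h14⟩ :=
    patch h hx 2 (by norm_num)
  exact ⟨V, h1, h2, h3, h11, h12⟩

theorem ConeData.gradSmooth (h : ConeData u U W) :
    ContDiffOn ℝ (⊤ : ℕ∞) (gradient U) W := by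
  have h1 : ContDiffOn ℝ (⊤ : ℕ∞) (fderiv ℝ U) W :=
    h.smooth.fderiv_of_isOpen h.isOpenW (by simp)
  exact (InnerProductSpace.toDual ℝ (EE (k + 1))).symm.contDiff.comp_contDiffOn h1

theorem ConeData.diffAt (h : ConeData u U W) {x : EE (k + 1)} (hx : x ∈ W) :
    DifferentiableAt ℝ U x := (h.contDiffAt hx).differentiableAt (by simp)

theorem ConeData.gradDiffAt (h : ConeData u U W) {x : EE (k + 1)} (hx : x ∈ W) :
    DifferentiableAt ℝ (gradient U) x :=
  (h.gradSmooth.contDiffAt (h.isOpenW.mem_nhds hx)).differentiableAt (by simp)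

theorem ConeData.inward (h : ConeData u U W) {x w : EE (k + 1)} (hx : x ∈ freeBoundary u)
    (hw : 0 < ⟪gradient U x, w⟫) : ∀ᶠ t in 𝓝[>] (0 : ℝ), x + t • w ∈ {x | 0 < u x} := by
  obtain ⟨V, hVo, hxV, hVW, hV1, hV2⟩ := h.nbhd hx
  have hd : HasFDerivAt U (fderiv ℝ U x) x := (h.diffAt (h.fb_subW hx)).hasFDerivAt
  have hline : HasDerivAt (fun t : ℝ => x + t • w) w 0 := by
    simpa using ((hasDerivAt_id (0 : ℝ)).smul_const w).const_add x
  have hd' : HasDerivAt (fun t : ℝ => U (x + t • w)) (fderiv ℝ U x w) 0 := by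
    have : HasFDerivAt U (fderiv ℝ U x) (x + (0 : ℝ) • w) := by simpa using hd
    exact this.comp_hasDerivAt (0 : ℝ) hline
  rw [grad_inner] at hw
  have hslope := hasDerivAt_iff_tendsto_slope.1 hd'
  have hev : ∀ᶠ t in 𝓝[≠] (0 : ℝ), 0 < slope (fun t : ℝ => U (x + t • w)) 0 t :=
    hslope.eventually (lt_mem_nhds hw)
  have hev2 : ∀ᶠ t in 𝓝[>] (0 : ℝ), 0 < slope (fun t : ℝ => U (x + t • w)) 0 t :=
    hev.filter_mono (nhdsWithin_mono _ (fun t ht => (ne_of_gt ht)))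
  have hev3 : ∀ᶠ t in 𝓝[>] (0 : ℝ), x + t • w ∈ V := by
    have : Tendsto (fun t : ℝ => x + t • w) (𝓝 0) (𝓝 x) := by
      simpa using hline.continuousAt.tendsto
    exact (this.eventually (hVo.mem_nhds hxV)).filter_mono nhdsWithin_le_nhds
  filter_upwards [hev2, hev3, self_mem_nhdsWithin] with t h1 h2 h3
  rw [hV1 _ h2]
  have h3' : (0 : ℝ) < t := h3
  simp only [slope, vsub_eq_sub, sub_zero, zero_smul, add_zero, smul_eq_mul] at h1
  rw [h.fb_U hx, sub_zero] at h1
  exact pos_of_mul_pos_right h1 (by positivity)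

theorem ConeData.uniqueDiff (h : ConeData u U W) {A : Set (EE (k + 1))} (hA : IsOpen A) :
    UniqueDiffOn ℝ (({x | 0 < u x} ∩ A) ∪ (freeBoundary u ∩ A)) := by
  rintro x (hx | hx)
  · exact ((h.isOpenPos.inter hA).uniqueDiffWithinAt hx).mono subset_union_left
  · refine ⟨?_, subset_closure (Or.inr hx)⟩
    have hsub : {w : EE (k + 1) | 0 < ⟪gradient U x, w⟫} ⊆
        tangentConeAt ℝ (({x | 0 < u x} ∩ A) ∪ (freeBoundary u ∩ A)) x := by
      intro w hw
      refine mem_tangentConeAt_of_add_smul_mem (l := 𝓝[>] (0 : ℝ)) (c := fun t => t) ?_ ?_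
      · exact tendsto_id'.2 (nhdsWithin_mono _ (fun t ht => (ne_of_gt ht)))
      · have hev3 : ∀ᶠ t in 𝓝[>] (0 : ℝ), x + t • w ∈ A := by
          have : Continuous (fun t : ℝ => x + t • w) := by fun_prop
          have := this.tendsto 0
          simp only [zero_smul, add_zero] at this
          exact (this.eventually (hA.mem_nhds hx.2)).filter_mono nhdsWithin_le_nhds
        filter_upwards [h.inward hx.1 hw, hev3] with t h1 h2
        exact Or.inl ⟨h1, h2⟩
    have hop : IsOpen {w : EE (k + 1) | 0 < ⟪gradient U x, w⟫} :=
      isOpen_lt continuous_const (by fun_prop)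
    have hg : gradient U x ∈ {w : EE (k + 1) | 0 < ⟪gradient U x, w⟫} := by
      rw [Set.mem_ofPred_eq, real_inner_self_eq_norm_sq, h.grad1 x hx.1]; norm_num
    have : Submodule.span ℝ (tangentConeAt ℝ (({x | 0 < u x} ∩ A) ∪ (freeBoundary u ∩ A)) x) = ⊤ := by
      refine Submodule.eq_top_of_nonempty_interior' _ ⟨gradient U x, ?_⟩
      refine mem_interior.2 ⟨_, hsub.trans Submodule.subset_span, hop, hg⟩
    rw [this]; exact dense_univ

theorem ConeData.meanCurv_eq (h : ConeData u U W) {x : EE (k + 1)} (hx : x ∈ W) :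
    meanCurv U x = -⟪fderiv ℝ (gradient U) x (gradient U x), gradient U x⟫ := by
  unfold meanCurv nuVec
  have h1 := h.gradDiffAt hx
  have h2 : HasFDerivAt (fun y => ⟪gradient U y, -gradient U x⟫)
      ((innerSL ℝ (-gradient U x)).comp (fderiv ℝ (gradient U) x)) x := by
    have := ((innerSL ℝ (-gradient U x)).hasFDerivAt).comp x h1.hasFDerivAt
    refine this.congr_of_eventuallyEq (Eventually.of_forall fun y => ?_)
    simp
  rw [h2.fderiv]
  simp

theorem ConeData.meanCurv_cont (h : ConeData u U W) : ContinuousOn (meanCurv U) W := by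
  have h1 : ContinuousOn (fderiv ℝ (gradient U)) W :=
    h.gradSmooth.continuousOn_fderiv_of_isOpen h.isOpenW (by simp)
  have h2 := h.gradSmooth.continuousOn
  refine ContinuousOn.congr (f := fun x => -⟪fderiv ℝ (gradient U) x (gradient U x), gradient U x⟫)
    ?_ (fun x hx => h.meanCurv_eq hx)
  exact ((h1.clm_apply h2).inner h2).neg

theorem ConeData.line_sign (h : ConeData u U W) {x : EE (k + 1)} (hx : x ∈ freeBoundary u)
    {G : EE (k + 1) → ℝ} (hG : ContDiffAt ℝ 1 G x) (hG0 : ∀ y ∈ freeBoundary u, G y = 0)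
    (hGe : fderiv ℝ G x (gradient U x) < 0) : ∀ᶠ y in 𝓝[{x | 0 < u x}] x, G y ≤ 0 := by
  set e := gradient U x with he
  have hen : ‖e‖ = 1 := h.grad1 x hx
  obtain ⟨V, hVo, hxV, hVW, hV1, hV2⟩ := h.nbhd hx
  have hU1 : ContDiffAt ℝ 1 U x := (h.contDiffAt (h.fb_subW hx)).of_le (by simp)
  have hUe : 1 / 2 < fderiv ℝ U x e := by
    rw [← grad_inner, ← he, real_inner_self_eq_norm_sq, hen]; norm_num
  have hev1 : ∀ᶠ z in 𝓝 x, fderiv ℝ G z e < 0 := by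
    have : ContinuousAt (fun z => fderiv ℝ G z e) x :=
      (hG.continuousAt_fderiv (by simp)).clm_apply continuousAt_const
    exact this.eventually (gt_mem_nhds hGe)
  have hev2 : ∀ᶠ z in 𝓝 x, 1 / 2 < fderiv ℝ U z e := by
    have : ContinuousAt (fun z => fderiv ℝ U z e) x :=
      (hU1.continuousAt_fderiv (by simp)).clm_apply continuousAt_const
    exact this.eventually (lt_mem_nhds hUe)
  have hev3 : ∀ᶠ z in 𝓝 x, DifferentiableAt ℝ G z :=
    (hG.eventually (by simp)).mono fun z hz => hz.differentiableAt (by simp)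
  have hev4 : ∀ᶠ z in 𝓝 x, z ∈ V := hVo.mem_nhds hxV
  obtain ⟨r, hr, hball⟩ := Metric.eventually_nhds_iff_ball.1 (hev1.and (hev2.and (hev3.and hev4)))
  have hUc : ∀ᶠ y in 𝓝 x, U y < r / 4 := by
    have := hU1.continuousAt
    refine this.eventually (gt_mem_nhds ?_)
    rw [h.fb_U hx]; positivity
  have hy0 : ∀ᶠ y in 𝓝 x, y ∈ ball x (r / 4) := ball_mem_nhds x (by positivity)
  filter_upwards [self_mem_nhdsWithin, nhdsWithin_le_nhds hUc, nhdsWithin_le_nhds hy0]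
    with y hyΩ hyU hyb
  have hseg : ∀ τ ∈ Icc 0 (r / 2), y - τ • e ∈ ball x r := by
    intro τ hτ
    rw [mem_ball_iff_norm] at hyb ⊢
    calc ‖y - τ • e - x‖ = ‖(y - x) - τ • e‖ := by congr 1; abel
      _ ≤ ‖y - x‖ + ‖τ • e‖ := norm_sub_le _ _
      _ < r / 4 + r / 2 := by
          rw [norm_smul, hen, mul_one, Real.norm_eq_abs, abs_of_nonneg hτ.1]
          exact add_lt_add_of_lt_of_le hyb hτ.2
      _ ≤ r := by linarith
  have hderiv : ∀ {F : EE (k + 1) → ℝ} {τ : ℝ}, DifferentiableAt ℝ F (y - τ • e) →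
      HasDerivAt (fun τ : ℝ => F (y - τ • e)) (-(fderiv ℝ F (y - τ • e) e)) τ := by
    intro F τ hF
    have hline : HasDerivAt (fun τ : ℝ => y - τ • e) (-e) τ := by
      simpa using ((hasDerivAt_id τ).smul_const e).const_sub y
    have h5 := hF.hasFDerivAt.comp_hasDerivAt τ hline
    rw [map_neg] at h5
    exact h5
  have hUd : ∀ τ ∈ Icc 0 (r / 2), DifferentiableAt ℝ U (y - τ • e) := fun τ hτ =>
    h.diffAt (hVW (hball _ (hseg τ hτ)).2.2.2)
  have hGd : ∀ τ ∈ Icc 0 (r / 2), DifferentiableAt ℝ G (y - τ • e) := fun τ hτ =>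
    (hball _ (hseg τ hτ)).2.2.1
  have hUcont : ContinuousOn (fun τ : ℝ => U (y - τ • e)) (Icc 0 (r / 2)) := fun τ hτ =>
    (hderiv (hUd τ hτ)).continuousAt.continuousWithinAt
  have hanti : AntitoneOn (fun τ : ℝ => U (y - τ • e) + τ / 2) (Icc 0 (r / 2)) := by
    refine antitoneOn_of_deriv_nonpos (convex_Icc _ _) (hUcont.add (by fun_prop)) ?_ ?_
    · intro τ hτ
      have hτ' := interior_subset hτ
      exact ((hderiv (hUd τ hτ')).add ((hasDerivAt_id τ).div_const 2)).differentiableAt.differentiableWithinAt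
    · intro τ hτ
      have hτ' := interior_subset hτ
      rw [show deriv (fun τ => U (y - τ • e) + τ / 2) τ = _ from
        ((hderiv (hUd τ hτ')).add ((hasDerivAt_id τ).div_const 2)).deriv]
      linarith [(hball _ (hseg τ hτ')).2.1]
  have hend : U (y - (r / 2) • e) ≤ 0 := by
    have := hanti (left_mem_Icc.2 (by positivity)) (right_mem_Icc.2 (by positivity))
      (by positivity : (0 : ℝ) ≤ r / 2)
    simp only [zero_smul, sub_zero, zero_div, add_zero] at this
    linarith
  have hstart : 0 ≤ U (y - (0 : ℝ) • e) := by
    rw [zero_smul, sub_zero, h.eqU y (subset_closure hyΩ)]; exact h.u_nonneg y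
  obtain ⟨τ0, hτ0, hτ00⟩ := intermediate_value_Icc' (by positivity : (0 : ℝ) ≤ r / 2) hUcont ⟨hend, hstart⟩
  have hfb : y - τ0 • e ∈ freeBoundary u := (hV2 _ (hball _ (hseg τ0 hτ0)).2.2.2).2 hτ00
  have hGm : MonotoneOn (fun τ : ℝ => G (y - τ • e)) (Icc 0 (r / 2)) := by
    refine monotoneOn_of_deriv_nonneg (convex_Icc _ _) ?_ ?_ ?_
    · exact fun τ hτ => (hderiv (hGd τ hτ)).continuousAt.continuousWithinAt
    · intro τ hτ
      exact (hderiv (hGd τ (interior_subset hτ))).differentiableAt.differentiableWithinAt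
    · intro τ hτ
      have hτ' := interior_subset hτ
      rw [(hderiv (hGd τ hτ')).deriv]
      linarith [(hball _ (hseg τ hτ')).1]
  have := hGm (left_mem_Icc.2 (by positivity)) hτ0 hτ0.1
  simp only [zero_smul, sub_zero] at this
  rwa [hG0 _ hfb] at this

theorem ConeData.q_limit (h : ConeData u U W) {x : EE (k + 1)} (hx : x ∈ freeBoundary u) :
    Tendsto (fun y => (1 - ‖gradient u y‖ ^ 2) / u y) (𝓝[{x | 0 < u x}] x)
      (𝓝 (2 * meanCurv U x)) := by
  have hxW := h.fb_subW hx
  have hgradeq : ∀ y ∈ {x | 0 < u x}, gradient u y = gradient U y := by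
    intro y hy
    have : u =ᶠ[𝓝 y] U := by
      filter_upwards [h.isOpenPos.mem_nhds hy] with z hz
      exact (h.eqU z (subset_closure hz)).symm
    unfold gradient
    rw [this.fderiv_eq]
  let q : EE (k + 1) → ℝ := fun y => 1 - ‖gradient U y‖ ^ 2
  have hgC : ContDiffAt ℝ (⊤ : ℕ∞) (gradient U) x := h.gradSmooth.contDiffAt (h.isOpenW.mem_nhds hxW)
  have hqC : ContDiffAt ℝ 1 q x := contDiffAt_const.sub ((hgC.of_le (by simp)).norm_sq ℝ)
  have hUC : ContDiffAt ℝ 1 U x := (h.contDiffAt hxW).of_le (by simp)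
  have hq0 : ∀ y ∈ freeBoundary u, q y = 0 := fun y hy => by
    simp only [q, h.grad1 y hy]; norm_num
  have hqd : fderiv ℝ q x (gradient U x) = 2 * meanCurv U x := by
    have h1 := ((h.gradDiffAt hxW).hasFDerivAt.norm_sq).const_sub 1
    rw [show fderiv ℝ q x = _ from h1.fderiv, h.meanCurv_eq hxW]
    simp
  have hUd : fderiv ℝ U x (gradient U x) = 1 := by
    rw [← grad_inner, real_inner_self_eq_norm_sq, h.grad1 x hx]; norm_num
  have key : ∀ α β : ℝ, α * (2 * meanCurv U x) + β < 0 →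
      ∀ᶠ y in 𝓝[{x | 0 < u x}] x, α * q y + β * U y ≤ 0 := by
    intro α β hαβ
    refine h.line_sign hx (G := fun y => α * q y + β * U y)
      ((contDiffAt_const.mul hqC).add (contDiffAt_const.mul hUC)) ?_ ?_
    · intro y hy; simp only [hq0 y hy, h.fb_U hy]; ring
    · have h1 := ((hqC.differentiableAt (by simp)).hasFDerivAt.const_mul α).add
        ((hUC.differentiableAt (by simp)).hasFDerivAt.const_mul β)
      rw [show fderiv ℝ (fun y => α * q y + β * U y) x = _ from h1.fderiv]
      simp only [add_apply, smul_apply, smul_eq_mul, hqd, hUd]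
      linarith
  have hqu : ∀ y ∈ {x | 0 < u x}, (1 - ‖gradient u y‖ ^ 2) / u y = q y / U y := by
    intro y hy
    rw [hgradeq y hy, h.eqU y (subset_closure hy)]
  have hUpos : ∀ y ∈ {x | 0 < u x}, 0 < U y := fun y hy => by
    rw [h.eqU y (subset_closure hy)]; exact hy
  rw [tendsto_order]
  constructor
  · intro m hm
    have := key (-1) ((m + 2 * meanCurv U x) / 2) (by linarith)
    filter_upwards [this, self_mem_nhdsWithin] with y h1 h2
    rw [hqu y h2, lt_div_iff₀ (hUpos y h2)]
    nlinarith [hUpos y h2]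
  · intro m hm
    have := key 1 (-(m + 2 * meanCurv U x) / 2) (by linarith)
    filter_upwards [this, self_mem_nhdsWithin] with y h1 h2
    rw [hqu y h2, div_lt_iff₀ (hUpos y h2)]
    nlinarith [hUpos y h2]

theorem ConeData.dNu_eq (h : ConeData u U W) {A : Set (EE (k + 1))} (hA : IsOpen A)
    {v : EE (k + 1) → ℝ}
    (hv : ContDiffOn ℝ 1 v (({x | 0 < u x} ∩ A) ∪ (freeBoundary u ∩ A)))
    {x : EE (k + 1)} (hx : x ∈ freeBoundary u ∩ A) :
    dNu U v x = -(fderivWithin ℝ v (({x | 0 < u x} ∩ A) ∪ (freeBoundary u ∩ A)) x (gradient U x)) := by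
  set S := (({x | 0 < u x} ∩ A) ∪ (freeBoundary u ∩ A)) with hS
  have hxS : x ∈ S := Or.inr hx
  have hd : HasFDerivWithinAt v (fderivWithin ℝ v S x) S x :=
    ((hv x hxS).differentiableWithinAt (by simp)).hasFDerivWithinAt
  unfold dNu nuVec
  have hpos : 0 < ⟪gradient U x, gradient U x⟫ := by
    rw [real_inner_self_eq_norm_sq, h.grad1 x hx.1]; norm_num
  have hev3 : ∀ᶠ t in 𝓝[>] (0 : ℝ), x + t • gradient U x ∈ A := by
    have : Continuous (fun t : ℝ => x + t • gradient U x) := by fun_prop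
    have := this.tendsto 0
    simp only [zero_smul, add_zero] at this
    exact (this.eventually (hA.mem_nhds hx.2)).filter_mono nhdsWithin_le_nhds
  obtain ⟨δ, hδ, hδS⟩ := (mem_nhdsGT_iff_exists_Ioo_subset).1 ((h.inward hx.1 hpos).and hev3)
  have hδ' : (0 : ℝ) < δ := hδ
  have hmap : MapsTo (fun t : ℝ => x + t • -gradient U x) (Ioc (-δ) 0) S := by
    intro t ht
    rcases eq_or_lt_of_le ht.2 with h0 | h0
    · subst h0; simpa using hxS
    · have := hδS (show -t ∈ Ioo 0 δ from ⟨by linarith, by linarith [ht.1]⟩)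
      have h2 : x + t • -gradient U x = x + (-t) • gradient U x := by simp
      simp only [h2]
      exact Or.inl this
  have hline : HasDerivWithinAt (fun t : ℝ => x + t • -gradient U x) (-gradient U x) (Ioc (-δ) 0) 0 := by
    simpa using (((hasDerivAt_id (0 : ℝ)).smul_const (-gradient U x)).const_add x).hasDerivWithinAt
  have hd0 : HasFDerivWithinAt v (fderivWithin ℝ v S x) S (x + (0 : ℝ) • -gradient U x) := by
    simpa using hd
  have hc := hd0.comp_hasDerivWithinAt (0 : ℝ) hline hmap
  have hc2 : HasDerivWithinAt (v ∘ fun t : ℝ => x + t • -gradient U x)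
      ((fderivWithin ℝ v S x) (-gradient U x)) (Iic 0) 0 :=
    hc.mono_of_mem_nhdsWithin (Ioc_mem_nhdsLE (by linarith))
  have := hc2.derivWithin (uniqueDiffWithinAt_Iic 0)
  rw [map_neg] at this
  exact this
end

end

section
open MeasureTheory Metric Set
open scoped RealInnerProductSpace
open Filter Topology
open scoped ENNReal NNReal

theorem integrable_of_cont_zero {n : ℕ} {F : Type*} [NormedAddCommGroup F] {C O : Set (EE n)}
    (hC : IsCompact C) (hCO : C ⊆ O)
    {f : EE n → F} (hf : ContinuousOn f O) (h0 : ∀ x ∉ C, f x = 0) : Integrable f := by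
  have h1 : IntegrableOn f C := (hf.mono hCO).integrableOn_compact hC
  refine (integrableOn_iff_integrable_of_support_subset ?_).1 h1
  intro x hx
  by_contra hxC
  exact hx (h0 x hxC)

theorem fderiv_grad_sum {n : ℕ} (ψ w : EE n → ℝ) (x : EE n) :
    fderiv ℝ ψ x (gradient w x) =
      ∑ i, fderiv ℝ w x (EuclideanSpace.single i 1) * fderiv ℝ ψ x (EuclideanSpace.single i 1) := by
  have h1 : gradient w x = ∑ i, fderiv ℝ w x (EuclideanSpace.single i 1) •
      (EuclideanSpace.single i 1 : EE n) := by
    have h2 := (EuclideanSpace.basisFun (Fin n) ℝ).sum_repr (gradient w x)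
    conv_lhs => rw [← h2]
    refine Finset.sum_congr rfl fun i _ => ?_
    rw [EuclideanSpace.basisFun_apply, ← grad_inner, EuclideanSpace.inner_single_right]
    congr 1
    simp only [EuclideanSpace.basisFun_repr]
    simp only [map_one, one_mul, conj_trivial]
  conv_lhs => rw [h1]
  simp

theorem ibp {n : ℕ} {O C : Set (EE n)} (hO : IsOpen O) (hC : IsCompact C) (hCO : C ⊆ O)
    {w ψ : EE n → ℝ} (hw : ContDiffOn ℝ 2 w O) (hψ : ContDiffOn ℝ 1 ψ O)
    (h0 : ∀ x ∉ C, ψ x = 0) :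
    Integrable (fun x => fderiv ℝ ψ x (gradient w x)) ∧ Integrable (fun x => lap w x * ψ x) ∧
    ∫ x, fderiv ℝ ψ x (gradient w x) = - ∫ x, lap w x * ψ x := by
  have hDw : ContDiffOn ℝ 1 (fderiv ℝ w) O := hw.fderiv_of_isOpen hO (by norm_num)
  have hDψ : ContinuousOn (fderiv ℝ ψ) O := hψ.continuousOn_fderiv_of_isOpen hO (by norm_num)
  let f : Fin n → EE n → ℝ := fun i x => fderiv ℝ w x (EuclideanSpace.single i 1)
  have hfC : ∀ i, ContDiffOn ℝ 1 (f i) O := fun i => hDw.clm_apply contDiffOn_const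
  have hDf : ∀ i, ContinuousOn (fderiv ℝ (f i)) O := fun i =>
    (hfC i).continuousOn_fderiv_of_isOpen hO (by norm_num)
  have hψ0 : ∀ x ∉ C, ψ =ᶠ[𝓝 x] fun _ => 0 := fun x hx => by
    filter_upwards [hC.isClosed.isOpen_compl.mem_nhds hx] with y hy using h0 y hy
  have hDψ0 : ∀ x ∉ C, fderiv ℝ ψ x = 0 := fun x hx => by
    rw [(hψ0 x hx).fderiv_eq]; simp
  have hts : tsupport ψ ⊆ C := by
    refine closure_minimal ?_ hC.isClosed
    intro x hx
    by_contra hxC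
    exact hx (h0 x hxC)
  have hψd : ∀ x, DifferentiableAt ℝ ψ x := by
    intro x
    by_cases hx : x ∈ C
    · exact ((hψ.contDiffAt (hO.mem_nhds (hCO hx))).differentiableAt (by norm_num))
    · exact (hψ0 x hx).symm.differentiableAt_iff.1 (differentiableAt_const 0)
  have i1 : ∀ i, Integrable (fun x => fderiv ℝ (f i) x (EuclideanSpace.single i 1) * ψ x) := by
    intro i
    refine integrable_of_cont_zero hC hCO (((hDf i).clm_apply continuousOn_const).mul
      hψ.continuousOn) ?_
    intro x hx; rw [h0 x hx, mul_zero]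
  have i2 : ∀ i, Integrable (fun x => f i x * fderiv ℝ ψ x (EuclideanSpace.single i 1)) := by
    intro i
    refine integrable_of_cont_zero hC hCO ((hfC i).continuousOn.mul
      (hDψ.clm_apply continuousOn_const)) ?_
    intro x hx; rw [hDψ0 x hx]; simp
  have i3 : ∀ i, Integrable (fun x => f i x * ψ x) := by
    intro i
    refine integrable_of_cont_zero hC hCO ((hfC i).continuousOn.mul hψ.continuousOn) ?_
    intro x hx; rw [h0 x hx, mul_zero]
  have e1 : (fun x => fderiv ℝ ψ x (gradient w x)) =
      fun x => ∑ i, f i x * fderiv ℝ ψ x (EuclideanSpace.single i 1) := by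
    ext x; exact fderiv_grad_sum ψ w x
  have e2 : (fun x => lap w x * ψ x) =
      fun x => ∑ i, fderiv ℝ (f i) x (EuclideanSpace.single i 1) * ψ x := by
    ext x; unfold lap; rw [Finset.sum_mul]
  rw [e1, e2]
  refine ⟨integrable_finsetSum _ fun i _ => i2 i, integrable_finsetSum _ fun i _ => i1 i, ?_⟩
  rw [integral_finsetSum _ fun i _ => i2 i, integral_finsetSum _ fun i _ => i1 i,
    ← Finset.sum_neg_distrib]
  refine Finset.sum_congr rfl fun i _ => ?_
  refine integral_mul_fderiv_eq_neg_fderiv_mul_of_integrable (i1 i) (i2 i) (i3 i) ?_ ?_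
  · intro x hx
    exact ((hfC i).contDiffAt (hO.mem_nhds (hCO (hts hx)))).differentiableAt (by norm_num)
  · intro x _; exact hψd x

/-- The truncation. -/
def chi (ε t : ℝ) : ℝ := (max (t - ε) 0 ^ 2 - max (t - 2 * ε) 0 ^ 2) / (2 * ε)

/-- Derivative of the truncation. -/
def chi' (ε t : ℝ) : ℝ := (max (t - ε) 0 - max (t - 2 * ε) 0) / ε

theorem hasDerivAt_maxsq (a t : ℝ) :
    HasDerivAt (fun t : ℝ => max (t - a) 0 ^ 2) (2 * max (t - a) 0) t := by
  have hsq : HasDerivAt (fun t : ℝ => (t - a) ^ 2) (2 * (t - a)) t := by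
    simpa using ((hasDerivAt_id t).sub_const a).fun_pow 2
  rcases lt_trichotomy t a with h | h | h
  · rw [max_eq_right (by linarith), mul_zero]
    refine (hasDerivAt_const t (0 : ℝ)).congr_of_eventuallyEq ?_
    filter_upwards [gt_mem_nhds h] with s hs
    rw [max_eq_right (by linarith)]; norm_num
  · subst h
    rw [sub_self, max_self, mul_zero]
    rw [hasDerivAt_iff_isLittleO]
    have h1 : (fun x' : ℝ => max (x' - t) 0 ^ 2 - max (t - t) 0 ^ 2 - (x' - t) • (0 : ℝ)) =O[𝓝 t]
        (fun x' => (x' - t) ^ 2) := by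
      refine Asymptotics.IsBigO.of_bound 1 (Eventually.of_forall fun x' => ?_)
      simp only [sub_self, max_self, smul_zero, sub_zero, one_mul]
      norm_num
      rcases max_cases (x' - t) 0 with h | h <;> rw [h.1]
      norm_num; positivity
    refine h1.trans_isLittleO ?_
    have h2 : (fun x' : ℝ => (x' - t) ^ 2) = fun x' => (x' - t) * (x' - t) := by ext; ring
    rw [h2]
    have h3 : (fun x' : ℝ => x' - t) =o[𝓝 t] (fun _ => (1 : ℝ)) := by
      rw [Asymptotics.isLittleO_one_iff]
      have : Continuous (fun x' : ℝ => x' - t) := by fun_prop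
      simpa using this.tendsto t
    simpa using h3.mul_isBigO (Asymptotics.isBigO_refl (fun x' : ℝ => x' - t) (𝓝 t))
  · rw [max_eq_left (by linarith)]
    refine hsq.congr_of_eventuallyEq ?_
    filter_upwards [lt_mem_nhds h] with s hs
    rw [max_eq_left (by linarith)]

theorem hasDerivAt_chi {ε : ℝ} (hε : 0 < ε) (t : ℝ) : HasDerivAt (chi ε) (chi' ε t) t := by
  have := ((hasDerivAt_maxsq ε t).sub (hasDerivAt_maxsq (2 * ε) t)).div_const (2 * ε)
  have e : chi' ε t = (2 * max (t - ε) 0 - 2 * max (t - 2 * ε) 0) / (2 * ε) := by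
    unfold chi'; field_simp
  rw [e]; exact this

theorem chi'_continuous (ε : ℝ) : Continuous (chi' ε) := by
  unfold chi'; fun_prop

theorem contDiff_chi {ε : ℝ} (hε : 0 < ε) : ContDiff ℝ 1 (chi ε) := by
  rw [contDiff_one_iff_deriv]
  refine ⟨fun t => (hasDerivAt_chi hε t).differentiableAt, ?_⟩
  rw [show deriv (chi ε) = chi' ε from funext fun t => (hasDerivAt_chi hε t).deriv]
  exact chi'_continuous ε

theorem chi_zero {ε t : ℝ} (hε : 0 < ε) (ht : t ≤ ε) : chi ε t = 0 := by
  unfold chi; rw [max_eq_right (by linarith), max_eq_right (by linarith)]; simp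

theorem chi'_zero {ε t : ℝ} (hε : 0 < ε) (ht : t ≤ ε) : chi' ε t = 0 := by
  unfold chi'; rw [max_eq_right (by linarith), max_eq_right (by linarith)]; simp

theorem chi'_one {ε t : ℝ} (hε : 0 < ε) (ht : 2 * ε ≤ t) : chi' ε t = 1 := by
  unfold chi'; rw [max_eq_left (by linarith), max_eq_left (by linarith)]; field_simp; ring

theorem chi'_nonneg {ε : ℝ} (hε : 0 < ε) (t : ℝ) : 0 ≤ chi' ε t := by
  unfold chi'
  refine div_nonneg (sub_nonneg.2 (max_le_max (by linarith) le_rfl)) hε.le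

theorem chi'_le_one {ε : ℝ} (hε : 0 < ε) (t : ℝ) : chi' ε t ≤ 1 := by
  unfold chi'
  rw [div_le_one hε]
  rcases max_cases (t - ε) 0 with h | h <;> rcases max_cases (t - 2 * ε) 0 with h' | h' <;>
    rw [h.1, h'.1] <;> linarith

theorem chi_nonneg {ε : ℝ} (hε : 0 < ε) (t : ℝ) : 0 ≤ chi ε t := by
  unfold chi
  refine div_nonneg (sub_nonneg.2 ?_) (by linarith)
  exact pow_le_pow_left₀ (le_max_right _ _) (max_le_max (by linarith) le_rfl) 2

theorem chi_le {ε t : ℝ} (hε : 0 < ε) (ht : 0 ≤ t) : chi ε t ≤ t := by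
  unfold chi
  rw [div_le_iff₀ (by linarith)]
  rcases max_cases (t - ε) 0 with h | h <;> rcases max_cases (t - 2 * ε) 0 with h' | h' <;>
    rw [h.1, h'.1] <;> nlinarith

theorem le_chi {ε : ℝ} (hε : 0 < ε) (t : ℝ) : t - 2 * ε ≤ chi ε t := by
  unfold chi
  rw [le_div_iff₀ (by linarith)]
  rcases max_cases (t - ε) 0 with h | h <;> rcases max_cases (t - 2 * ε) 0 with h' | h' <;>
    rw [h.1, h'.1] <;> nlinarith

end

section
open MeasureTheory Metric Set
open scoped RealInnerProductSpace
open Filter Topology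
open scoped ENNReal NNReal

theorem ConeData.lipGlobal {n : ℕ} {u U : EE n → ℝ} {W : Set (EE n)} (h : ConeData u U W) :
    ∃ K : ℝ≥0, LipschitzWith K u := by
  obtain ⟨K, t, ht, hK⟩ := h.lip 0
  obtain ⟨δ, hδ, hδt⟩ := Metric.mem_nhds_iff.1 ht
  refine ⟨K, LipschitzWith.of_dist_le_mul fun x y => ?_⟩
  set r : ℝ := δ / (‖x‖ + ‖y‖ + 1) with hr
  have hpos : 0 < ‖x‖ + ‖y‖ + 1 := by positivity
  have hr0 : 0 < r := by positivity
  have hx : r • x ∈ t := hδt (by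
    rw [mem_ball_zero_iff, norm_smul, Real.norm_of_nonneg hr0.le, hr, div_mul_eq_mul_div,
      div_lt_iff₀ hpos]
    nlinarith [norm_nonneg x, norm_nonneg y])
  have hy : r • y ∈ t := hδt (by
    rw [mem_ball_zero_iff, norm_smul, Real.norm_of_nonneg hr0.le, hr, div_mul_eq_mul_div,
      div_lt_iff₀ hpos]
    nlinarith [norm_nonneg x, norm_nonneg y])
  have h1 := hK.dist_le_mul _ hx _ hy
  rw [h.hom r hr0, h.hom r hr0, Real.dist_eq, ← mul_sub, abs_mul, abs_of_pos hr0, dist_smul₀,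
    Real.norm_of_nonneg hr0.le] at h1
  rw [Real.dist_eq]
  have : r * |u x - u y| ≤ r * (K * dist x y) := by linarith
  exact le_of_mul_le_mul_left this hr0

/-- test functions -/
structure TF {n : ℕ} (u : EE n → ℝ) (φ : EE n → ℝ) (G : EE n → EE n) (C : Set (EE n)) : Prop where
  cpt : IsCompact C
  zero : (0 : EE n) ∉ C
  sub : C ⊆ {x | 0 < u x} ∪ freeBoundary u
  φ0 : ∀ x ∉ C, φ x = 0
  G0 : ∀ x ∉ C, G x = 0
  nonneg : ∀ x, 0 ≤ φ x
  deriv : ∀ x, 0 < u x → HasGradientAt φ (G x) x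
  contφ : ContinuousOn φ ({x | 0 < u x} ∪ freeBoundary u)
  contG : ContinuousOn G ({x | 0 < u x} ∪ freeBoundary u)

theorem meas_of_cont_zero {n : ℕ} {F : Type*} [NormedAddCommGroup F] [MeasurableSpace F] [BorelSpace F]
    {C : Set (EE n)} (hC : IsCompact C)
    {f : EE n → F} (hf : ContinuousOn f C) (h0 : ∀ x ∉ C, f x = 0) : Measurable f := by
  classical
  have h1 := ContinuousOn.measurable_piecewise (g := fun _ => (0 : F)) hf continuousOn_const
    hC.isClosed.measurableSet
  convert h1 using 1
  ext x
  by_cases hx : x ∈ C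
  · simp [hx]
  · simp [hx, h0 x hx]

theorem bdd_of_cont_zero {n : ℕ} {F : Type*} [NormedAddCommGroup F]
    {C : Set (EE n)} (hC : IsCompact C)
    {f : EE n → F} (hf : ContinuousOn f C) (h0 : ∀ x ∉ C, f x = 0) : ∃ M : ℝ≥0, ∀ x, ‖f x‖ ≤ M := by
  obtain ⟨M, hM⟩ := hC.exists_bound_of_continuousOn hf
  refine ⟨M.toNNReal, fun x => ?_⟩
  by_cases hx : x ∈ C
  · exact (hM x hx).trans (Real.le_coe_toNNReal M)
  · rw [h0 x hx, norm_zero]; positivity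

namespace TF
variable {n : ℕ} {u φ : EE n → ℝ} {G : EE n → EE n} {C : Set (EE n)}

theorem measG (t : TF u φ G C) : Measurable G := meas_of_cont_zero t.cpt (t.contG.mono t.sub) t.G0
theorem measφ (t : TF u φ G C) : Measurable φ := meas_of_cont_zero t.cpt (t.contφ.mono t.sub) t.φ0
theorem bddG (t : TF u φ G C) : ∃ M : ℝ≥0, ∀ x, ‖G x‖ ≤ M :=
  bdd_of_cont_zero t.cpt (t.contG.mono t.sub) t.G0
theorem bddφ (t : TF u φ G C) : ∃ M : ℝ≥0, ∀ x, ‖φ x‖ ≤ M :=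
  bdd_of_cont_zero t.cpt (t.contφ.mono t.sub) t.φ0

theorem hasFDeriv (t : TF u φ G C) {x : EE n} (hx : 0 < u x) :
    HasFDerivAt φ (InnerProductSpace.toDual ℝ (EE n) (G x)) x := t.deriv x hx

theorem c1 (t : TF u φ G C) (ho : IsOpen {x | 0 < u x}) : ContDiffOn ℝ 1 φ {x | 0 < u x} := by
  have h1 : ContDiffOn ℝ (0 + 1) φ {x | 0 < u x} := by
    rw [contDiffOn_succ_iff_fderiv_of_isOpen ho]
    refine ⟨fun x hx => (t.hasFDeriv hx).differentiableAt.differentiableWithinAt, by simp, ?_⟩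
    rw [contDiffOn_zero]
    refine ContinuousOn.congr (f := fun x => InnerProductSpace.toDual ℝ (EE n) (G x)) ?_
      (fun x hx => (t.hasFDeriv hx).fderiv)
    exact (InnerProductSpace.toDual ℝ (EE n)).continuous.comp_continuousOn
      (t.contG.mono subset_union_left)
  simpa using h1

theorem G_zero (t : TF u φ G C) {x : EE n} (hx : 0 < u x) (h0 : φ x = 0) : G x = 0 := by
  have h1 : IsLocalMin φ x := Eventually.of_forall fun y => by rw [h0]; exact t.nonneg y
  have := h1.hasFDerivAt_eq_zero (t.hasFDeriv hx)
  simpa using this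

end TF

theorem ConeData.u_smooth {n : ℕ} {u U : EE n → ℝ} {W : Set (EE n)} (h : ConeData u U W) :
    ContDiffOn ℝ (⊤ : ℕ∞) u {x | 0 < u x} :=
  (h.smooth.mono h.pos_subW).congr fun x hx => (h.eqU x (subset_closure hx)).symm

theorem ConeData.u_grad {n : ℕ} {u U : EE n → ℝ} {W : Set (EE n)} (h : ConeData u U W)
    {x : EE n} (hx : 0 < u x) : gradient u x = gradient U x := by
  have : u =ᶠ[𝓝 x] U := by
    filter_upwards [h.isOpenPos.mem_nhds hx] with z hz
    exact (h.eqU z (subset_closure hz)).symm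
  unfold gradient
  rw [this.fderiv_eq]

theorem norm_gradient {n : ℕ} (f : EE n → ℝ) (x : EE n) : ‖gradient f x‖ = ‖fderiv ℝ f x‖ := by
  unfold gradient; exact LinearIsometryEquiv.norm_map _ _

theorem grad_bdd {n : ℕ} {f : EE n → ℝ} {K : ℝ≥0} (hf : LipschitzWith K f) (x : EE n) :
    ‖gradient f x‖ ≤ K := by
  rw [norm_gradient]; exact norm_fderiv_le_of_lipschitz ℝ hf

theorem meas_gradient {n : ℕ} (f : EE n → ℝ) : Measurable (gradient f) :=
  (InnerProductSpace.toDual ℝ (EE n)).symm.continuous.measurable.comp (measurable_fderiv ℝ f)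

theorem J_identity {n : ℕ} {u U : EE n → ℝ} {W : Set (EE n)} (h : ConeData u U W)
    {φ : EE n → ℝ} {G : EE n → EE n} {C : Set (EE n)} (t : TF u φ G C) {s : ℝ} (hs : 0 < s) :
    ∫ x in {x | 0 < u x}, (if u x < s * φ x then ‖gradient u x‖ ^ 2 else s * ⟪G x, gradient u x⟫) = 0 := by
  classical
  obtain ⟨K, hK⟩ := h.lipGlobal
  obtain ⟨M, hM⟩ := t.bddG
  set Ω := {x | 0 < u x} with hΩ
  have hΩo : IsOpen Ω := h.isOpenPos
  let f : ℝ → EE n → ℝ := fun τ x => chi' (3 * τ) (s * φ x - chi τ (s * φ x - u x)) *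
    (s * ⟪G x, gradient u x⟫ - chi' τ (s * φ x - u x) * (s * ⟪G x, gradient u x⟫ - ‖gradient u x‖ ^ 2))
  have key : ∀ τ, 0 < τ → Integrable (Ω.indicator (f τ)) ∧ ∫ x, Ω.indicator (f τ) x = 0 := by
    intro τ hτ
    let m : EE n → ℝ := fun x => s * φ x - chi τ (s * φ x - u x)
    let ψ : EE n → ℝ := Ω.indicator (fun x => chi (3 * τ) (m x))
    have hC : IsCompact (C ∩ {x | τ ≤ u x}) :=
      t.cpt.inter_right (isClosed_le continuous_const h.lip.continuous)
    have hCΩ : C ∩ {x | τ ≤ u x} ⊆ Ω := fun x hx => lt_of_lt_of_le hτ hx.2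
    have hu2 : ContDiffOn ℝ 2 u Ω := h.u_smooth.of_le (WithTop.coe_le_coe.2 (le_top : (2 : ℕ∞) ≤ ⊤))
    have hu1 : ContDiffOn ℝ 1 u Ω := h.u_smooth.of_le (by simp)
    have hm1 : ContDiffOn ℝ 1 m Ω := by
      have h1 : ContDiffOn ℝ 1 (fun x => s * φ x) Ω := contDiffOn_const.mul (t.c1 hΩo)
      exact h1.sub ((contDiff_chi hτ).comp_contDiffOn (h1.sub hu1))
    have hψ1 : ContDiffOn ℝ 1 ψ Ω := by
      refine ((contDiff_chi (by positivity : 0 < 3 * τ)).comp_contDiffOn hm1).congr ?_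
      intro x hx
      simp [ψ, hx]
    have hψ0 : ∀ x ∉ C ∩ {x | τ ≤ u x}, ψ x = 0 := by
      intro x hx
      by_cases hxΩ : x ∈ Ω
      · simp only [ψ, indicator_of_mem hxΩ]
        refine chi_zero (by positivity) ?_
        simp only [m]
        by_cases hxC : x ∈ C
        · have : u x < τ := by
            by_contra h2; exact hx ⟨hxC, not_lt.1 h2⟩
          have := le_chi hτ (s * φ x - u x)
          linarith
        · rw [t.φ0 x hxC]
          have := chi_nonneg hτ (s * 0 - u x)
          linarith
      · simp [ψ, hxΩ]
    have hfd : (fun x => fderiv ℝ ψ x (gradient u x)) = Ω.indicator (f τ) := by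
      ext x
      by_cases hxΩ : x ∈ Ω
      · have e : ψ =ᶠ[𝓝 x] fun x => chi (3 * τ) (m x) := by
          filter_upwards [hΩo.mem_nhds hxΩ] with y hy
          simp [ψ, hy]
        have d1 : HasFDerivAt φ _ x := t.hasFDeriv hxΩ
        have d2 : HasFDerivAt u (fderiv ℝ u x) x :=
          ((hu1.contDiffAt (hΩo.mem_nhds hxΩ)).differentiableAt (by norm_num)).hasFDerivAt
        have d3 := d1.const_mul s
        have d4 := (hasDerivAt_chi hτ (s * φ x - u x)).comp_hasFDerivAt x (d3.sub d2)
        have d5 := (hasDerivAt_chi (by positivity : 0 < 3 * τ) (m x)).comp_hasFDerivAt x (d3.sub d4)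
        rw [e.fderiv_eq, show fderiv ℝ (fun x => chi (3 * τ) (m x)) x = _ from d5.fderiv,
          indicator_of_mem hxΩ]
        simp only [smul_apply, sub_apply,
          InnerProductSpace.toDual_apply_apply, smul_eq_mul, ← grad_inner, f, m,
          real_inner_self_eq_norm_sq]
      · rw [indicator_of_notMem hxΩ]
        have : ψ =ᶠ[𝓝 x] fun _ => 0 := by
          filter_upwards [hC.isClosed.isOpen_compl.mem_nhds (fun hx => hxΩ (hCΩ hx))] with y hy
            using hψ0 y hy
        rw [this.fderiv_eq]; simp
    obtain ⟨i1, i2, i3⟩ := ibp hΩo hC hCΩ hu2 hψ1 hψ0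
    have hz : (fun x => lap u x * ψ x) = fun _ => 0 := by
      ext x
      by_cases hxΩ : x ∈ Ω
      · rw [h.harm x hxΩ, zero_mul]
      · simp [ψ, hxΩ]
    rw [hfd] at i1
    refine ⟨i1, ?_⟩
    rw [← hfd, i3, hz]; simp
  rw [← integral_indicator hΩo.measurableSet]
  set L : EE n → ℝ := Ω.indicator
    (fun x => if u x < s * φ x then ‖gradient u x‖ ^ 2 else s * ⟪G x, gradient u x⟫) with hL
  have hbd : ∀ x, ‖⟪G x, gradient u x⟫‖ ≤ M * K := fun x =>
    (norm_inner_le_norm _ _).trans (mul_le_mul (hM x) (grad_bdd hK x) (norm_nonneg _) M.2)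
  have hlim : Tendsto (fun τ => ∫ x, Ω.indicator (f τ) x) (𝓝[>] 0) (𝓝 (∫ x, L x)) := by
    refine tendsto_integral_filter_of_dominated_convergence
      (C.indicator fun _ => 2 * (s * (M * K)) + K ^ 2) ?_ ?_ ?_ ?_
    · filter_upwards [self_mem_nhdsWithin] with τ hτ using (key τ hτ).1.aestronglyMeasurable
    · filter_upwards [self_mem_nhdsWithin] with τ hτ
      refine Eventually.of_forall fun x => ?_
      by_cases hxΩ : x ∈ Ω
      · rw [indicator_of_mem hxΩ]
        have a1 := chi'_nonneg (by have : 0 < τ := hτ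
                                   positivity : 0 < 3 * τ) (s * φ x - chi τ (s * φ x - u x))
        have a2 := chi'_le_one (by have : 0 < τ := hτ
                                   positivity : 0 < 3 * τ) (s * φ x - chi τ (s * φ x - u x))
        have a3 := chi'_nonneg hτ (s * φ x - u x)
        have a4 := chi'_le_one hτ (s * φ x - u x)
        by_cases hxC : x ∈ C
        · rw [indicator_of_mem hxC]
          have a5 := hbd x
          have a6 : ‖gradient u x‖ ^ 2 ≤ K ^ 2 :=
            pow_le_pow_left₀ (norm_nonneg _) (grad_bdd hK x) 2
          rw [Real.norm_eq_abs] at a5 ⊢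
          simp only [f]
          have a8 : |s * ⟪G x, gradient u x⟫| ≤ s * (M * K) := by
            rw [abs_mul, abs_of_pos hs]; exact mul_le_mul_of_nonneg_left a5 hs.le
          have a7 : |s * ⟪G x, gradient u x⟫ - chi' τ (s * φ x - u x) *
              (s * ⟪G x, gradient u x⟫ - ‖gradient u x‖ ^ 2)| ≤ 2 * (s * (M * K)) + K ^ 2 := by
            have b1 : |chi' τ (s * φ x - u x) *
              (s * ⟪G x, gradient u x⟫ - ‖gradient u x‖ ^ 2)| ≤ s * (M * K) + K ^ 2 := by
              rw [abs_mul, abs_of_nonneg a3]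
              have b2 : |s * ⟪G x, gradient u x⟫ - ‖gradient u x‖ ^ 2| ≤ s * (M * K) + K ^ 2 := by
                refine (abs_sub _ _).trans ?_
                rw [abs_of_nonneg (sq_nonneg ‖gradient u x‖)]
                linarith
              calc _ ≤ 1 * |s * ⟪G x, gradient u x⟫ - ‖gradient u x‖ ^ 2| :=
                    mul_le_mul_of_nonneg_right a4 (abs_nonneg _)
                _ ≤ _ := by rw [one_mul]; exact b2
            refine (abs_sub _ _).trans ?_
            linarith
          rw [abs_mul, abs_of_nonneg a1]
          calc _ ≤ 1 * _ := mul_le_mul_of_nonneg_right a2 (abs_nonneg _)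
            _ ≤ _ := by rw [one_mul]; exact a7
        · rw [indicator_of_notMem hxC]
          simp only [f]
          have : chi' τ (s * φ x - u x) = 0 := by
            refine chi'_zero hτ ?_
            rw [t.φ0 x hxC]
            have : 0 < u x := hxΩ
            have : 0 < τ := hτ
            linarith
          rw [this, t.G0 x hxC]; simp
      · rw [indicator_of_notMem hxΩ, norm_zero]
        exact indicator_nonneg (fun _ _ => by positivity) _
    · rw [integrable_indicator_iff t.cpt.isClosed.measurableSet]
      exact integrableOn_const t.cpt.measure_lt_top.ne
    · refine Eventually.of_forall fun x => ?_
      by_cases hxΩ : x ∈ Ω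
      · simp only [hL, indicator_of_mem hxΩ]
        have hux : 0 < u x := hxΩ
        split_ifs with hc
        · refine tendsto_const_nhds.congr' ?_
          have hd : 0 < (s * φ x - u x) / 2 := by linarith
          filter_upwards [self_mem_nhdsWithin, Ioo_mem_nhdsGT hd,
            Ioo_mem_nhdsGT (by positivity : 0 < u x / 6)] with τ hτ h1 h2
          simp only [f]
          have := chi_le hτ (by linarith : 0 ≤ s * φ x - u x)
          rw [chi'_one hτ (by linarith [h1.2]), chi'_one (by have : 0 < τ := hτ
                                                             positivity) (by linarith [h2.2])]
          ring
        · rcases (t.nonneg x).eq_or_lt with h0 | h0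
          · rw [t.G_zero hxΩ h0.symm]
            refine tendsto_const_nhds.congr' ?_
            filter_upwards [self_mem_nhdsWithin] with τ hτ
            simp only [f]
            have hτ' : 0 < τ := hτ
            rw [t.G_zero hxΩ h0.symm, chi'_zero hτ (t := s * φ x - u x) (by linarith)]
            simp
          · refine tendsto_const_nhds.congr' ?_
            filter_upwards [self_mem_nhdsWithin,
              Ioo_mem_nhdsGT (by positivity : 0 < s * φ x / 6)] with τ hτ h2
            simp only [f]
            have hτ' : 0 < τ := hτ
            rw [chi'_zero hτ (t := s * φ x - u x) (by linarith),
              chi_zero hτ (t := s * φ x - u x) (by linarith),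
              chi'_one (by positivity) (by linarith [h2.2])]
            ring
      · simp only [hL, indicator_of_notMem hxΩ]; exact tendsto_const_nhds
  have hlim0 : Tendsto (fun τ => ∫ x, Ω.indicator (f τ) x) (𝓝[>] 0) (𝓝 0) := by
    refine tendsto_const_nhds.congr' ?_
    filter_upwards [self_mem_nhdsWithin] with τ hτ using (key τ hτ).2.symm
  exact tendsto_nhds_unique hlim hlim0

end

section
open MeasureTheory Metric Set
open scoped RealInnerProductSpace
open Filter Topology
open scoped ENNReal NNReal

theorem w_lip {n : ℕ} {u U : EE n → ℝ} {W : Set (EE n)} (h : ConeData u U W)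
    {φ : EE n → ℝ} {G : EE n → EE n} {C : Set (EE n)} (t : TF u φ G C) {s : ℝ} (hs : 0 < s) :
    ∃ K : ℝ≥0, LipschitzWith K (fun x => max (u x - s * φ x) 0) := by
  obtain ⟨K, hK⟩ := h.lipGlobal
  obtain ⟨M, hM⟩ := t.bddG
  refine ⟨K + s.toNNReal * M, LipschitzWith.of_dist_le_mul fun x y => ?_⟩
  have hsM : ((K + s.toNNReal * M : ℝ≥0) : ℝ) = K + s * M := by
    push_cast; rw [Real.coe_toNNReal s hs.le]
  rw [hsM]
  by_cases hseg : ∀ z ∈ segment ℝ x y, 0 < u z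
  · have h1 : ‖(u y - s * φ y) - (u x - s * φ x)‖ ≤ (K + s * M) * ‖y - x‖ := by
      refine (convex_segment x y).norm_image_sub_le_of_norm_hasFDerivWithin_le (𝕜 := ℝ)
        (f := fun z => u z - s * φ z)
        (f' := fun z => fderiv ℝ u z - s • InnerProductSpace.toDual ℝ (EE n) (G z)) ?_ ?_
        (left_mem_segment ℝ x y) (right_mem_segment ℝ x y)
      · intro z hz
        have d1 := t.hasFDeriv (hseg z hz)
        have d2 : HasFDerivAt u (fderiv ℝ u z) z :=
          ((h.u_smooth.contDiffAt (h.isOpenPos.mem_nhds (hseg z hz))).differentiableAt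
            (by simp)).hasFDerivAt
        exact (d2.sub (d1.const_mul s)).hasFDerivWithinAt
      · intro z hz
        refine (norm_sub_le _ _).trans (add_le_add (norm_fderiv_le_of_lipschitz ℝ hK) ?_)
        rw [norm_smul, Real.norm_of_nonneg hs.le, LinearIsometryEquiv.norm_map]
        exact mul_le_mul_of_nonneg_left (hM z) hs.le
    rw [dist_eq_norm, dist_eq_norm, norm_sub_rev x y]
    rw [norm_sub_rev]
    refine le_trans ?_ h1
    rw [Real.norm_eq_abs, Real.norm_eq_abs]
    exact abs_max_sub_max_le_abs _ _ _
  · push Not at hseg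
    obtain ⟨z, hz, hz0⟩ := hseg
    have hz0' : u z = 0 := le_antisymm hz0 (h.u_nonneg z)
    have hd := dist_add_dist_of_mem_segment hz
    have hux : u x ≤ K * dist x z := by
      have := hK.dist_le_mul x z
      rw [hz0', Real.dist_eq, sub_zero] at this
      exact (le_abs_self _).trans this
    have huy : u y ≤ K * dist z y := by
      have := hK.dist_le_mul y z
      rw [hz0', Real.dist_eq, sub_zero, dist_comm] at this
      exact (le_abs_self _).trans this
    have w1 : max (u x - s * φ x) 0 ≤ u x := max_le
      (by have := mul_nonneg hs.le (t.nonneg x); linarith) (h.u_nonneg x)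
    have w2 : max (u y - s * φ y) 0 ≤ u y := max_le
      (by have := mul_nonneg hs.le (t.nonneg y); linarith) (h.u_nonneg y)
    have w3 : 0 ≤ max (u x - s * φ x) 0 := le_max_right _ _
    have w4 : 0 ≤ max (u y - s * φ y) 0 := le_max_right _ _
    have e1 : (K : ℝ) * dist x z + K * dist z y = K * dist x y := by rw [← hd]; ring
    have e2 : 0 ≤ (K : ℝ) * dist x z := by positivity
    have e3 : 0 ≤ (K : ℝ) * dist z y := by positivity
    have e4 : 0 ≤ s * M * dist x y := by positivity
    rw [Real.dist_eq, abs_le]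
    constructor <;> nlinarith

theorem hphi_limit {k : ℕ} {u U : EE (k + 1) → ℝ} {W : Set (EE (k + 1))} (h : ConeData u U W)
    {c : ℝ≥0∞} (hc0 : c ≠ 0) (hc : (volume : Measure (EE k)) = c • μH[(k : ℝ)])
    {φ : EE (k + 1) → ℝ} {G : EE (k + 1) → EE (k + 1)} {C : Set (EE (k + 1))} (t : TF u φ G C) :
    Tendsto (fun s => s⁻¹ * (s⁻¹ * ∫ x in {x | 0 < u x},
        (if u x < s * φ x then 1 - ‖gradient u x‖ ^ 2 else 0))) (𝓝[>] 0)
      (𝓝 (c.toReal * ∫ x in freeBoundary u, meanCurv U x * φ x ^ 2 ∂μH[(k : ℝ)])) ∧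
    ∀ s, 0 < s → Integrable (fun x => (if u x < s * φ x then 1 - ‖gradient u x‖ ^ 2 else 0))
      (volume.restrict {x | 0 < u x}) := by
  classical
  let g0 : EE (k + 1) → ℝ := fun x => if 0 < u x then (1 - ‖gradient u x‖ ^ 2) / u x
    else 2 * meanCurv U x
  have hg0Ω : ContinuousOn (fun x => (1 - ‖gradient u x‖ ^ 2) / u x) {x | 0 < u x} := by
    have : ContinuousOn (gradient u) {x | 0 < u x} :=
      (h.gradSmooth.continuousOn.mono h.pos_subW).congr fun x hx => h.u_grad hx
    exact (continuousOn_const.sub (this.norm.pow 2)).div h.lip.continuous.continuousOn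
      fun x hx => ne_of_gt hx
  have hg0fb : ∀ x ∈ freeBoundary u, g0 x = 2 * meanCurv U x := by
    intro x hx; simp [g0, h.fb_u hx]
  have hg0lim : ∀ x ∈ freeBoundary u, Tendsto g0 (𝓝[{x | 0 < u x}] x) (𝓝 (g0 x)) := by
    intro x hx
    rw [hg0fb x hx]
    refine (h.q_limit hx).congr' ?_
    filter_upwards [self_mem_nhdsWithin] with y hy
    have hy' : 0 < u y := hy
    simp [g0, hy']
  have hg0 : ContinuousOn g0 ({x | 0 < u x} ∪ freeBoundary u) := by
    rintro x (hx | hx)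
    · have h1 : ContinuousAt (fun x => (1 - ‖gradient u x‖ ^ 2) / u x) x :=
        hg0Ω.continuousAt (h.isOpenPos.mem_nhds hx)
      refine (h1.congr ?_).continuousWithinAt
      filter_upwards [h.isOpenPos.mem_nhds hx] with y hy
      have hy' : 0 < u y := hy
      simp [g0, hy']
    · refine ContinuousWithinAt.union (hg0lim x hx) ?_
      have : ContinuousOn (fun x => 2 * meanCurv U x) (freeBoundary u) :=
        continuousOn_const.mul (h.meanCurv_cont.mono h.fb_subW)
      exact (this.congr hg0fb) x hx
  let g : EE (k + 1) → ℝ := C.indicator g0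
  have hgC : ContinuousOn g C := (hg0.mono t.sub).congr fun x hx => by simp [g, hx]
  have hg00 : ∀ x ∉ C, g x = 0 := fun x hx => by simp [g, hx]
  have hgm : Measurable g := meas_of_cont_zero t.cpt hgC hg00
  obtain ⟨Mg, hMg⟩ := bdd_of_cont_zero t.cpt hgC hg00
  obtain ⟨Mφ, hMφ⟩ := t.bddφ
  let K : ℝ → EE (k + 1) → ℝ := fun θ x => if 0 < θ ∧ θ < φ x then θ * g x else 0
  have hφC : ∀ x, 0 < φ x → x ∈ C := fun x hx => by
    by_contra hxC; rw [t.φ0 x hxC] at hx; exact lt_irrefl _ hx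
  have hAdm : AdmR u C (Mφ * Mg) Mφ K := by
    refine ⟨?_, ?_, ?_, ?_, ?_⟩
    · have hset : MeasurableSet {p : ℝ × EE (k + 1) | 0 < p.1 ∧ p.1 < φ p.2} :=
        (measurableSet_lt measurable_const measurable_fst).inter
          (measurableSet_lt measurable_fst (t.measφ.comp measurable_snd))
      exact Measurable.ite hset (measurable_fst.mul (hgm.comp measurable_snd)) measurable_const
    · intro θ x
      simp only [K]
      split_ifs with hh
      · rw [abs_mul, abs_of_pos hh.1]
        push_cast
        have h2 := (le_abs_self _).trans (hMφ x)
        exact mul_le_mul (by linarith [hh.2]) (hMg x) (abs_nonneg _) Mφ.2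
      · simp; positivity
    · intro θ x hx
      simp only [K] at hx
      split_ifs at hx with hh
      · have h2 := (le_abs_self _).trans (hMφ x)
        linarith [hh.2]
      · exact absurd rfl hx
    · intro θ x hx
      simp only [K] at hx
      split_ifs at hx with hh
      · exact hφC x (hh.1.trans hh.2)
      · exact absurd rfl hx
    · intro x hx
      have hφx : Tendsto φ (𝓝[{x | 0 < u x}] x) (𝓝 (φ x)) :=
        (t.contφ x (Or.inr hx)).mono subset_union_left
      have hne : ∀ᵐ θ ∂(volume.restrict (Ioi (0 : ℝ))), θ ≠ φ x :=
        ae_restrict_of_ae (Measure.ae_ne volume (φ x))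
      filter_upwards [hne, ae_restrict_mem measurableSet_Ioi] with θ h1 h2
      rcases lt_or_gt_of_ne h1 with h3 | h3
      · have h2' : 0 < θ := h2
        have hxC : x ∈ C := hφC x (h2'.trans h3)
        have e : K θ x = θ * g0 x := by simp [K, g, h2', h3, hxC]
        rw [e]
        refine ((hg0lim x hx).const_mul θ).congr' ?_
        filter_upwards [hφx.eventually (lt_mem_nhds h3)] with y hy
        have hyC : y ∈ C := hφC y (h2'.trans hy)
        simp [K, g, h2', hy, hyC]
      · have e : K θ x = 0 := by simp [K, h3.le.not_gt]
        rw [e]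
        refine tendsto_const_nhds.congr' ?_
        filter_upwards [hφx.eventually (gt_mem_nhds h3)] with y hy
        simp [K, hy.le.not_gt]
  have hKeq : ∀ s, 0 < s → ∀ x, 0 < u x → K (u x / s) x =
      s⁻¹ * (if u x < s * φ x then 1 - ‖gradient u x‖ ^ 2 else 0) := by
    intro s hs x hx
    have hx' : 0 < u x / s := by positivity
    simp only [K, hx', true_and, div_lt_iff₀ hs, mul_comm (φ x) s]
    split_ifs with hh
    · have hφx : 0 < φ x := by
        by_contra h2
        nlinarith
      simp only [g, indicator_of_mem (hφC x hφx), g0, hx, if_true]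
      field_simp
    · simp
  have hlim := layer_limit_real h hc0 hc t.cpt t.zero hAdm
  constructor
  · have e : ∫ x in freeBoundary u, (∫ θ in Ioi 0, K θ x) ∂μH[(k : ℝ)] =
        ∫ x in freeBoundary u, meanCurv U x * φ x ^ 2 ∂μH[(k : ℝ)] := by
      refine setIntegral_congr_fun (isMeas_fb u) fun x hx => ?_
      have e1 : ∀ θ, K θ x = (Ioo 0 (φ x)).indicator (fun θ => θ * g x) θ := by
        intro θ; simp only [K, indicator, mem_Ioo]
      simp only [e1]
      rw [setIntegral_indicator measurableSet_Ioo,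
        show Ioi 0 ∩ Ioo 0 (φ x) = Ioo 0 (φ x) from inter_eq_right.2 fun y hy => hy.1,
        ← integral_Ioc_eq_integral_Ioo, ← intervalIntegral.integral_of_le (t.nonneg x),
        intervalIntegral.integral_mul_const, integral_id]
      by_cases hφx : φ x = 0
      · simp [hφx]
      · have hxC := hφC x (lt_of_le_of_ne (t.nonneg x) (Ne.symm hφx))
        simp only [g, indicator_of_mem hxC, hg0fb x hx]
        ring
    rw [← e]
    refine hlim.congr' ?_
    filter_upwards [self_mem_nhdsWithin] with s hs
    congr 1
    rw [← integral_const_mul]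
    exact setIntegral_congr_fun h.isOpenPos.measurableSet fun x hx => hKeq s hs x hx
  · intro s hs
    have h1 := (hAdm.integrable h.lip.continuous t.cpt s).const_mul s
    refine (integrable_congr ?_).1 h1
    filter_upwards [ae_restrict_mem h.isOpenPos.measurableSet] with x hx
    rw [hKeq s hs x hx, ← mul_assoc, mul_inv_cancel₀ (ne_of_gt hs), one_mul]

end

section
open MeasureTheory Metric Set
open scoped RealInnerProductSpace
open Filter Topology
open scoped ENNReal NNReal

theorem grad_zero_of_min {n : ℕ} {f : EE n → ℝ} (h0 : ∀ x, 0 ≤ f x) {x : EE n} (hx : f x = 0) :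
    gradient f x = 0 := by
  have h1 : IsLocalMin f x := Eventually.of_forall fun y => by rw [hx]; exact h0 y
  unfold gradient
  rw [h1.fderiv_eq_zero, map_zero]

theorem energy_pointwise {n : ℕ} {u U : EE n → ℝ} {W : Set (EE n)} (h : ConeData u U W)
    {φ : EE n → ℝ} {G : EE n → EE n} {C : Set (EE n)} (t : TF u φ G C) {s : ℝ} (hs : 0 < s) (x : EE n) :
    ‖gradient (fun x => max (u x - s * φ x) 0) x‖ ^ 2 + (1 : ℝ) ^ 2 *
      Set.indicator {y | 0 < max (u y - s * φ y) 0} (fun _ => (1 : ℝ)) x ≤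
    ‖gradient u x‖ ^ 2 + (1 : ℝ) ^ 2 * Set.indicator {y | 0 < u y} (fun _ => (1 : ℝ)) x +
      {x | 0 < u x}.indicator (fun x => s ^ 2 * ‖G x‖ ^ 2 -
        (if u x < s * φ x then 1 - ‖gradient u x‖ ^ 2 else 0) -
        2 * (if u x < s * φ x then ‖gradient u x‖ ^ 2 else s * ⟪G x, gradient u x⟫)) x := by
  classical
  set w : EE n → ℝ := fun x => max (u x - s * φ x) 0 with hw
  have hw0 : ∀ x, 0 ≤ w x := fun x => le_max_right _ _
  by_cases hxw : 0 < u x - s * φ x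
  · have hwx : 0 < w x := lt_max_of_lt_left hxw
    have hux : 0 < u x := by have := mul_nonneg hs.le (t.nonneg x); linarith
    have hxΩ : x ∈ {x | 0 < u x} := hux
    have hnot : ¬ u x < s * φ x := by linarith
    rw [indicator_of_mem (show x ∈ {y | 0 < max (u y - s * φ y) 0} from hwx),
      indicator_of_mem hxΩ, indicator_of_mem hxΩ]
    simp only [hnot, if_false]
    have d1 := t.hasFDeriv hux
    have d2 : HasFDerivAt u (fderiv ℝ u x) x :=
      ((h.u_smooth.contDiffAt (h.isOpenPos.mem_nhds hxΩ)).differentiableAt (by simp)).hasFDerivAt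
    have d3 := d2.sub (d1.const_mul s)
    have hev : w =ᶠ[𝓝 x] fun x => u x - s * φ x := by
      filter_upwards [d3.continuousAt.eventually (lt_mem_nhds hxw)] with y hy
      exact max_eq_left (le_of_lt hy)
    have hg : gradient w x = gradient u x - s • G x := by
      unfold gradient
      rw [hev.fderiv_eq, show fderiv ℝ (fun x => u x - s * φ x) x = _ from d3.fderiv, map_sub, map_smul]
      simp
    rw [hg, norm_sub_sq_real, norm_smul, inner_smul_right, real_inner_comm, mul_pow,
      Real.norm_of_nonneg hs.le]
    linarith
  · have hwx : w x = 0 := max_eq_right (not_lt.1 hxw)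
    rw [grad_zero_of_min hw0 hwx, indicator_of_notMem (show x ∉ {y | 0 < max (u y - s * φ y) 0} from
      fun hh => by have : 0 < w x := hh
                   linarith)]
    by_cases hxΩ : x ∈ {x | 0 < u x}
    · rw [indicator_of_mem hxΩ, indicator_of_mem hxΩ]
      have h2 : 0 ≤ s ^ 2 * ‖G x‖ ^ 2 := by positivity
      split_ifs with hc
      · norm_num; linarith
      · have h3 := norm_sub_sq_real (gradient u x) (s • G x)
        rw [norm_smul, inner_smul_right, real_inner_comm, mul_pow,
          Real.norm_of_nonneg hs.le] at h3
        have h4 := sq_nonneg ‖gradient u x - s • G x‖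
        rw [norm_zero]
        linarith
    · rw [indicator_of_notMem hxΩ, indicator_of_notMem hxΩ]
      norm_num

theorem J_integrable {n : ℕ} {u U : EE n → ℝ} {W : Set (EE n)} (h : ConeData u U W)
    {φ : EE n → ℝ} {G : EE n → EE n} {C : Set (EE n)} (t : TF u φ G C) {s : ℝ} (hs : 0 < s) :
    Integrable (fun x => if u x < s * φ x then ‖gradient u x‖ ^ 2 else s * ⟪G x, gradient u x⟫)
      (volume.restrict {x | 0 < u x}) := by
  classical
  obtain ⟨K, hK⟩ := h.lipGlobal
  obtain ⟨M, hM⟩ := t.bddG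
  have hm : Measurable
      (fun x => if u x < s * φ x then ‖gradient u x‖ ^ 2 else s * ⟪G x, gradient u x⟫) := by
    refine Measurable.ite (measurableSet_lt h.lip.continuous.measurable (t.measφ.const_mul s)) ?_ ?_
    · exact (meas_gradient u).norm.pow_const 2
    · exact (t.measG.inner (meas_gradient u)).const_mul s
  have hi : Integrable (C.indicator fun _ => s * (M * K) + (K : ℝ) ^ 2) := by
    rw [integrable_indicator_iff t.cpt.isClosed.measurableSet]
    exact integrableOn_const t.cpt.measure_lt_top.ne
  refine hi.restrict.mono' hm.aestronglyMeasurable ?_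
  filter_upwards [ae_restrict_mem h.isOpenPos.measurableSet] with x hx
  have hx' : 0 < u x := hx
  by_cases hxC : x ∈ C
  · rw [indicator_of_mem hxC]
    have hbd : ‖⟪G x, gradient u x⟫‖ ≤ M * K :=
      (norm_inner_le_norm _ _).trans (mul_le_mul (hM x) (grad_bdd hK x) (norm_nonneg _) M.2)
    have a6 : ‖gradient u x‖ ^ 2 ≤ K ^ 2 := pow_le_pow_left₀ (norm_nonneg _) (grad_bdd hK x) 2
    have p1 : 0 ≤ s * (M * K) := by positivity
    have p2 : 0 ≤ (K : ℝ) ^ 2 := by positivity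
    split_ifs
    · rw [Real.norm_of_nonneg (sq_nonneg _)]; linarith
    · rw [norm_mul, Real.norm_of_nonneg hs.le]
      have := mul_le_mul_of_nonneg_left hbd hs.le
      linarith
  · rw [indicator_of_notMem hxC, t.φ0 x hxC, t.G0 x hxC]
    simp [hx'.le.not_gt]

theorem competitor {k : ℕ} {u U : EE (k + 1) → ℝ} {W : Set (EE (k + 1))} (h : ConeData u U W)
    {c : ℝ≥0∞} (hc0 : c ≠ 0) (hc : (volume : Measure (EE k)) = c • μH[(k : ℝ)])
    {φ : EE (k + 1) → ℝ} {G : EE (k + 1) → EE (k + 1)} {C : Set (EE (k + 1))} (t : TF u φ G C)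
    (Γ : Subgroup (EE (k + 1) ≃ₗᵢ[ℝ] EE (k + 1))) (hφs : IsSymmetricUnder Γ φ)
    (hin : ∫ x in {x | 0 < u x}, ‖G x‖ ^ 2 <
      c.toReal * ∫ x in freeBoundary u, meanCurv U x * φ x ^ 2 ∂μH[(k : ℝ)]) :
    ¬ IsSymMinimizer Γ u := by
  classical
  rintro ⟨-, -, husym, hmin⟩
  obtain ⟨hl1, hl2⟩ := hphi_limit h hc0 hc t
  obtain ⟨s, hs1, hs⟩ := ((hl1.eventually (lt_mem_nhds hin)).and self_mem_nhdsWithin).exists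
  have hs : 0 < s := hs
  obtain ⟨R, hR0, hR⟩ := t.cpt.isBounded.subset_ball_lt 0 0
  obtain ⟨K, hK⟩ := h.lipGlobal
  obtain ⟨M, hM⟩ := t.bddG
  obtain ⟨K', hK'⟩ := w_lip h t hs
  have hm := hmin R hR0 (fun x => max (u x - s * φ x) 0) (fun x => le_max_right _ _)
    hK'.locallyLipschitz (fun g hg x => by simp only [husym g hg x, hφs g hg x])
    (fun x hx => by
      have : φ x = 0 := t.φ0 x fun hxC => hx (hR hxC)
      simp only [this, mul_zero, sub_zero]
      exact max_eq_left (h.u_nonneg x))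
  have hΩm := h.isOpenPos.measurableSet
  have iG : Integrable (fun x => ‖G x‖ ^ 2) (volume.restrict {x | 0 < u x}) := by
    refine Integrable.restrict ?_
    have hi : Integrable (C.indicator fun _ => (M : ℝ) ^ 2) := by
      rw [integrable_indicator_iff t.cpt.isClosed.measurableSet]
      exact integrableOn_const t.cpt.measure_lt_top.ne
    refine hi.mono' (t.measG.norm.pow_const 2).aestronglyMeasurable (Eventually.of_forall fun x => ?_)
    by_cases hxC : x ∈ C
    · rw [indicator_of_mem hxC, Real.norm_of_nonneg (sq_nonneg _)]
      exact pow_le_pow_left₀ (norm_nonneg _) (hM x) 2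
    · rw [indicator_of_notMem hxC, t.G0 x hxC]; simp
  have iJ := J_integrable h t hs
  have iq := hl2 s hs
  set D : EE (k + 1) → ℝ := {x | 0 < u x}.indicator (fun x => s ^ 2 * ‖G x‖ ^ 2 -
        (if u x < s * φ x then 1 - ‖gradient u x‖ ^ 2 else 0) -
        2 * (if u x < s * φ x then ‖gradient u x‖ ^ 2 else s * ⟪G x, gradient u x⟫)) with hD
  have iD0 := ((iG.const_mul (s ^ 2)).sub iq).sub (iJ.const_mul 2)
  have iD : Integrable D := (integrable_indicator_iff hΩm).2 iD0
  have hDneg : ∫ x, D x < 0 := by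
    rw [hD, integral_indicator hΩm]
    have i1 := (iG.const_mul (s ^ 2)).sub iq
    have e1 := integral_sub i1 (iJ.const_mul 2)
    have e2 := integral_sub (iG.const_mul (s ^ 2)) iq
    simp only [Pi.sub_apply] at e1 e2
    rw [e1, e2, integral_const_mul, integral_const_mul, J_identity h t hs]
    rw [← mul_assoc, ← sq, inv_pow, inv_mul_eq_div, lt_div_iff₀ (by positivity)] at hs1
    linarith
  have hDball : ∫ x in ball (0 : EE (k + 1)) R, D x = ∫ x, D x := by
    refine setIntegral_eq_integral_of_forall_compl_eq_zero fun x hx => ?_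
    have hxC : x ∉ C := fun hxC => hx (hR hxC)
    rw [hD]
    by_cases hxΩ : x ∈ {x | 0 < u x}
    · have hxΩ' : 0 < u x := hxΩ
      rw [indicator_of_mem hxΩ, t.φ0 x hxC, t.G0 x hxC]
      simp [hxΩ'.le.not_gt]
    · rw [indicator_of_notMem hxΩ]
  have me : ∀ f : EE (k + 1) → ℝ, Continuous f → Measurable (fun x => ‖gradient f x‖ ^ 2 + (1 : ℝ) ^ 2 *
      Set.indicator {y | 0 < f y} (fun _ => (1 : ℝ)) x) := by
    intro f hf
    refine ((meas_gradient f).norm.pow_const 2).add (Measurable.const_mul ?_ _)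
    exact measurable_const.indicator (isOpen_lt continuous_const hf).measurableSet
  have ie : ∀ (f : EE (k + 1) → ℝ) (K : ℝ≥0), LipschitzWith K f → IntegrableOn (fun x => ‖gradient f x‖ ^ 2 + (1 : ℝ) ^ 2 *
      Set.indicator {y | 0 < f y} (fun _ => (1 : ℝ)) x) (ball 0 R) := by
    intro f K hf
    refine Measure.integrableOn_of_bounded (M := (K : ℝ) ^ 2 + 1) measure_ball_lt_top.ne
      (me f hf.continuous).aestronglyMeasurable (Eventually.of_forall fun x => ?_)
    have a6 : ‖gradient f x‖ ^ 2 ≤ K ^ 2 := pow_le_pow_left₀ (norm_nonneg _) (grad_bdd hf x) 2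
    have a7 : 0 ≤ Set.indicator {y | 0 < f y} (fun _ => (1 : ℝ)) x :=
      indicator_nonneg (fun _ _ => zero_le_one) _
    have a8 : Set.indicator {y | 0 < f y} (fun _ => (1 : ℝ)) x ≤ 1 :=
      indicator_le' (fun _ _ => le_rfl) (fun _ _ => zero_le_one) x
    rw [Real.norm_of_nonneg (by positivity)]
    linarith
  unfold acEnergy at hm
  have hle := integral_mono (μ := volume.restrict (ball (0 : EE (k + 1)) R)) (ie _ _ hK')
    ((ie _ _ hK).add iD.restrict) (fun x => energy_pointwise h t hs x)
  have e3 := integral_add (ie _ _ hK) (iD.restrict (s := ball (0 : EE (k + 1)) R))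
  simp only [Pi.add_apply] at hle e3
  rw [e3, hDball] at hle
  linarith

end

section
open MeasureTheory Metric Set
open scoped RealInnerProductSpace
open Filter Topology
open scoped ENNReal NNReal

/-- the positivity set together with the free boundary, inside `A` -/
abbrev SS {n : ℕ} (u : EE n → ℝ) (A : Set (EE n)) : Set (EE n) :=
  ({x | 0 < u x} ∩ A) ∪ (freeBoundary u ∩ A)

structure VD {n : ℕ} (u U : EE n → ℝ) (A A' : Set (EE n)) (v : EE n → ℝ) (Mv : ℝ) : Prop where
  oA : IsOpen A
  cA' : IsCompact A'
  subA : A ⊆ A'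
  zA' : (0 : EE n) ∉ A'
  nonneg : ∀ x ∈ SS u A, 0 ≤ v x
  bdd : ∀ x ∈ SS u A, v x ≤ Mv
  cpt : ∀ ε > 0, IsCompact {x | x ∈ SS u A ∧ ε ≤ v x}
  c2 : ContDiffOn ℝ 2 v ({x | 0 < u x} ∩ A)
  c1 : ContDiffOn ℝ 1 v (SS u A)
  lapv : ∀ x ∈ {x | 0 < u x} ∩ A, 0 ≤ lap v x
  bdy : ∀ x ∈ freeBoundary u ∩ A, dNu U v x ≤ meanCurv U x * v x

theorem annulus_frontier {n : ℕ} {a b : ℝ} (ha : 0 < a) (hab : a < b) {z : EE n}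
    (hz : ‖z‖ = a ∨ ‖z‖ = b) : z ∈ frontier {x : EE n | a < ‖x‖ ∧ ‖x‖ < b} := by
  have hb : 0 < b := ha.trans hab
  have ho : IsOpen {x : EE n | a < ‖x‖ ∧ ‖x‖ < b} :=
    (isOpen_lt continuous_const continuous_norm).inter (isOpen_lt continuous_norm continuous_const)
  rw [ho.frontier_eq]
  have hcont : Tendsto (fun t : ℝ => t • z) (𝓝 1) (𝓝 z) := by
    have : Continuous (fun t : ℝ => t • z) := by fun_prop
    simpa using this.tendsto 1
  constructor
  · rcases hz with hz | hz
    · refine mem_closure_of_tendsto (hcont.mono_left (nhdsWithin_le_nhds (s := Ioi 1))) ?_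
      have : (1 : ℝ) < b / a := by rw [lt_div_iff₀ ha]; linarith
      filter_upwards [Ioo_mem_nhdsGT this] with t ht
      have ht0 : 0 < t := by linarith [ht.1]
      have h2 := (lt_div_iff₀ ha).1 ht.2
      show a < ‖t • z‖ ∧ ‖t • z‖ < b
      rw [norm_smul, Real.norm_of_nonneg ht0.le, hz]
      exact ⟨by nlinarith [ht.1], h2⟩
    · refine mem_closure_of_tendsto (hcont.mono_left (nhdsWithin_le_nhds (s := Iio 1))) ?_
      have : a / b < 1 := by rw [div_lt_one hb]; linarith
      filter_upwards [Ioo_mem_nhdsLT this] with t ht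
      have ht0 : 0 < t := lt_trans (by positivity) ht.1
      have h2 := (div_lt_iff₀ hb).1 ht.1
      show a < ‖t • z‖ ∧ ‖t • z‖ < b
      rw [norm_smul, Real.norm_of_nonneg ht0.le, hz]
      exact ⟨h2, by nlinarith [ht.2]⟩
  · rintro ⟨h1, h2⟩
    rcases hz with hz | hz <;> linarith

theorem VD.build {n : ℕ} {u U : EE n → ℝ} {W : Set (EE n)} (h : ConeData u U W)
    (a b : ℝ) (ha : 0 < a) (hab : a < b)
    (A : Set (EuclideanSpace ℝ (Fin n))) (hA : A = {x | a < ‖x‖ ∧ ‖x‖ < b})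
    (v : EuclideanSpace ℝ (Fin n) → ℝ)
    (hv0 : ∀ x ∈ closure ({x | 0 < u x} ∩ A), 0 ≤ v x)
    (hvCont : ContinuousOn v (closure ({x | 0 < u x} ∩ A)))
    (hvC2 : ContDiffOn ℝ 2 v ({x | 0 < u x} ∩ A))
    (hvC1 : ContDiffOn ℝ 1 v (({x | 0 < u x} ∩ A) ∪ (freeBoundary u ∩ A)))
    (hSub : ∀ x ∈ {x | 0 < u x} ∩ A, 0 ≤ lap v x)
    (hBdy : ∀ x ∈ freeBoundary u ∩ A, dNu U v x ≤ meanCurv U x * v x)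
    (hZero : ∀ x, 0 < u x → x ∈ frontier A → v x = 0) :
    ∃ Mv, VD u U A {x | a ≤ ‖x‖ ∧ ‖x‖ ≤ b} v Mv := by
  have hb : 0 < b := ha.trans hab
  have hAo : IsOpen A := by
    rw [hA]
    exact (isOpen_lt continuous_const continuous_norm).inter
      (isOpen_lt continuous_norm continuous_const)
  have hA'c : IsClosed {x : EE n | a ≤ ‖x‖ ∧ ‖x‖ ≤ b} :=
    (isClosed_le continuous_const continuous_norm).inter
      (isClosed_le continuous_norm continuous_const)
  have hA' : IsCompact {x : EE n | a ≤ ‖x‖ ∧ ‖x‖ ≤ b} := by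
    refine (isCompact_closedBall (0 : EE n) b).of_isClosed_subset hA'c ?_
    intro x hx
    rw [mem_closedBall_zero_iff]; exact hx.2
  have hAA' : A ⊆ {x : EE n | a ≤ ‖x‖ ∧ ‖x‖ ≤ b} := by
    rw [hA]; intro x hx; exact ⟨hx.1.le, hx.2.le⟩
  set O := {x | 0 < u x} ∩ A with hO
  have hclA' : closure O ⊆ {x : EE n | a ≤ ‖x‖ ∧ ‖x‖ ≤ b} :=
    closure_minimal (inter_subset_right.trans hAA') hA'c
  have hclΩ : closure O ⊆ closure {x | 0 < u x} := closure_mono inter_subset_left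
  have hclc : IsCompact (closure O) := hA'.of_isClosed_subset isClosed_closure hclA'
  have hScl : SS u A ⊆ closure O := by
    rintro x (hx | hx)
    · exact subset_closure hx
    · rw [hO, inter_comm]
      exact hAo.inter_closure ⟨hx.2, frontier_subset_closure hx.1.1⟩
  have hvz : ∀ x ∈ closure O, (‖x‖ = a ∨ ‖x‖ = b) → v x = 0 := by
    intro x hx hxr
    have hx0 : 0 < ‖x‖ := by rcases hxr with h1 | h1 <;> rw [h1] <;> assumption
    have hne : (𝓝[O] x).NeBot := mem_closure_iff_nhdsWithin_neBot.1 hx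
    let T : EE n → EE n := fun y => (‖x‖ / ‖y‖) • y
    have hTc : ContinuousAt T x := by
      refine ContinuousAt.smul (ContinuousAt.div continuousAt_const continuous_norm.continuousAt
        hx0.ne') continuousAt_id
    have hTx : T x = x := by simp [T, hx0.ne']
    have hTO : ∀ y ∈ O, 0 < u (T y) ∧ T y ∈ frontier A := by
      intro y hy
      have hy0 : 0 < ‖y‖ := by
        have := (hAA' hy.2).1
        linarith
      have hyu : 0 < u y := hy.1
      refine ⟨?_, ?_⟩
      · simp only [T]
        rw [h.hom _ (by positivity)]
        positivity
      · rw [hA]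
        refine annulus_frontier ha hab ?_
        have : ‖T y‖ = ‖x‖ := by
          simp only [T]
          rw [norm_smul, norm_div, norm_norm, norm_norm, div_mul_cancel₀ _ hy0.ne']
        rw [this]; exact hxr
    have h1 : Tendsto T (𝓝[O] x) (𝓝[closure O] x) := by
      refine tendsto_nhdsWithin_iff.2 ⟨?_, ?_⟩
      · have := hTc.tendsto
        rw [hTx] at this
        exact this.mono_left nhdsWithin_le_nhds
      · filter_upwards [self_mem_nhdsWithin] with y hy
        obtain ⟨h2, h3⟩ := hTO y hy
        exact h.isOpenPos.inter_closure ⟨h2, frontier_subset_closure h3⟩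
    have h2 : Tendsto (fun y => v (T y)) (𝓝[O] x) (𝓝 (v x)) := (hvCont x hx).tendsto.comp h1
    have h3 : Tendsto (fun y => v (T y)) (𝓝[O] x) (𝓝 0) := by
      refine tendsto_const_nhds.congr' ?_
      filter_upwards [self_mem_nhdsWithin] with y hy
      exact (hZero _ (hTO y hy).1 (hTO y hy).2).symm
    exact tendsto_nhds_unique h2 h3
  obtain ⟨Mv, hMv⟩ := hclc.exists_bound_of_continuousOn hvCont
  refine ⟨Mv, hAo, hA', hAA', ?_, fun x hx => hv0 x (hScl hx), fun x hx =>
    (le_abs_self _).trans (hMv x (hScl hx)), ?_, hvC2, hvC1, hSub, hBdy⟩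
  · rintro ⟨h1, -⟩
    rw [norm_zero] at h1; linarith
  · intro ε hε
    have e : {x | x ∈ SS u A ∧ ε ≤ v x} = closure O ∩ v ⁻¹' (Ici ε) := by
      ext x
      constructor
      · rintro ⟨h1, h2⟩; exact ⟨hScl h1, h2⟩
      · rintro ⟨h1, h2⟩
        have h2' : ε ≤ v x := h2
        refine ⟨?_, h2⟩
        have h3 := hclA' h1
        have h4 : ‖x‖ ≠ a := fun hh => by
          have := hvz x h1 (Or.inl hh); linarith
        have h5 : ‖x‖ ≠ b := fun hh => by
          have := hvz x h1 (Or.inr hh); linarith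
        have hxA : x ∈ A := by
          rw [hA]; exact ⟨lt_of_le_of_ne h3.1 h4.symm, lt_of_le_of_ne h3.2 h5⟩
        have hx0 : x ≠ 0 := by
          rintro rfl
          have := h3.1
          rw [norm_zero] at this; linarith
        rcases h.closure_cases (hclΩ h1) hx0 with h6 | h6
        · exact Or.inl ⟨h6, hxA⟩
        · exact Or.inr ⟨h6, hxA⟩
    rw [e]
    exact hclc.of_isClosed_subset (hvCont.preimage_isClosed_of_isClosed isClosed_closure isClosed_Ici)
      inter_subset_left

/-- one-sided gradient of `v` -/
def gv {n : ℕ} (u : EE n → ℝ) (A : Set (EE n)) (v : EE n → ℝ) (x : EE n) : EE n :=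
  (InnerProductSpace.toDual ℝ (EE n)).symm (fderivWithin ℝ v (SS u A) x)

open Classical in
def phi {n : ℕ} (u : EE n → ℝ) (A : Set (EE n)) (v : EE n → ℝ) (ε : ℝ) : EE n → ℝ :=
  (SS u A).indicator (fun x => chi ε (v x))

open Classical in
def Gphi {n : ℕ} (u : EE n → ℝ) (A : Set (EE n)) (v : EE n → ℝ) (ε : ℝ) : EE n → EE n :=
  (SS u A).indicator (fun x => chi' ε (v x) • gv u A v x)

section
variable {k : ℕ} {u U : EE (k + 1) → ℝ} {W : Set (EE (k + 1))} {A A' : Set (EE (k + 1))}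
  {v : EE (k + 1) → ℝ} {Mv : ℝ}

theorem VD.gv_eq (h : ConeData u U W) (d : VD u U A A' v Mv) {x : EE (k + 1)}
    (hx : x ∈ {x | 0 < u x} ∩ A) : gv u A v x = gradient v x := by
  unfold gv gradient
  rw [fderivWithin_of_mem_nhds]
  exact mem_of_superset ((h.isOpenPos.inter d.oA).mem_nhds hx) subset_union_left

theorem VD.gv_cont (h : ConeData u U W) (d : VD u U A A' v Mv) :
    ContinuousOn (gv u A v) (SS u A) :=
  (InnerProductSpace.toDual ℝ (EE (k + 1))).symm.continuous.comp_continuousOn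
    (d.c1.continuousOn_fderivWithin (h.uniqueDiff d.oA) le_rfl)

theorem cont_ext {F : Type*} [NormedAddCommGroup F] {n : ℕ} {u : EE n → ℝ} {A : Set (EE n)}
    (hA : IsOpen A) {C : Set (EE n)} (hC : IsCompact C)
    (hCS : C ⊆ SS u A) {f : EE n → F} (hf : ContinuousOn f (SS u A)) (h0 : ∀ x ∉ C, f x = 0) :
    ContinuousOn f ({x | 0 < u x} ∪ freeBoundary u) := by
  intro x hx
  by_cases hxC : x ∈ C
  · refine (hf x (hCS hxC)).mono_of_mem_nhdsWithin ?_
    have hxA : x ∈ A := by rcases hCS hxC with h1 | h1 <;> exact h1.2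
    filter_upwards [self_mem_nhdsWithin, mem_nhdsWithin_of_mem_nhds (hA.mem_nhds hxA)] with y h1 h2
    rcases h1 with h1 | h1
    · exact Or.inl ⟨h1, h2⟩
    · exact Or.inr ⟨h1, h2⟩
  · have : f =ᶠ[𝓝 x] fun _ => 0 := by
      filter_upwards [hC.isClosed.isOpen_compl.mem_nhds hxC] with y hy using h0 y hy
    exact (continuousAt_const.congr this.symm).continuousWithinAt

theorem VD.phi0 (d : VD u U A A' v Mv) {ε : ℝ} (hε : 0 < ε) (x : EE (k + 1))
    (hx : x ∉ {x | x ∈ SS u A ∧ ε ≤ v x}) : phi u A v ε x = 0 ∧ Gphi u A v ε x = 0 := by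
  classical
  by_cases hxS : x ∈ SS u A
  · have hv : v x < ε := by
      by_contra h2; exact hx ⟨hxS, not_lt.1 h2⟩
    unfold phi Gphi
    rw [indicator_of_mem hxS, indicator_of_mem hxS, chi_zero hε hv.le, chi'_zero hε hv.le]
    simp
  · unfold phi Gphi
    rw [indicator_of_notMem hxS, indicator_of_notMem hxS]; simp

theorem VD.tf (h : ConeData u U W) (d : VD u U A A' v Mv) {ε : ℝ} (hε : 0 < ε) :
    TF u (phi u A v ε) (Gphi u A v ε) {x | x ∈ SS u A ∧ ε ≤ v x} := by
  classical
  have hC := d.cpt ε hε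
  have hvS := d.c1.continuousOn
  refine ⟨hC, ?_, ?_, fun x hx => (d.phi0 hε x hx).1, fun x hx => (d.phi0 hε x hx).2, ?_, ?_, ?_, ?_⟩
  · rintro ⟨h1, -⟩
    exact d.zA' (d.subA (by rcases h1 with h1 | h1 <;> exact h1.2))
  · rintro x ⟨h1, -⟩
    rcases h1 with h1 | h1
    · exact Or.inl h1.1
    · exact Or.inr h1.1
  · intro x
    exact indicator_nonneg (fun _ _ => chi_nonneg hε _) _
  · intro x hx
    by_cases hxA : x ∈ A
    · have hxO : x ∈ {x | 0 < u x} ∩ A := ⟨hx, hxA⟩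
      have hO := h.isOpenPos.inter d.oA
      have hxS : x ∈ SS u A := Or.inl hxO
      have hev : phi u A v ε =ᶠ[𝓝 x] fun x => chi ε (v x) := by
        filter_upwards [hO.mem_nhds hxO] with y hy
        unfold phi
        rw [indicator_of_mem (show y ∈ SS u A from Or.inl hy)]
      have d1 : HasFDerivAt v (fderiv ℝ v x) x :=
        ((d.c2.contDiffAt (hO.mem_nhds hxO)).differentiableAt (by norm_num)).hasFDerivAt
      have d2 := (hasDerivAt_chi hε (v x)).comp_hasFDerivAt x d1
      have d3 : HasFDerivAt (phi u A v ε) (chi' ε (v x) • fderiv ℝ v x) x := d2.congr_of_eventuallyEq hev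
      unfold HasGradientAt HasGradientAtFilter
      have e : InnerProductSpace.toDual ℝ (EE (k + 1)) (Gphi u A v ε x) = chi' ε (v x) • fderiv ℝ v x := by
        unfold Gphi
        rw [indicator_of_mem hxS, d.gv_eq h hxO, map_smul]
        unfold gradient
        simp
      rw [e]; exact d3
    · have hxC : x ∉ {x | x ∈ SS u A ∧ ε ≤ v x} := by
        rintro ⟨h1, -⟩
        exact hxA (by rcases h1 with h1 | h1 <;> exact h1.2)
      rw [(d.phi0 hε x hxC).2]
      have hev : phi u A v ε =ᶠ[𝓝 x] fun _ => 0 := by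
        filter_upwards [hC.isClosed.isOpen_compl.mem_nhds hxC] with y hy using (d.phi0 hε y hy).1
      have := (hasGradientAt_const x (0 : ℝ)).congr_of_eventuallyEq hev
      exact this
  · refine cont_ext d.oA hC (fun x hx => hx.1) ?_ (fun x hx => (d.phi0 hε x hx).1)
    refine ((contDiff_chi hε).continuous.comp_continuousOn hvS).congr fun x hx => ?_
    unfold phi; rw [indicator_of_mem hx]; rfl
  · refine cont_ext d.oA hC (fun x hx => hx.1) ?_ (fun x hx => (d.phi0 hε x hx).2)
    refine (((chi'_continuous ε).comp_continuousOn hvS).smul (d.gv_cont h)).congr fun x hx => ?_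
    unfold Gphi; rw [indicator_of_mem hx]; rfl

theorem phi_sym {n : ℕ} {u v : EE n → ℝ} {A : Set (EE n)} (Γ : Subgroup (EE n ≃ₗᵢ[ℝ] EE n))
    (hu : IsSymmetricUnder Γ u) (hv : IsSymmetricUnder Γ v)
    (hA : ∀ g ∈ Γ, ∀ x, g x ∈ A ↔ x ∈ A) (ε : ℝ) : IsSymmetricUnder Γ (phi u A v ε) := by
  classical
  intro g hg x
  have h1 : g ⁻¹' {x | 0 < u x} = {x | 0 < u x} := by
    ext y
    rw [mem_preimage]
    show 0 < u (g y) ↔ 0 < u y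
    rw [hu g hg y]
  have h2 : g x ∈ freeBoundary u ↔ x ∈ freeBoundary u := by
    unfold freeBoundary
    have h3 : g x ∈ frontier {x | 0 < u x} ↔ x ∈ frontier {x | 0 < u x} := by
      have := g.toHomeomorph.preimage_frontier {x | 0 < u x}
      have h4 : g.toHomeomorph ⁻¹' {x | 0 < u x} = {x | 0 < u x} := h1
      rw [h4] at this
      conv_rhs => rw [← this]
      rfl
    have h5 : g x = 0 ↔ x = 0 := by simp
    simp only [Set.mem_sdiff, h3, mem_singleton_iff, h5]
  have h3 : g x ∈ SS u A ↔ x ∈ SS u A := by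
    simp only [mem_union, mem_inter_iff, h2, hA g hg x]
    have : g x ∈ {x | 0 < u x} ↔ x ∈ {x | 0 < u x} := by
      rw [← mem_preimage, h1]
    rw [this]
  unfold phi
  by_cases hx : x ∈ SS u A
  · rw [indicator_of_mem hx, indicator_of_mem (h3.2 hx), hv g hg x]
  · rw [indicator_of_notMem hx, indicator_of_notMem (fun hh => hx (h3.1 hh))]

end

end

section
open MeasureTheory Metric Set
open scoped RealInnerProductSpace
open Filter Topology
open scoped ENNReal NNReal

def eta (t : ℝ) : ℝ := chi 1 t - chi 1 (t - 1)
def eta' (t : ℝ) : ℝ := chi' 1 t - chi' 1 (t - 1)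

theorem hasDerivAt_eta (t : ℝ) : HasDerivAt eta (eta' t) t := by
  have h1 := hasDerivAt_chi one_pos t
  have h2 := (hasDerivAt_chi one_pos (t - 1)).comp_sub_const t 1
  exact h1.sub h2

theorem eta'_continuous : Continuous eta' :=
  (chi'_continuous 1).sub ((chi'_continuous 1).comp (by fun_prop : Continuous fun t : ℝ => t - 1))

theorem contDiff_eta : ContDiff ℝ 1 eta :=
  (contDiff_chi one_pos).sub ((contDiff_chi one_pos).comp (contDiff_id.sub contDiff_const))

theorem chi_mono : Monotone (chi 1) := by
  refine monotone_of_deriv_nonneg (fun t => (hasDerivAt_chi one_pos t).differentiableAt) fun t => ?_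
  rw [(hasDerivAt_chi one_pos t).deriv]; exact chi'_nonneg one_pos t

theorem eta_nonneg (t : ℝ) : 0 ≤ eta t := sub_nonneg.2 (chi_mono (by linarith))

theorem eta_le {t : ℝ} (ht : 0 ≤ t) : eta t ≤ 3 := by
  have h1 := chi_le one_pos ht
  have h2 := le_chi one_pos (t - 1)
  unfold eta; linarith

theorem eta_zero {t : ℝ} (ht : t ≤ 1) : eta t = 0 := by
  unfold eta; rw [chi_zero one_pos ht, chi_zero one_pos (by linarith)]; simp

theorem eta_one {t : ℝ} (ht : 3 ≤ t) : eta t = 1 := by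
  unfold eta chi
  rw [max_eq_left (by linarith), max_eq_left (by linarith), max_eq_left (by linarith),
    max_eq_left (by linarith)]
  ring

theorem eta'_abs (t : ℝ) : |eta' t| ≤ 1 := by
  have a1 := chi'_nonneg one_pos t
  have a2 := chi'_nonneg one_pos (t - 1)
  have a3 := chi'_le_one one_pos t
  have a4 := chi'_le_one one_pos (t - 1)
  unfold eta'; rw [abs_le]; constructor <;> linarith

theorem eta'_zero {t : ℝ} (ht : 3 ≤ t) : eta' t = 0 := by
  unfold eta'; rw [chi'_one one_pos (by linarith), chi'_one one_pos (by linarith)]; simp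

theorem eta'_integral : ∫ θ in Ioi (0 : ℝ), eta' θ = 1 := by
  have h1 : ∫ θ in Ioi (0 : ℝ), eta' θ = ∫ θ in Ioc (0 : ℝ) 3, eta' θ := by
    refine setIntegral_eq_of_subset_of_forall_sdiff_eq_zero measurableSet_Ioi
      (fun x hx => hx.1) fun x hx => ?_
    refine eta'_zero ?_
    by_contra h2
    exact hx.2 ⟨hx.1, (not_le.1 h2).le⟩
  rw [h1, ← intervalIntegral.integral_of_le (by norm_num),
    intervalIntegral.integral_eq_sub_of_hasDerivAt (fun x _ => hasDerivAt_eta x)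
      (eta'_continuous.intervalIntegrable _ _), eta_one le_rfl, eta_zero zero_le_one]
  norm_num

section
variable {k : ℕ} {u U : EE (k + 1) → ℝ} {W : Set (EE (k + 1))} {A A' : Set (EE (k + 1))}
  {v : EE (k + 1) → ℝ} {Mv : ℝ}

theorem main_ineq (h : ConeData u U W) (d : VD u U A A' v Mv)
    {c : ℝ≥0∞} (hc0 : c ≠ 0) (hc : (volume : Measure (EE k)) = c • μH[(k : ℝ)])
    {ε : ℝ} (hε : 0 < ε) {κ : ℝ}
    (hκ : ∀ᶠ s in 𝓝[>] (0 : ℝ), Integrable (fun x => lap v x * (phi u A v ε x * eta (u x / s))) →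
      κ ≤ ∫ x, lap v x * (phi u A v ε x * eta (u x / s))) :
    (∫ x in {x | 0 < u x}, ⟪Gphi u A v ε x, gv u A v x⟫) + κ ≤
      c.toReal * ∫ x in freeBoundary u ∩ A, phi u A v ε x * dNu U v x ∂μH[(k : ℝ)] := by
  classical
  have t := d.tf h hε
  set φ := phi u A v ε with hφ
  set G := Gphi u A v ε with hG
  set C := {x | x ∈ SS u A ∧ ε ≤ v x} with hCdef
  set Ω := {x | 0 < u x} with hΩ
  have hΩo : IsOpen Ω := h.isOpenPos
  have hO : IsOpen (Ω ∩ A) := hΩo.inter d.oA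
  have hCS : C ⊆ SS u A := fun x hx => hx.1
  have hSW : SS u A ⊆ W := by
    rintro x (hx | hx)
    · exact h.pos_subW hx.1
    · exact h.fb_subW hx.1
  let p : EE (k + 1) → ℝ := fun x => ⟪G x, gv u A v x⟫
  let N : EE (k + 1) → ℝ := fun x => φ x * ⟪gradient U x, gv u A v x⟫
  have hp0 : ∀ x ∉ C, p x = 0 := fun x hx => by simp only [p]; rw [t.G0 x hx, inner_zero_left]
  have hN0 : ∀ x ∉ C, N x = 0 := fun x hx => by simp only [N]; rw [t.φ0 x hx, zero_mul]
  have hST : SS u A ⊆ Ω ∪ freeBoundary u := by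
    rintro x (hx | hx)
    · exact Or.inl hx.1
    · exact Or.inr hx.1
  have hpc : ContinuousOn p (SS u A) := (t.contG.mono hST).inner (d.gv_cont h)
  have hNc : ContinuousOn N (SS u A) := (t.contφ.mono hST).mul
    ((h.gradSmooth.continuousOn.mono hSW).inner (d.gv_cont h))
  have hpm : Measurable p := meas_of_cont_zero t.cpt (hpc.mono hCS) hp0
  have hNm : Measurable N := meas_of_cont_zero t.cpt (hNc.mono hCS) hN0
  obtain ⟨Mp, hMp⟩ := bdd_of_cont_zero t.cpt (hpc.mono hCS) hp0
  obtain ⟨MN, hMN⟩ := bdd_of_cont_zero t.cpt (hNc.mono hCS) hN0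
  have hNT := cont_ext d.oA t.cpt hCS hNc hN0
  have hAdm : AdmR u C (1 * MN) 3 (fun θ x => eta' θ * N x) := by
    refine ⟨?_, ?_, ?_, ?_, ?_⟩
    · exact (eta'_continuous.measurable.comp measurable_fst).mul (hNm.comp measurable_snd)
    · intro θ x
      rw [abs_mul]; push_cast
      exact mul_le_mul (eta'_abs θ) (hMN x) (abs_nonneg _) zero_le_one
    · intro θ x hx
      by_contra h2
      exact hx (by rw [eta'_zero (not_le.1 h2).le, zero_mul])
    · intro θ x hx
      by_contra h2
      exact hx (by rw [hN0 x h2, mul_zero])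
    · intro x hx
      refine Eventually.of_forall fun θ => ?_
      exact Tendsto.const_mul _ ((hNT x (Or.inr hx)).mono subset_union_left)
  have hB := layer_limit_real h hc0 hc t.cpt t.zero hAdm
  have hBe : ∫ x in freeBoundary u, (∫ θ in Ioi 0, eta' θ * N x) ∂μH[(k : ℝ)] =
      - ∫ x in freeBoundary u ∩ A, φ x * dNu U v x ∂μH[(k : ℝ)] := by
    have e1 : ∀ x, ∫ θ in Ioi 0, eta' θ * N x = N x := fun x => by
      rw [integral_mul_const, eta'_integral, one_mul]
    simp only [e1]
    have e2 : ∫ x in freeBoundary u, N x ∂μH[(k : ℝ)] = ∫ x in freeBoundary u ∩ A, N x ∂μH[(k : ℝ)] := by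
      refine setIntegral_eq_of_subset_of_forall_sdiff_eq_zero (isMeas_fb u) inter_subset_left
        fun x hx => hN0 x fun hxC => hx.2 ⟨hx.1, ?_⟩
      rcases hCS hxC with h1 | h1 <;> exact h1.2
    rw [e2, ← integral_neg]
    refine setIntegral_congr_fun ((isMeas_fb u).inter d.oA.measurableSet) fun x hx => ?_
    simp only [N]
    rw [h.dNu_eq d.oA d.c1 hx]
    unfold gv
    rw [real_inner_comm, InnerProductSpace.toDual_symm_apply]
    ring
  rw [hBe] at hB
  -- the identity for each s
  have key : ∀ s, 0 < s → Integrable (fun x => lap v x * (φ x * eta (u x / s))) ∧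
      (∫ x in Ω, eta (u x / s) * p x) + s⁻¹ * (∫ x in Ω, eta' (u x / s) * N x) =
        - ∫ x, lap v x * (φ x * eta (u x / s)) := by
    intro s hs
    have hCc : IsCompact (C ∩ {x | s ≤ u x}) :=
      t.cpt.inter_right (isClosed_le continuous_const h.lip.continuous)
    have hCΩ : C ∩ {x | s ≤ u x} ⊆ Ω ∩ A := fun x hx =>
      ⟨lt_of_lt_of_le hs hx.2, by rcases hCS hx.1 with h1 | h1 <;> exact h1.2⟩
    have hu1 : ContDiffOn ℝ 1 u Ω := h.u_smooth.of_le (by simp)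
    have hψ1 : ContDiffOn ℝ 1 (fun x => φ x * eta (u x / s)) (Ω ∩ A) :=
      ((t.c1 hΩo).mul (contDiff_eta.comp_contDiffOn (hu1.div_const s))).mono inter_subset_left
    have hψ0 : ∀ x ∉ C ∩ {x | s ≤ u x}, φ x * eta (u x / s) = 0 := by
      intro x hx
      by_cases hxC : x ∈ C
      · have : u x < s := by
          by_contra h2; exact hx ⟨hxC, not_lt.1 h2⟩
        rw [eta_zero ((div_le_one hs).2 this.le), mul_zero]
      · rw [t.φ0 x hxC, zero_mul]
    obtain ⟨i1, i2, i3⟩ := ibp hO hCc hCΩ d.c2 hψ1 hψ0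
    have hfd : (fun x => fderiv ℝ (fun x => φ x * eta (u x / s)) x (gradient v x)) =
        Ω.indicator (fun x => eta (u x / s) * p x + s⁻¹ * (eta' (u x / s) * N x)) := by
      ext x
      by_cases hxO : x ∈ Ω ∩ A
      · have hxΩ : x ∈ Ω := hxO.1
        have d1 : HasFDerivAt φ _ x := t.hasFDeriv hxΩ
        have d2 : HasFDerivAt u (fderiv ℝ u x) x :=
          ((hu1.contDiffAt (hΩo.mem_nhds hxΩ)).differentiableAt (by norm_num)).hasFDerivAt
        have d3 : HasFDerivAt (fun x => u x / s) (s⁻¹ • fderiv ℝ u x) x := by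
          have := d2.mul_const s⁻¹
          simpa [div_eq_mul_inv] using this
        have d4 := (hasDerivAt_eta (u x / s)).comp_hasFDerivAt x d3
        have d5 := d1.mul d4
        rw [show fderiv ℝ (fun x => φ x * eta (u x / s)) x = _ from d5.fderiv, indicator_of_mem hxΩ]
        simp only [smul_apply, add_apply, InnerProductSpace.toDual_apply_apply, smul_eq_mul, p, N,
          d.gv_eq h hxO, ← h.u_grad hxΩ, Function.comp_apply]
        rw [← grad_inner u]
        ring
      · have : (fun x => φ x * eta (u x / s)) =ᶠ[𝓝 x] fun _ => 0 := by
          filter_upwards [hCc.isClosed.isOpen_compl.mem_nhds (fun hx => hxO (hCΩ hx))] with y hy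
            using hψ0 y hy
        rw [this.fderiv_eq]
        by_cases hxΩ : x ∈ Ω
        · have hxC : x ∉ C := fun hxC => hxO
            ⟨hxΩ, by rcases hCS hxC with h1 | h1 <;> exact h1.2⟩
          rw [indicator_of_mem hxΩ, hp0 x hxC, hN0 x hxC]; simp
        · rw [indicator_of_notMem hxΩ]; simp
    refine ⟨i2, ?_⟩
    rw [← i3, hfd, integral_indicator hΩo.measurableSet]
    have j2 := hAdm.integrable h.lip.continuous t.cpt s
    have j1 : Integrable (fun x => eta (u x / s) * p x) (volume.restrict Ω) := by
      rw [hfd] at i1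
      have := ((integrable_indicator_iff hΩo.measurableSet).1 i1).sub (j2.const_mul s⁻¹)
      refine this.congr (Eventually.of_forall fun x => ?_)
      simp
    rw [integral_add j1 (j2.const_mul _), integral_const_mul]
  -- limit of the first term
  have hP : Tendsto (fun s => ∫ x in Ω, eta (u x / s) * p x) (𝓝[>] 0) (𝓝 (∫ x in Ω, p x)) := by
    refine tendsto_integral_filter_of_dominated_convergence (C.indicator fun _ => 3 * (Mp : ℝ)) ?_ ?_ ?_ ?_
    · refine Eventually.of_forall fun s => Measurable.aestronglyMeasurable ?_
      exact (contDiff_eta.continuous.measurable.comp (h.lip.continuous.measurable.div_const s)).mul hpm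
    · filter_upwards [self_mem_nhdsWithin] with s hs
      have hs : 0 < s := hs
      refine Eventually.of_forall fun x => ?_
      by_cases hxC : x ∈ C
      · rw [indicator_of_mem hxC, norm_mul, Real.norm_of_nonneg (eta_nonneg _)]
        exact mul_le_mul (eta_le (div_nonneg (h.u_nonneg x) hs.le)) (hMp x) (norm_nonneg _) (by norm_num)
      · rw [indicator_of_notMem hxC, hp0 x hxC]; simp
    · refine Integrable.restrict ?_
      rw [integrable_indicator_iff t.cpt.isClosed.measurableSet]
      exact integrableOn_const t.cpt.measure_lt_top.ne
    · filter_upwards [ae_restrict_mem hΩo.measurableSet] with x hx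
      have hx : 0 < u x := hx
      refine tendsto_const_nhds.congr' ?_
      filter_upwards [self_mem_nhdsWithin, Ioo_mem_nhdsGT (by positivity : 0 < u x / 3)] with s hs h2
      have hs : 0 < s := hs
      rw [eta_one, one_mul]
      rw [le_div_iff₀ hs]; linarith [h2.2]
  have hlim := hP.add hB
  have : (∫ x in Ω, p x) + c.toReal * - ∫ x in freeBoundary u ∩ A, φ x * dNu U v x ∂μH[(k : ℝ)] ≤ -κ := by
    refine le_of_tendsto hlim ?_
    filter_upwards [self_mem_nhdsWithin, hκ] with s hs h1
    obtain ⟨k1, k2⟩ := key s hs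
    rw [k2]
    have := h1 k1
    linarith
  have e : ∫ x in Ω, p x = ∫ x in Ω, ⟪G x, gv u A v x⟫ := rfl
  rw [← e]
  linarith

end

end

section
open MeasureTheory Metric Set
open scoped RealInnerProductSpace
open Filter Topology
open scoped ENNReal NNReal

theorem lap_cont {n : ℕ} {O : Set (EE n)} (hO : IsOpen O) {w : EE n → ℝ} (hw : ContDiffOn ℝ 2 w O) :
    ContinuousOn (lap w) O := by
  have hDw : ContDiffOn ℝ 1 (fderiv ℝ w) O := hw.fderiv_of_isOpen hO (by norm_num)
  unfold lap
  refine continuousOn_finsetSum _ fun i _ => ?_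
  have h1 : ContDiffOn ℝ 1 (fun y => fderiv ℝ w y (EuclideanSpace.single i 1)) O :=
    hDw.clm_apply contDiffOn_const
  exact (h1.continuousOn_fderiv_of_isOpen hO (by norm_num)).clm_apply continuousOn_const

section
variable {k : ℕ} {u U : EE (k + 1) → ℝ} {W : Set (EE (k + 1))} {A A' : Set (EE (k + 1))}
  {v : EE (k + 1) → ℝ} {Mv : ℝ}

theorem VD.finite (h : ConeData u U W) (d : VD u U A A' v Mv) :
    IsFiniteMeasure ((μH[(k : ℝ)] : Measure (EE (k + 1))).restrict (freeBoundary u ∩ A)) := by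
  refine ⟨?_⟩
  rw [Measure.restrict_apply_univ]
  exact lt_of_le_of_lt (measure_mono (inter_subset_inter_right _ d.subA))
    (fb_compact_finite h d.cA' d.zA').lt_top

theorem VD.phi_ge (d : VD u U A A' v Mv) {ε : ℝ} (hε : 0 < ε) {x : EE (k + 1)} (hx : x ∈ SS u A) :
    v x - 2 * ε ≤ phi u A v ε x := by
  unfold phi; rw [indicator_of_mem hx]; exact le_chi hε _

theorem VD.phi_le (d : VD u U A A' v Mv) {ε : ℝ} (hε : 0 < ε) {x : EE (k + 1)} (hx : x ∈ SS u A) :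
    phi u A v ε x ≤ v x := by
  unfold phi; rw [indicator_of_mem hx]; exact chi_le hε (d.nonneg x hx)

theorem lapterm_nonneg (h : ConeData u U W) (d : VD u U A A' v Mv) {ε : ℝ} (hε : 0 < ε) (s : ℝ)
    (x : EE (k + 1)) : 0 ≤ lap v x * (phi u A v ε x * eta (u x / s)) := by
  have t := d.tf h hε
  by_cases hxΩ : 0 < u x
  · by_cases hxA : x ∈ A
    · exact mul_nonneg (d.lapv x ⟨hxΩ, hxA⟩) (mul_nonneg (t.nonneg x) (eta_nonneg _))
    · rw [t.φ0 x]
      · simp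
      · rintro ⟨h1, -⟩
        exact hxA (by rcases h1 with h1 | h1 <;> exact h1.2)
  · have : u x = 0 := le_antisymm (not_lt.1 hxΩ) (h.u_nonneg x)
    rw [this, zero_div, eta_zero zero_le_one]; simp

theorem kappa (h : ConeData u U W) (d : VD u U A A' v Mv)
    {c : ℝ≥0∞} (hc0 : c ≠ 0) (hc1 : c ≤ 1) (hc : (volume : Measure (EE k)) = c • μH[(k : ℝ)])
    (hStrict :
      (∃ x₀ ∈ {x | 0 < u x} ∩ A, 0 < v x₀ ∧ 0 < lap v x₀) ∨
      (∃ x₀ ∈ freeBoundary u ∩ A, 0 < v x₀ ∧ dNu U v x₀ < meanCurv U x₀ * v x₀)) :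
    ∃ κ > 0, ∃ ε0 > 0, ∀ ε, 0 < ε → ε < ε0 →
      (∫ x in {x | 0 < u x}, ⟪Gphi u A v ε x, gv u A v x⟫) + κ ≤
      c.toReal * ∫ x in freeBoundary u ∩ A, meanCurv U x * (v x * phi u A v ε x) ∂μH[(k : ℝ)] := by
  classical
  have hcpos : 0 < c.toReal := ENNReal.toReal_pos hc0 (lt_of_le_of_lt hc1 ENNReal.one_lt_top).ne
  have hfin := d.finite h
  have hmeas : MeasurableSet (freeBoundary u ∩ A) := (isMeas_fb u).inter d.oA.measurableSet
  have hO : IsOpen ({x | 0 < u x} ∩ A) := h.isOpenPos.inter d.oA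
  have hSW : SS u A ⊆ W := by
    rintro x (hx | hx)
    · exact h.pos_subW hx.1
    · exact h.fb_subW hx.1
  have hST : SS u A ⊆ {x | 0 < u x} ∪ freeBoundary u := by
    rintro x (hx | hx)
    · exact Or.inl hx.1
    · exact Or.inr hx.1
  let q : EE (k + 1) → ℝ := fun x => meanCurv U x * v x + ⟪gradient U x, gv u A v x⟫
  have hqc : ContinuousOn q (SS u A) := ((h.meanCurv_cont.mono hSW).mul d.c1.continuousOn).add
    ((h.gradSmooth.continuousOn.mono hSW).inner (d.gv_cont h))
  have hdNu : ∀ x ∈ freeBoundary u ∩ A, dNu U v x = meanCurv U x * v x - q x := by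
    intro x hx
    rw [h.dNu_eq d.oA d.c1 hx]
    simp only [q]
    unfold gv
    rw [real_inner_comm, InnerProductSpace.toDual_symm_apply]
    ring
  have hq0 : ∀ x ∈ freeBoundary u ∩ A, 0 ≤ q x := by
    intro x hx
    have := d.bdy x hx
    rw [hdNu x hx] at this; linarith
  -- integrability
  have hIntg : ∀ ε, 0 < ε → ∀ f : EE (k + 1) → ℝ, ContinuousOn f (SS u A) →
      Integrable (fun x => f x * phi u A v ε x)
        ((μH[(k : ℝ)] : Measure (EE (k + 1))).restrict (freeBoundary u ∩ A)) := by
    intro ε hε f hf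
    have t := d.tf h hε
    have h1 : ContinuousOn (fun x => f x * phi u A v ε x) {x | x ∈ SS u A ∧ ε ≤ v x} :=
      (hf.mul (t.contφ.mono hST)).mono fun x hx => hx.1
    have h2 : ∀ x ∉ {x | x ∈ SS u A ∧ ε ≤ v x}, f x * phi u A v ε x = 0 := fun x hx => by
      rw [t.φ0 x hx, mul_zero]
    obtain ⟨M, hM⟩ := bdd_of_cont_zero t.cpt h1 h2
    exact Integrable.of_bound (meas_of_cont_zero t.cpt h1 h2).aestronglyMeasurable M
      (Eventually.of_forall hM)
  have hsplit : ∀ ε, 0 < ε → ∫ x in freeBoundary u ∩ A, phi u A v ε x * dNu U v x ∂μH[(k : ℝ)] =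
      (∫ x in freeBoundary u ∩ A, meanCurv U x * (v x * phi u A v ε x) ∂μH[(k : ℝ)]) -
      ∫ x in freeBoundary u ∩ A, q x * phi u A v ε x ∂μH[(k : ℝ)] := by
    intro ε hε
    have i1 := hIntg ε hε (fun x => meanCurv U x * v x) ((h.meanCurv_cont.mono hSW).mul d.c1.continuousOn)
    have i2 := hIntg ε hε q hqc
    have e1 : ∫ x in freeBoundary u ∩ A, meanCurv U x * (v x * phi u A v ε x) ∂μH[(k : ℝ)] =
        ∫ x in freeBoundary u ∩ A, meanCurv U x * v x * phi u A v ε x ∂μH[(k : ℝ)] := by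
      simp only [mul_assoc]
    rw [e1, ← integral_sub i1 i2]
    refine setIntegral_congr_fun hmeas fun x hx => ?_
    rw [hdNu x hx]; ring
  have hqint0 : ∀ ε, 0 < ε → 0 ≤ ∫ x in freeBoundary u ∩ A, q x * phi u A v ε x ∂μH[(k : ℝ)] := by
    intro ε hε
    refine setIntegral_nonneg hmeas fun x hx => mul_nonneg (hq0 x hx) ((d.tf h hε).nonneg x)
  rcases hStrict with ⟨x0, hx0, hv0, hl0⟩ | ⟨x0, hx0, hv0, hl0⟩
  · -- interior case
    have hx0u : 0 < u x0 := hx0.1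
    have c1 : ∀ᶠ y in 𝓝 x0, lap v x0 / 2 < lap v y :=
      ((lap_cont hO d.c2).continuousAt (hO.mem_nhds hx0)).eventually (lt_mem_nhds (by linarith))
    have c2 : ∀ᶠ y in 𝓝 x0, v x0 / 2 < v y :=
      (d.c2.continuousOn.continuousAt (hO.mem_nhds hx0)).eventually (lt_mem_nhds (by linarith))
    have c3 : ∀ᶠ y in 𝓝 x0, u x0 / 2 < u y :=
      h.lip.continuous.continuousAt.eventually (lt_mem_nhds (by linarith))
    obtain ⟨r, hr, hball⟩ := Metric.eventually_nhds_iff_ball.1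
      (c1.and (c2.and (c3.and (hO.eventually_mem hx0))))
    set m := lap v x0 / 2 * (v x0 / 4) with hm
    have hm0 : 0 < m := by positivity
    refine ⟨m * volume.real (ball x0 r), mul_pos hm0
      (ENNReal.toReal_pos (measure_ball_pos volume x0 hr).ne' measure_ball_lt_top.ne),
      v x0 / 8, by positivity, fun ε hε hε0 => ?_⟩
    have := main_ineq h d hc0 hc hε (κ := m * volume.real (ball x0 r)) (by
      filter_upwards [self_mem_nhdsWithin, Ioo_mem_nhdsGT (by positivity : 0 < u x0 / 6)] with s hs h2 hi
      have hs : 0 < s := hs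
      have e : m * volume.real (ball x0 r) = ∫ x, (ball x0 r).indicator (fun _ => m) x := by
        rw [integral_indicator measurableSet_ball, setIntegral_const, smul_eq_mul, mul_comm]
      rw [e]
      refine integral_mono ?_ hi fun x => ?_
      · rw [integrable_indicator_iff measurableSet_ball]
        exact integrableOn_const measure_ball_lt_top.ne
      · by_cases hx : x ∈ ball x0 r
        · obtain ⟨b1, b2, b3, b4⟩ := hball x hx
          simp only [indicator_of_mem hx]
          have b5 : eta (u x / s) = 1 := by
            refine eta_one ?_
            rw [le_div_iff₀ hs]; linarith [h2.2]
          have b6 := d.phi_ge hε (Or.inl b4)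
          rw [b5, mul_one, hm]
          exact mul_le_mul b1.le (by linarith) (by positivity) (by linarith)
        · simp only [indicator_of_notMem hx]
          exact lapterm_nonneg h d hε s x)
    refine this.trans (mul_le_mul_of_nonneg_left ?_ hcpos.le)
    rw [hsplit ε hε]
    linarith [hqint0 ε hε]
  · -- boundary case
    have hx0S : x0 ∈ SS u A := Or.inr hx0
    have hqx0 : 0 < q x0 := by
      rw [hdNu x0 hx0] at hl0; linarith
    have c1 : ∀ᶠ y in 𝓝[SS u A] x0, q x0 / 2 < q y :=
      (hqc x0 hx0S).eventually (lt_mem_nhds (by linarith))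
    have c2 : ∀ᶠ y in 𝓝[SS u A] x0, v x0 / 2 < v y :=
      (d.c1.continuousOn x0 hx0S).eventually (lt_mem_nhds (by linarith))
    obtain ⟨V, hVo, hxV, hV⟩ := mem_nhdsWithin.1 (c1.and c2)
    have hpos : μH[(k : ℝ)] (freeBoundary u ∩ (A ∩ V)) ≠ 0 :=
      fb_open_pos h hx0.1 (d.oA.inter hVo) ⟨hx0.2, hxV⟩
    set μ := (μH[(k : ℝ)] : Measure (EE (k + 1))).restrict (freeBoundary u ∩ A) with hμ
    have hVpos : 0 < μ.real V := by
      refine ENNReal.toReal_pos ?_ (measure_ne_top _ _)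
      rw [hμ, Measure.restrict_apply hVo.measurableSet, inter_comm, inter_assoc]
      exact hpos
    set m := q x0 / 2 * (v x0 / 4) with hm
    have hm0 : 0 < m := by positivity
    refine ⟨c.toReal * (m * μ.real V), by positivity, v x0 / 8, by positivity, fun ε hε hε0 => ?_⟩
    have h1 := main_ineq h d hc0 hc hε (κ := 0)
      (Eventually.of_forall fun s _ => integral_nonneg fun x => lapterm_nonneg h d hε s x)
    rw [hsplit ε hε] at h1
    have h2 : m * μ.real V ≤ ∫ x in freeBoundary u ∩ A, q x * phi u A v ε x ∂μH[(k : ℝ)] := by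
      have e : m * μ.real V = ∫ x, V.indicator (fun _ => m) x ∂μ := by
        rw [integral_indicator hVo.measurableSet, setIntegral_const, smul_eq_mul, mul_comm]
      rw [e]
      refine integral_mono_ae ?_ (hIntg ε hε q hqc) ?_
      · rw [integrable_indicator_iff hVo.measurableSet]
        exact integrableOn_const (measure_ne_top _ _)
      · filter_upwards [ae_restrict_mem hmeas] with x hx
        by_cases hxV' : x ∈ V
        · rw [indicator_of_mem hxV']
          have hxS : x ∈ SS u A := Or.inr hx
          obtain ⟨b1, b2⟩ := hV ⟨hxV', hxS⟩
          have b6 := d.phi_ge hε hxS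
          rw [hm]
          exact mul_le_mul b1.le (by linarith) (by positivity) (by linarith)
        · rw [indicator_of_notMem hxV']
          exact mul_nonneg (hq0 x hx) ((d.tf h hε).nonneg x)
    have h3 := mul_le_mul_of_nonneg_left h2 hcpos.le
    rw [mul_sub] at h1
    linarith

/-- limits of the surface integrals -/
theorem surf_limits (h : ConeData u U W) (d : VD u U A A' v Mv) :
    Tendsto (fun ε => ∫ x in freeBoundary u ∩ A, meanCurv U x * (v x * phi u A v ε x) ∂μH[(k : ℝ)])
      (𝓝[>] 0) (𝓝 (∫ x in freeBoundary u ∩ A, meanCurv U x * v x ^ 2 ∂μH[(k : ℝ)])) ∧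
    Tendsto (fun ε => ∫ x in freeBoundary u ∩ A, meanCurv U x * phi u A v ε x ^ 2 ∂μH[(k : ℝ)])
      (𝓝[>] 0) (𝓝 (∫ x in freeBoundary u ∩ A, meanCurv U x * v x ^ 2 ∂μH[(k : ℝ)])) := by
  have hfin := d.finite h
  have hmeas : MeasurableSet (freeBoundary u ∩ A) := (isMeas_fb u).inter d.oA.measurableSet
  have hcl : IsClosed (frontier {x | 0 < u x}) := isClosed_frontier
  have hcomp : IsCompact (frontier {x | 0 < u x} ∩ A') := d.cA'.inter_left hcl
  obtain ⟨MH, hMH⟩ := hcomp.exists_bound_of_continuousOn (f := meanCurv U)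
    (h.meanCurv_cont.mono fun x hx => h.fb_subW ⟨hx.1, fun h0 => d.zA' (by
      rw [← mem_singleton_iff.1 h0]; exact hx.2)⟩)
  have hH : ∀ x ∈ freeBoundary u ∩ A, |meanCurv U x| ≤ MH := fun x hx => hMH x ⟨hx.1.1, d.subA hx.2⟩
  have hS : ∀ x ∈ freeBoundary u ∩ A, x ∈ SS u A := fun x hx => Or.inr hx
  have cH : ContinuousOn (meanCurv U) (freeBoundary u ∩ A) :=
    h.meanCurv_cont.mono (inter_subset_left.trans h.fb_subW)
  have cv : ContinuousOn v (freeBoundary u ∩ A) := d.c1.continuousOn.mono hS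
  have cφ : ∀ ε, 0 < ε → ContinuousOn (phi u A v ε) (freeBoundary u ∩ A) := fun ε hε =>
    (d.tf h hε).contφ.mono fun x hx => Or.inr hx.1
  have hlimφ : ∀ x ∈ freeBoundary u ∩ A, Tendsto (fun ε => phi u A v ε x) (𝓝[>] 0) (𝓝 (v x)) := by
    intro x hx
    have h1 : Tendsto (fun ε : ℝ => v x - 2 * ε) (𝓝[>] 0) (𝓝 (v x)) := by
      have : Continuous (fun ε : ℝ => v x - 2 * ε) := by fun_prop
      have h2 := this.tendsto 0
      simp only [mul_zero, sub_zero] at h2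
      exact h2.mono_left nhdsWithin_le_nhds
    refine tendsto_of_tendsto_of_tendsto_of_le_of_le' h1 tendsto_const_nhds ?_ ?_
    · filter_upwards [self_mem_nhdsWithin] with ε hε using d.phi_ge hε (hS x hx)
    · filter_upwards [self_mem_nhdsWithin] with ε hε using d.phi_le hε (hS x hx)
  constructor
  · refine tendsto_integral_filter_of_dominated_convergence (fun _ => MH * (Mv * Mv)) ?_ ?_
      (integrable_const _) ?_
    · filter_upwards [self_mem_nhdsWithin] with ε hε
      exact (cH.mul (cv.mul (cφ ε hε))).aestronglyMeasurable hmeas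
    · filter_upwards [self_mem_nhdsWithin] with ε hε
      filter_upwards [ae_restrict_mem hmeas] with x hx
      have a1 := d.phi_le hε (hS x hx)
      have a2 := d.bdd x (hS x hx)
      have a3 := d.nonneg x (hS x hx)
      have a4 := (d.tf h hε).nonneg x
      have a5 := hH x hx
      rw [Real.norm_eq_abs, abs_mul, abs_of_nonneg (mul_nonneg a3 a4)]
      exact mul_le_mul a5 (mul_le_mul a2 (a1.trans a2) a4 (a3.trans a2)) (mul_nonneg a3 a4)
        ((abs_nonneg _).trans a5)
    · filter_upwards [ae_restrict_mem hmeas] with x hx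
      rw [sq]
      exact ((hlimφ x hx).const_mul _).const_mul _
  · refine tendsto_integral_filter_of_dominated_convergence (fun _ => MH * (Mv * Mv)) ?_ ?_
      (integrable_const _) ?_
    · filter_upwards [self_mem_nhdsWithin] with ε hε
      exact (cH.mul ((cφ ε hε).pow 2)).aestronglyMeasurable hmeas
    · filter_upwards [self_mem_nhdsWithin] with ε hε
      filter_upwards [ae_restrict_mem hmeas] with x hx
      have a1 := d.phi_le hε (hS x hx)
      have a2 := d.bdd x (hS x hx)
      have a3 := d.nonneg x (hS x hx)
      have a4 := (d.tf h hε).nonneg x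
      have a5 := hH x hx
      rw [Real.norm_eq_abs, abs_mul, sq, abs_of_nonneg (mul_nonneg a4 a4)]
      exact mul_le_mul a5 (mul_le_mul (a1.trans a2) (a1.trans a2) a4 (a3.trans a2)) (mul_nonneg a4 a4)
        ((abs_nonneg _).trans a5)
    · filter_upwards [ae_restrict_mem hmeas] with x hx
      exact ((hlimφ x hx).pow 2).const_mul _

theorem vol_limit (h : ConeData u U W) (d : VD u U A A' v Mv) {κ R : ℝ} {f : ℝ → ℝ}
    (hf : Tendsto f (𝓝[>] 0) (𝓝 R))
    (hle : ∀ᶠ ε in 𝓝[>] (0 : ℝ), (∫ x in {x | 0 < u x}, ⟪Gphi u A v ε x, gv u A v x⟫) + κ ≤ f ε) :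
    (∫ x in {x | 0 < u x} ∩ A, ‖gradient v x‖ ^ 2) + κ ≤ R := by
  classical
  have hO : IsOpen ({x | 0 < u x} ∩ A) := h.isOpenPos.inter d.oA
  have heq : ∀ ε, ∫ x in {x | 0 < u x}, ⟪Gphi u A v ε x, gv u A v x⟫ =
      ∫ x in {x | 0 < u x} ∩ A, chi' ε (v x) * ‖gradient v x‖ ^ 2 := by
    intro ε
    rw [setIntegral_eq_of_subset_of_forall_sdiff_eq_zero h.isOpenPos.measurableSet
      (inter_subset_left : {x | 0 < u x} ∩ A ⊆ _)]
    · refine setIntegral_congr_fun hO.measurableSet fun x hx => ?_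
      rw [← d.gv_eq h hx]
      unfold Gphi
      rw [indicator_of_mem (show x ∈ SS u A from Or.inl hx), inner_smul_left,
        real_inner_self_eq_norm_sq]
      simp
    · intro x hx
      have : x ∉ SS u A := by
        intro h1
        exact hx.2 ⟨hx.1, by rcases h1 with h1 | h1 <;> exact h1.2⟩
      unfold Gphi
      rw [indicator_of_notMem this, inner_zero_left]
  simp only [heq] at hle
  by_cases hi : IntegrableOn (fun x => ‖gradient v x‖ ^ 2) ({x | 0 < u x} ∩ A)
  · have hlim : Tendsto (fun ε => ∫ x in {x | 0 < u x} ∩ A, chi' ε (v x) * ‖gradient v x‖ ^ 2)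
        (𝓝[>] 0) (𝓝 (∫ x in {x | 0 < u x} ∩ A, ‖gradient v x‖ ^ 2)) := by
      refine tendsto_integral_filter_of_dominated_convergence _ ?_ ?_ hi ?_
      · refine Eventually.of_forall fun ε => ?_
        refine AEStronglyMeasurable.mul ?_ ((meas_gradient v).norm.pow_const 2).aestronglyMeasurable
        exact ((chi'_continuous ε).comp_continuousOn d.c2.continuousOn).aestronglyMeasurable
          hO.measurableSet
      · filter_upwards [self_mem_nhdsWithin] with ε hε
        refine Eventually.of_forall fun x => ?_
        have a1 := chi'_nonneg hε (v x)
        have a2 := chi'_le_one hε (v x)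
        rw [Real.norm_of_nonneg (by positivity)]
        nlinarith [sq_nonneg ‖gradient v x‖]
      · filter_upwards [ae_restrict_mem hO.measurableSet] with x hx
        rcases (d.nonneg x (Or.inl hx)).eq_or_lt with h0 | h0
        · have hg : gradient v x = 0 := by
            have h1 : IsLocalMin v x := by
              filter_upwards [hO.mem_nhds hx] with y hy
              rw [← h0]; exact d.nonneg y (Or.inl hy)
            unfold gradient
            rw [h1.fderiv_eq_zero, map_zero]
          rw [hg]; simp
        · refine tendsto_const_nhds.congr' ?_
          filter_upwards [self_mem_nhdsWithin, Ioo_mem_nhdsGT (by positivity : 0 < v x / 2)] with ε hε h2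
          rw [chi'_one hε (by linarith [h2.2]), one_mul]
    exact le_of_tendsto_of_tendsto (hlim.add_const κ) hf hle
  · rw [integral_undef hi]
    refine ge_of_tendsto hf ?_
    filter_upwards [hle, self_mem_nhdsWithin] with ε h1 hε
    refine le_trans ?_ h1
    have : 0 ≤ ∫ x in {x | 0 < u x} ∩ A, chi' ε (v x) * ‖gradient v x‖ ^ 2 :=
      integral_nonneg fun x => mul_nonneg (chi'_nonneg hε _) (sq_nonneg _)
    linarith

theorem final_aux (h : ConeData u U W) (d : VD u U A A' v Mv)
    (Γ : Subgroup (EE (k + 1) ≃ₗᵢ[ℝ] EE (k + 1)))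
    (hsym : ∀ ε, IsSymmetricUnder Γ (phi u A v ε))
    (hStrict :
      (∃ x₀ ∈ {x | 0 < u x} ∩ A, 0 < v x₀ ∧ 0 < lap v x₀) ∨
      (∃ x₀ ∈ freeBoundary u ∩ A, 0 < v x₀ ∧ dNu U v x₀ < meanCurv U x₀ * v x₀)) :
    (∫ x in {x | 0 < u x} ∩ A, ‖gradient v x‖ ^ 2)
        < (∫ x in freeBoundary u ∩ A, meanCurv U x * v x ^ 2 ∂(μH[(k : ℝ)])) ∧
      ¬ IsSymMinimizer Γ u := by
  classical
  obtain ⟨c, hc0, hc1, hc⟩ := vol_eq_hausdorff k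
  have hcpos : 0 < c.toReal := ENNReal.toReal_pos hc0 (lt_of_le_of_lt hc1 ENNReal.one_lt_top).ne
  have hcle : c.toReal ≤ 1 := ENNReal.toReal_le_of_le_ofReal zero_le_one (by simpa using hc1)
  obtain ⟨κ, hκ, ε0, hε0, hk⟩ := kappa h d hc0 hc1 hc hStrict
  obtain ⟨l1, l2⟩ := surf_limits h d
  set I := ∫ x in freeBoundary u ∩ A, meanCurv U x * v x ^ 2 ∂(μH[(k : ℝ)]) with hI
  have hev : ∀ᶠ ε in 𝓝[>] (0 : ℝ), (∫ x in {x | 0 < u x}, ⟪Gphi u A v ε x, gv u A v x⟫) + κ ≤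
      c.toReal * ∫ x in freeBoundary u ∩ A, meanCurv U x * (v x * phi u A v ε x) ∂μH[(k : ℝ)] := by
    filter_upwards [Ioo_mem_nhdsGT hε0] with ε hε using hk ε hε.1 hε.2
  constructor
  · have h1 := vol_limit h d (l1.const_mul c.toReal) hev
    have h0 : 0 ≤ ∫ x in {x | 0 < u x} ∩ A, ‖gradient v x‖ ^ 2 :=
      integral_nonneg fun x => sq_nonneg _
    have hIpos : 0 < I := by
      by_contra hneg
      nlinarith [not_lt.1 hneg]
    nlinarith
  · have l3 := (l1.const_mul c.toReal).sub (l2.const_mul c.toReal)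
    rw [sub_self] at l3
    obtain ⟨ε, ⟨h1, h2⟩, hε⟩ := ((hev.and (l3.eventually (gt_mem_nhds hκ))).and
      self_mem_nhdsWithin).exists
    have hε : 0 < ε := hε
    have t := d.tf h hε
    refine competitor h hc0 hc t Γ (hsym ε) ?_
    have e1 : ∫ x in freeBoundary u, meanCurv U x * phi u A v ε x ^ 2 ∂μH[(k : ℝ)] =
        ∫ x in freeBoundary u ∩ A, meanCurv U x * phi u A v ε x ^ 2 ∂μH[(k : ℝ)] := by
      refine setIntegral_eq_of_subset_of_forall_sdiff_eq_zero (isMeas_fb u) inter_subset_left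
        fun x hx => ?_
      rw [t.φ0 x fun hxC => hx.2 ⟨hx.1, by rcases hxC.1 with h1 | h1 <;> exact h1.2⟩]
      simp
    rw [e1]
    have e2 : ∫ x in {x | 0 < u x}, ‖Gphi u A v ε x‖ ^ 2 ≤
        ∫ x in {x | 0 < u x}, ⟪Gphi u A v ε x, gv u A v x⟫ := by
      have hST : SS u A ⊆ {x | 0 < u x} ∪ freeBoundary u := by
        rintro x (hx | hx)
        · exact Or.inl hx.1
        · exact Or.inr hx.1
      have hpc : ContinuousOn (fun x => ⟪Gphi u A v ε x, gv u A v x⟫) (SS u A) :=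
        (t.contG.mono hST).inner (d.gv_cont h)
      have i2 : Integrable (fun x => ⟪Gphi u A v ε x, gv u A v x⟫) :=
        integrable_of_cont_zero t.cpt (fun x hx => hx.1) hpc fun x hx => by
          rw [t.G0 x hx, inner_zero_left]
      refine integral_mono_of_nonneg (Eventually.of_forall fun x => sq_nonneg _) i2.restrict
        (Eventually.of_forall fun x => ?_)
      by_cases hxS : x ∈ SS u A
      · simp only
        unfold Gphi
        rw [indicator_of_mem hxS, inner_smul_left, real_inner_self_eq_norm_sq, norm_smul, mul_pow]
        have a1 := chi'_nonneg hε (v x)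
        have a2 := chi'_le_one hε (v x)
        rw [Real.norm_of_nonneg a1]
        simp only [conj_trivial]
        refine mul_le_mul_of_nonneg_right ?_ (sq_nonneg _)
        nlinarith
      · simp only
        unfold Gphi
        rw [indicator_of_notMem hxS]; simp
    linarith

end

end

/-- **Strict subsolutions on an annulus give instability** (Corollary 3.7).
Let `u` be locally Lipschitz, `Γ`-symmetric, `1`-homogeneous, harmonic in `{u>0}`, with
`Σ = ∂{u>0} \ {0}` a smooth embedded hypersurface (encoded via a smooth extension `Uext`),
`|∇u| = 1` on `Σ`.  If on an annulus `A = {a < |x| < b}` there is a `Γ`-symmetric nonnegative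
strict subsolution `v` of the linearized problem, then
`∫_{{u>0}∩A} |∇v|² < ∫_{Σ∩A} H v² dH^{n-1}`, and `u` is not a `Γ`-symmetric minimizer. -/
theorem strict_subsolution_implies_unstable {n : ℕ} (hn : 3 ≤ n)
    (Γ : Subgroup (EuclideanSpace ℝ (Fin n) ≃ₗᵢ[ℝ] EuclideanSpace ℝ (Fin n)))
    (hfin : Finite Γ)
    (hfree : ∀ g ∈ Γ, (∃ x : EuclideanSpace ℝ (Fin n), x ≠ 0 ∧ g x = x) → g = 1)
    (u : EuclideanSpace ℝ (Fin n) → ℝ)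
    (hu0 : ∀ x, 0 ≤ u x) (huLip : LocallyLipschitz u)
    (huSym : IsSymmetricUnder Γ u)
    (huHom : ∀ t : ℝ, 0 < t → ∀ x, u (t • x) = t * u x)
    (huHarm : ∀ x ∈ {x | 0 < u x}, lap u x = 0)
    -- smooth extension of `u` across `Σ`
    (Uext : EuclideanSpace ℝ (Fin n) → ℝ) (W : Set (EuclideanSpace ℝ (Fin n)))
    (hW : IsOpen W) (hWsup : closure {x | 0 < u x} \ {0} ⊆ W)
    (hUsm : ContDiffOn ℝ (⊤ : ℕ∞) Uext W)
    (hUeq : ∀ x ∈ closure {x | 0 < u x}, Uext x = u x)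
    (hgrad1 : ∀ x ∈ freeBoundary u, ‖gradient Uext x‖ = 1)
    (hsurf : ∀ x ∈ freeBoundary u, ∃ ε > 0,
      freeBoundary u ∩ ball x ε = {y ∈ ball x ε | Uext y = 0})
    -- the annulus `A = {a < |x| < b}`
    (a b : ℝ) (ha : 0 < a) (hab : a < b)
    (A : Set (EuclideanSpace ℝ (Fin n))) (hA : A = {x | a < ‖x‖ ∧ ‖x‖ < b})
    -- the strict subsolution `v`
    (v : EuclideanSpace ℝ (Fin n) → ℝ)
    (hvSym : IsSymmetricUnder Γ v)
    (hv0 : ∀ x ∈ closure ({x | 0 < u x} ∩ A), 0 ≤ v x)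
    (hvCont : ContinuousOn v (closure ({x | 0 < u x} ∩ A)))
    (hvC2 : ContDiffOn ℝ 2 v ({x | 0 < u x} ∩ A))
    (hvC1 : ContDiffOn ℝ 1 v (({x | 0 < u x} ∩ A) ∪ (freeBoundary u ∩ A)))
    (hSub : ∀ x ∈ {x | 0 < u x} ∩ A, 0 ≤ lap v x)
    (hBdy : ∀ x ∈ freeBoundary u ∩ A, dNu Uext v x ≤ meanCurv Uext x * v x)
    (hZero : ∀ x, 0 < u x → x ∈ frontier A → v x = 0)
    (hStrict :
      (∃ x₀ ∈ {x | 0 < u x} ∩ A, 0 < v x₀ ∧ 0 < lap v x₀) ∨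
      (∃ x₀ ∈ freeBoundary u ∩ A, 0 < v x₀ ∧ dNu Uext v x₀ < meanCurv Uext x₀ * v x₀)) :
    (∫ x in {x | 0 < u x} ∩ A, ‖gradient v x‖ ^ 2)
        < (∫ x in freeBoundary u ∩ A, meanCurv Uext x * v x ^ 2 ∂(μH[(n : ℝ) - 1])) ∧
      ¬ IsSymMinimizer Γ u := by
  obtain ⟨k, rfl⟩ : ∃ k, n = k + 1 := ⟨n - 1, by omega⟩
  have h : ConeData u Uext W :=
    ⟨hu0, huLip, huHom, huHarm, hW, hWsup, hUsm, hUeq, hgrad1, hsurf⟩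
  obtain ⟨Mv, d⟩ := VD.build h a b ha hab A hA v hv0 hvCont hvC2 hvC1 hSub hBdy hZero
  have hAs : ∀ g ∈ Γ, ∀ x, g x ∈ A ↔ x ∈ A := by
    intro g _ x
    rw [hA]
    simp only [Set.mem_setOf_eq, g.norm_map]
  rw [show (((k + 1 : ℕ) : ℝ) - 1) = (k : ℝ) by push_cast; ring]
  exact final_aux h d Γ (fun ε => phi_sym Γ huSym hvSym hAs ε) hStrict
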